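/- arXiv:2002.00870 — 2 statements merged into one kernel-verified Lean document; each statement's English description precedes it below -/
import Mathlib

section
/- Let h : 𝕊^{m-1} × ℝ^m → ℝ be continuous on 𝕊^{m-1} × (closed unit ball), such that for each ζ ∈ 𝕊^{m-1} the function ω ↦ h(ζ,ω) coincides on the closed unit ball with an element of ℋ_k. Then 𝒟_k P_B[h] = 0 in 𝔹^m × 𝔹^m, and for every ζ₀ ∈ 𝕊^{m-1} and every ν ∈ 𝔹^m, P_B[h](x,ν) → h(ζ₀,ν) as x → ζ₀ with x ∈ 𝔹^m; consequently the function h* on the closed unit ball defined by h*(x,ν) = P_B[h](x,ν) for x ∈ 𝔹^m and h*(x,ν) = h(x,ν) for x ∈ 𝕊^{m-1} is continuous in the x-variable on the closed unit ball, for each fixed ν ∈ 𝔹^m. -/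
noncomputable section

open MeasureTheory Metric Filter Topology
open scoped RealInnerProductSpace

/-- `ℝ^m` as a Euclidean space. -/
abbrev Evec (m : ℕ) : Type := EuclideanSpace ℝ (Fin m)

/-- Partial derivative in the `i`-th coordinate direction. -/
def pdv {m : ℕ} (i : Fin m) (f : Evec m → ℝ) (x : Evec m) : ℝ :=
  fderiv ℝ f x (EuclideanSpace.single i 1)

/-- Euclidean Laplacian on `ℝ^m`. -/
def lapl {m : ℕ} (f : Evec m → ℝ) (x : Evec m) : ℝ :=
  ∑ i : Fin m, pdv i (pdv i f) x

/-- `p` is a real-valued polynomial function on `ℝ^m`, homogeneous of degree `k` and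
harmonic; i.e. `p ∈ ℋ_k`. -/
def IsHk (m k : ℕ) (p : Evec m → ℝ) : Prop :=
  (∃ P : MvPolynomial (Fin m) ℝ, ∀ x : Evec m, p x = MvPolynomial.eval (fun i => x i) P) ∧
  (∀ (c : ℝ) (x : Evec m), p (c • x) = c ^ k * p x) ∧
  (∀ x : Evec m, lapl p x = 0)

/-- The surface measure `dS` on the unit sphere `𝕊^{m-1}`, as a measure on `ℝ^m`. -/
def sphereM (m : ℕ) : Measure (Evec m) :=
  Measure.map Subtype.val ((volume : Measure (Evec m)).toSphere)

/-- `ω_m`, the surface area of the unit sphere `𝕊^{m-1}`. -/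
def omegaS (m : ℕ) : ℝ := (sphereM m Set.univ).toReal

/-- The constant `c_{m,k} = 2(m+2k-2)/((m-2)ω_m)`. -/
def cmk (m k : ℕ) : ℝ := 2 * ((m : ℝ) + 2 * k - 2) / (((m : ℝ) - 2) * omegaS m)

/-- The reflection `R_a(u) = u - 2⟨a,u⟩a/|a|²` (in Clifford notation `a u a/|a|²`). -/
def reflv {m : ℕ} (a u : Evec m) : Evec m :=
  u - (2 * ⟪a, u⟫ / ‖a‖ ^ 2) • a

/-- `dim ℋ_k`. -/
def hdim (m k : ℕ) : ℕ :=
  Nat.choose (m + k - 1) (m - 1) - Nat.choose (m + k - 3) (m - 1)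

/-- `Z` is the reproducing kernel `Z_k` of `ℋ_k` on the unit sphere: a symmetric,
rotation invariant kernel, bounded by `dim ℋ_k` on the unit ball, belonging to `ℋ_k`
in the first variable and reproducing elements of `ℋ_k` from their spherical values. -/
def IsZk (m k : ℕ) (Z : Evec m → Evec m → ℝ) : Prop :=
  (∀ v : Evec m, IsHk m k (fun u => Z u v)) ∧
  (∀ p : Evec m → ℝ, IsHk m k p → ∀ v : Evec m, (∫ u, Z u v * p u ∂(sphereM m)) = p v) ∧
  (∀ u v : Evec m, Z u v = Z v u) ∧
  (∀ u v : Evec m, ‖u‖ ≤ 1 → ‖v‖ ≤ 1 → |Z u v| ≤ (hdim m k : ℝ)) ∧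
  (∀ (A : Evec m ≃ₗᵢ[ℝ] Evec m) (u v : Evec m), Z (A u) (A v) = Z u v)

/-- The point `(x', y) ∈ ℝ^{d+1}` with first `d` coordinates `x'` and last coordinate `y`. -/
def upP (d : ℕ) (x' : Evec d) (y : ℝ) : Evec (d + 1) :=
  (EuclideanSpace.equiv (Fin (d + 1)) ℝ).symm
    (Fin.snoc (⇑(EuclideanSpace.equiv (Fin d) ℝ) x') y)

/-- The first `d` coordinates of a point of `ℝ^{d+1}`. -/
def downP (d : ℕ) (x : Evec (d + 1)) : Evec d :=
  (EuclideanSpace.equiv (Fin d) ℝ).symm (fun i => x (Fin.castSucc i))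

/-- The last coordinate of a point of `ℝ^{d+1}`. -/
def lastP (d : ℕ) (x : Evec (d + 1)) : ℝ := x (Fin.last d)

/-- The Poisson kernel `P_H` for bosonic Laplacians in the upper half-space `ℝ^{d+1}_+`,
`P_H(x,t,u,v) = c_{m,k} (y/|x-t|^m) Z_k(R_{x-t}(u), v)` with `m = d+1`, `x = (x',y)`,
`t = (t',0)`. -/
def PH (d k : ℕ) (Z : Evec (d + 1) → Evec (d + 1) → ℝ) (x' : Evec d) (y : ℝ)
    (t' : Evec d) (u v : Evec (d + 1)) : ℝ :=
  cmk (d + 1) k * (y / ‖upP d x' y - upP d t' 0‖ ^ (d + 1)) *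
    Z (reflv (upP d x' y - upP d t' 0) u) v

/-- The Poisson integral `P_H[f]` in the upper half-space. -/
def PHint (d k : ℕ) (Z : Evec (d + 1) → Evec (d + 1) → ℝ)
    (f : Evec d → Evec (d + 1) → ℝ) (x' : Evec d) (y : ℝ) (v : Evec (d + 1)) : ℝ :=
  ∫ t' : Evec d, (∫ u, PH d k Z x' y t' u v * f t' u ∂(sphereM (d + 1)))

/-- The Poisson kernel `P_B` for bosonic Laplacians in the unit ball. -/
def PB (m k : ℕ) (Z : Evec m → Evec m → ℝ) (x ζ ω ν : Evec m) : ℝ :=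
  (cmk m k / 2) * ((1 - ‖x‖ ^ 2) / ‖x - ζ‖ ^ m) * Z (reflv (x - ζ) ω) ν

/-- The Poisson integral `P_B[h]` in the unit ball. -/
def PBint (m k : ℕ) (Z : Evec m → Evec m → ℝ) (h : Evec m → Evec m → ℝ)
    (x ν : Evec m) : ℝ :=
  ∫ ζ, (∫ ω, PB m k Z x ζ ω ν * h ζ ω ∂(sphereM m)) ∂(sphereM m)

/-- Partial derivative in the first (`x`) variable. -/
def pd1 {m : ℕ} (i : Fin m) (f : Evec m → Evec m → ℝ) : Evec m → Evec m → ℝ :=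
  fun x u => fderiv ℝ (fun x₁ => f x₁ u) x (EuclideanSpace.single i 1)

/-- Partial derivative in the second (`u`) variable. -/
def pd2 {m : ℕ} (i : Fin m) (f : Evec m → Evec m → ℝ) : Evec m → Evec m → ℝ :=
  fun x u => fderiv ℝ (fun u₁ => f x u₁) u (EuclideanSpace.single i 1)

/-- The bosonic Laplacian `𝒟_k`. -/
def Dk (m k : ℕ) (f : Evec m → Evec m → ℝ) : Evec m → Evec m → ℝ := fun x u =>
  (∑ i : Fin m, pd1 i (pd1 i f) x u)
    - (4 / ((m : ℝ) + 2 * k - 2)) *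
        ∑ i : Fin m, ∑ j : Fin m, u i * pd1 i (pd2 j (pd1 j f)) x u
    + (4 * ‖u‖ ^ 2 / (((m : ℝ) + 2 * k - 2) * ((m : ℝ) + 2 * k - 4))) *
        ∑ i : Fin m, ∑ j : Fin m, pd2 i (pd1 i (pd2 j (pd1 j f))) x u

/-- `f ∈ C²(Ω×𝔹^m, ℋ_k)`: twice continuously differentiable on `Ω × 𝔹^m` and, for each
fixed `x ∈ Ω`, coinciding in the second variable with an element of `ℋ_k`. -/
def C2Hk (m k : ℕ) (Ω : Set (Evec m)) (f : Evec m → Evec m → ℝ) : Prop :=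
  ContDiffOn ℝ 2 (fun q : Evec m × Evec m => f q.1 q.2) (Ω ×ˢ ball (0 : Evec m) 1) ∧
  ∀ x ∈ Ω, ∃ q, IsHk m k q ∧ ∀ u ∈ closedBall (0 : Evec m) 1, f x u = q u

/-- The `L^p` norm `(∫_{ℝ^{m-1}} ∫_{𝕊^{m-1}} |f(x',u)|^p dS(u) dx')^{1/p}` (`m = d+1`),
valued in `ℝ≥0∞`. -/
def lpH (d : ℕ) (p : ℝ) (f : Evec d → Evec (d + 1) → ℝ) : ENNReal :=
  (∫⁻ x' : Evec d, ∫⁻ u, ENNReal.ofReal (|f x' u| ^ p) ∂(sphereM (d + 1))) ^ (1 / p)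

/-- `f ∈ L^p(ℝ^{m-1}×𝔹^m, ℋ_k)` (`m = d+1`). -/
def MemLpH (d k : ℕ) (p : ℝ) (f : Evec d → Evec (d + 1) → ℝ) : Prop :=
  Measurable (fun q : Evec d × Evec (d + 1) => f q.1 q.2) ∧
  (∀ x' : Evec d, ∃ q, IsHk (d + 1) k q ∧
    ∀ u ∈ closedBall (0 : Evec (d + 1)) 1, f x' u = q u) ∧
  lpH d p f < ⊤

/-- The `L^p` norm `(∫_{𝕊^{m-1}} ∫_{𝕊^{m-1}} |h(ζ,ω)|^p dS(ω) dS(ζ))^{1/p}`,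
valued in `ℝ≥0∞`. -/
def lpS (m : ℕ) (p : ℝ) (h : Evec m → Evec m → ℝ) : ENNReal :=
  (∫⁻ ζ, ∫⁻ ω, ENNReal.ofReal (|h ζ ω| ^ p) ∂(sphereM m) ∂(sphereM m)) ^ (1 / p)

/-- `h ∈ L^p(𝕊^{m-1}×𝔹^m, ℋ_k)`. -/
def MemLpS (m k : ℕ) (p : ℝ) (h : Evec m → Evec m → ℝ) : Prop :=
  Measurable (fun q : Evec m × Evec m => h q.1 q.2) ∧
  (∀ ζ : Evec m, ‖ζ‖ = 1 → ∃ q, IsHk m k q ∧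
    ∀ ω ∈ closedBall (0 : Evec m) 1, h ζ ω = q ω) ∧
  lpS m p h < ⊤

/-- Iterated partial derivative `D_x^α` in the first variable, for a multi-index `α ∈ ℕ^m`. -/
def Dx {m : ℕ} (α : Fin m → ℕ) (f : Evec m → Evec m → ℝ) : Evec m → Evec m → ℝ :=
  (List.finRange m).foldr (fun i g => (pd1 i)^[α i] g) f

/-- Iterated partial derivative `D_ν^β` in the second variable, for a multi-index `β ∈ ℕ^m`. -/
def Dv {m : ℕ} (β : Fin m → ℕ) (f : Evec m → Evec m → ℝ) : Evec m → Evec m → ℝ :=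
  (List.finRange m).foldr (fun i g => (pd2 i)^[β i] g) f

namespace BosonicPoisson

open scoped ContDiff

variable {m : ℕ}

/-! ### Traces over the standard basis -/

/-- The standard basis vectors of `ℝ^m`. -/
abbrev ev (j : Fin m) : Evec m := EuclideanSpace.single j 1

lemma inner_ev (a : Evec m) (j : Fin m) : ⟪a, ev j⟫ = a j := by
  simp [ev, EuclideanSpace.inner_single_right]

lemma sum_inner_ev_smul (a : Evec m) : ∑ j, ⟪a, ev j⟫ • ev j = a := by
  have := (EuclideanSpace.basisFun (Fin m) ℝ).sum_repr' a
  simpa [real_inner_comm, EuclideanSpace.basisFun_apply] using this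

lemma sum_inner_ev_smul_map {F : Type*} [NormedAddCommGroup F] [NormedSpace ℝ F]
    (L : Evec m →L[ℝ] F) (a : Evec m) : ∑ j, ⟪a, ev j⟫ • L (ev j) = L a := by
  conv_rhs => rw [← sum_inner_ev_smul a]
  simp [map_sum]

lemma sum_inner_ev_mul_map (L : Evec m →L[ℝ] ℝ) (a : Evec m) :
    ∑ j, ⟪a, ev j⟫ * L (ev j) = L a := by
  simpa using sum_inner_ev_smul_map L a

lemma sum_inner_ev_mul_inner_ev (a b : Evec m) : ∑ j, ⟪a, ev j⟫ * ⟪b, ev j⟫ = ⟪a, b⟫ := by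
  have := sum_inner_ev_mul_map (innerSL ℝ b) a
  simpa [real_inner_comm] using this

lemma inner_ev_self (j : Fin m) : ⟪(ev j : Evec m), ev j⟫ = 1 := by
  simp [ev]

/-! ### Directional derivatives of the building blocks -/

/-- The inverse of the squared norm. -/
def invSq (x : Evec m) : ℝ := (‖x‖ ^ 2)⁻¹

/-- The function `|x|^{-m}`. -/
def invPow (x : Evec m) : ℝ := (‖x‖ ^ m)⁻¹

lemma inner_self_mul_invSq {x : Evec m} (hx : x ≠ 0) : ⟪x, x⟫ * invSq x = 1 := by
  rw [real_inner_self_eq_norm_sq, invSq]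
  exact mul_inv_cancel₀ (pow_ne_zero _ (norm_ne_zero_iff.2 hx))

lemma reflv_eq (x u : Evec m) : reflv x u = u - (2 * ⟪x, u⟫ * invSq x) • x := by
  simp [reflv, invSq, div_eq_mul_inv]

/-- The derivative of `x ↦ R_x(u)` in direction `v`. -/
def reflDeriv (x u v : Evec m) : Evec m :=
  (-2 * invSq x) • (⟪u, v⟫ • x + ⟪x, u⟫ • v) + (4 * ⟪x, u⟫ * ⟪x, v⟫ * invSq x ^ 2) • x

lemma hasDerivAt_line (x v : Evec m) : HasDerivAt (fun t : ℝ => x + t • v) v 0 := by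
  simpa using ((hasDerivAt_id (0 : ℝ)).smul_const v).const_add x

lemma hasDerivAt_line_inner (x v u : Evec m) :
    HasDerivAt (fun t : ℝ => ⟪x + t • v, u⟫) ⟪v, u⟫ 0 := by
  simpa using (hasDerivAt_line x v).inner ℝ (hasDerivAt_const (0 : ℝ) u)

lemma hasDerivAt_line_invSq {x : Evec m} (hx : x ≠ 0) (v : Evec m) :
    HasDerivAt (fun t : ℝ => invSq (x + t • v)) (-2 * ⟪x, v⟫ * invSq x ^ 2) 0 := by
  have h := ((hasDerivAt_line x v).norm_sq).inv (by simpa using hx)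
  refine h.congr_deriv ?_
  have : ‖x‖ ≠ 0 := norm_ne_zero_iff.2 hx
  simp only [invSq, zero_smul, add_zero]
  field_simp

lemma hasDerivAt_line_norm {x : Evec m} (hx : x ≠ 0) (v : Evec m) :
    HasDerivAt (fun t : ℝ => ‖x + t • v‖) (⟪x, v⟫ * ‖x‖⁻¹) 0 := by
  have h := ((hasDerivAt_line x v).norm_sq).sqrt (by simpa using hx)
  have h2 : (fun t : ℝ => √(‖x + t • v‖ ^ 2)) = fun t : ℝ => ‖x + t • v‖ := by
    funext t; exact Real.sqrt_sq (norm_nonneg _)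
  rw [h2] at h
  refine h.congr_deriv ?_
  have : ‖x‖ ≠ 0 := norm_ne_zero_iff.2 hx
  simp only [zero_smul, add_zero, Real.sqrt_sq (norm_nonneg _)]
  field_simp

lemma hasDerivAt_line_invPow {x : Evec m} (hx : x ≠ 0) (v : Evec m) :
    HasDerivAt (fun t : ℝ => invPow (x + t • v))
      (-(m : ℝ) * ⟪x, v⟫ * invSq x * invPow x) 0 := by
  have hn : ‖x‖ ≠ 0 := norm_ne_zero_iff.2 hx
  have h := ((hasDerivAt_line_norm hx v).pow m).inv (by simpa using fun h => absurd h hx)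
  refine h.congr_deriv ?_
  simp only [invSq, invPow, zero_smul, add_zero, Pi.pow_apply]
  rcases m with _ | n
  · simp
  · simp only [Nat.add_sub_cancel]
    field_simp
    ring

lemma hasDerivAt_line_reflv {x : Evec m} (hx : x ≠ 0) (u v : Evec m) :
    HasDerivAt (fun t : ℝ => reflv (x + t • v) u) (reflDeriv x u v) 0 := by
  have h := ((((hasDerivAt_line_inner x v u).const_mul 2).mul
    (hasDerivAt_line_invSq hx v)).smul (hasDerivAt_line x v)).const_sub u
  simp only [reflv_eq]
  refine h.congr_deriv ?_
  simp only [reflDeriv, zero_smul, add_zero, Pi.mul_apply, real_inner_comm u v]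
  module

lemma contDiffAt_invSq {x : Evec m} (hx : x ≠ 0) : ContDiffAt ℝ ∞ invSq x :=
  (contDiff_norm_sq ℝ).contDiffAt.inv (by simpa using hx)

lemma contDiffAt_invPow {x : Evec m} (hx : x ≠ 0) : ContDiffAt ℝ ∞ invPow x :=
  ((contDiffAt_norm ℝ hx).pow m).inv (by simpa using fun h => absurd h hx)

lemma contDiffAt_reflv {x : Evec m} (hx : x ≠ 0) (u : Evec m) :
    ContDiffAt ℝ ∞ (fun x => reflv x u) x := by
  simp only [reflv_eq]
  exact contDiffAt_const.sub (((contDiffAt_const.mul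
    (contDiffAt_id.inner ℝ contDiffAt_const)).mul (contDiffAt_invSq hx)).smul contDiffAt_id)

/-- The reflection `R_x` as a continuous linear map. -/
def reflL (x : Evec m) : Evec m →L[ℝ] Evec m :=
  ContinuousLinearMap.id ℝ _ - (2 * invSq x) • (innerSL ℝ x).smulRight x

lemma reflL_apply (x u : Evec m) : reflL x u = reflv x u := by
  simp [reflL, reflv_eq, smul_smul]; ring_nf

lemma fderiv_eq_of_line {F : Type*} [NormedAddCommGroup F] [NormedSpace ℝ F] {f : Evec m → F}
    {x v : Evec m} {d : F} (hf : DifferentiableAt ℝ f x)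
    (h : HasDerivAt (fun t : ℝ => f (x + t • v)) d 0) : fderiv ℝ f x v = d :=
  (hf.hasFDerivAt.hasLineDerivAt v).unique h

/-! ### Homogeneous harmonic functions -/

/-- Smooth harmonic functions satisfying Euler's relation of degree `κ`. -/
structure HarmHom (κ : ℝ) (q : Evec m → ℝ) : Prop where
  smooth : ContDiff ℝ ∞ q
  euler : ∀ y, fderiv ℝ q y y = κ * q y
  harm : ∀ y, lapl q y = 0

lemma fderiv_apply_const {q : Evec m → ℝ} (hq : ContDiff ℝ ∞ q) (y a b : Evec m) :
    fderiv ℝ (fun z => fderiv ℝ q z a) y b = fderiv ℝ (fderiv ℝ q) y b a := by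
  have h : DifferentiableAt ℝ (fderiv ℝ q) y :=
    ((hq.fderiv_right (m := ∞) (by simp)).differentiable (by simp)) y
  rw [fderiv_clm_apply h (differentiableAt_const a)]
  simp

lemma hess_symm {q : Evec m → ℝ} (hq : ContDiff ℝ ∞ q) (y a b : Evec m) :
    fderiv ℝ (fderiv ℝ q) y a b = fderiv ℝ (fderiv ℝ q) y b a :=
  (hq.contDiffAt.isSymmSndFDerivAt
    (by simpa using WithTop.coe_le_coe.2 (le_top : (2 : ℕ∞) ≤ ⊤))).eq a b

lemma lapl_eq_hess {q : Evec m → ℝ} (hq : ContDiff ℝ ∞ q) (y : Evec m) :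
    lapl q y = ∑ j, fderiv ℝ (fderiv ℝ q) y (ev j) (ev j) := by
  unfold lapl
  refine Finset.sum_congr rfl fun j _ => ?_
  exact fderiv_apply_const hq y (ev j) (ev j)

lemma contDiff_pdv {q : Evec m → ℝ} (hq : ContDiff ℝ ∞ q) (l : Fin m) :
    ContDiff ℝ ∞ (pdv l q) :=
  (hq.fderiv_right (m := ∞) (by simp)).clm_apply contDiff_const

lemma pdv_comm {q : Evec m → ℝ} (hq : ContDiff ℝ ∞ q) (i l : Fin m) :
    pdv i (pdv l q) = pdv l (pdv i q) := by
  funext y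
  change fderiv ℝ (fun z => fderiv ℝ q z (ev l)) y (ev i) =
    fderiv ℝ (fun z => fderiv ℝ q z (ev i)) y (ev l)
  rw [fderiv_apply_const hq, fderiv_apply_const hq, hess_symm hq]

namespace HarmHom

variable {κ : ℝ} {q : Evec m → ℝ}

lemma hess_trace (hq : HarmHom κ q) (y : Evec m) :
    ∑ j, fderiv ℝ (fderiv ℝ q) y (ev j) (ev j) = 0 := by
  rw [← lapl_eq_hess hq.smooth, hq.harm]

lemma hess_euler (hq : HarmHom κ q) (y v : Evec m) :
    fderiv ℝ (fderiv ℝ q) y y v = (κ - 1) * fderiv ℝ q y v := by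
  have hd : DifferentiableAt ℝ (fderiv ℝ q) y :=
    ((hq.smooth.fderiv_right (m := ∞) (by simp)).differentiable (by simp)) y
  have h1 : fderiv ℝ (fun z => fderiv ℝ q z z) y v = κ * fderiv ℝ q y v := by
    rw [show (fun z => fderiv ℝ q z z) = fun z => κ * q z from funext hq.euler,
      fderiv_const_mul (hq.smooth.differentiable (by simp) y)]
    simp
  rw [fderiv_clm_apply hd differentiableAt_fun_id] at h1
  simp at h1
  rw [hess_symm hq.smooth]
  linarith

lemma pdv (hq : HarmHom κ q) (l : Fin m) : HarmHom (κ - 1) (pdv l q) where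
  smooth := contDiff_pdv hq.smooth l
  euler y := by
    have := hq.hess_euler y (ev l)
    rw [← fderiv_apply_const hq.smooth] at this
    exact this
  harm y := by
    have h0 : lapl q = fun _ => 0 := funext hq.harm
    have h1 : lapl (_root_.pdv l q) y = _root_.pdv l (lapl q) y := by
      have hl : lapl q = ∑ i, _root_.pdv i (_root_.pdv i q) := by
        funext z; simp [lapl]
      have hd : ∀ i ∈ Finset.univ, DifferentiableAt ℝ (_root_.pdv i (_root_.pdv i q)) y :=
        fun i _ => (contDiff_pdv (contDiff_pdv hq.smooth i) i).differentiable (by simp) y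
      rw [hl, _root_.pdv, fderiv_sum hd]
      simp only [lapl, _root_.sum_apply]
      refine Finset.sum_congr rfl fun i _ => ?_
      rw [pdv_comm hq.smooth i l, pdv_comm (contDiff_pdv hq.smooth i) i l]
      rfl
    rw [h1, h0]
    simp [_root_.pdv]

end HarmHom
end BosonicPoisson

namespace BosonicPoisson

open scoped ContDiff

variable {m : ℕ} {κ : ℝ} {q : Evec m → ℝ}

/-! ### Derivatives of `g(x) q(R_x u)` -/

lemma hasDerivAt_line_comp_reflv (hq : ContDiff ℝ ∞ q) {x : Evec m} (hx : x ≠ 0) (u v : Evec m) :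
    HasDerivAt (fun t : ℝ => q (reflv (x + t • v) u))
      (fderiv ℝ q (reflv x u) (reflDeriv x u v)) 0 := by
  have h := (hq.differentiable (by simp) (reflv (x + (0 : ℝ) • v) u)).hasFDerivAt.comp_hasDerivAt
    (0 : ℝ) (hasDerivAt_line_reflv hx u v)
  refine h.congr_deriv ?_
  simp

lemma hasDerivAt_line_fderiv_reflv (hq : ContDiff ℝ ∞ q) {x : Evec m} (hx : x ≠ 0)
    (u v : Evec m) {w : ℝ → Evec m} {w' : Evec m} (hw : HasDerivAt w w' 0) :
    HasDerivAt (fun t : ℝ => fderiv ℝ q (reflv (x + t • v) u) (w t))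
      (fderiv ℝ (fderiv ℝ q) (reflv x u) (reflDeriv x u v) (w 0)
        + fderiv ℝ q (reflv x u) w') 0 := by
  have hd : Differentiable ℝ (fderiv ℝ q) :=
    (hq.fderiv_right (m := ∞) (by simp)).differentiable (by simp)
  have h := (hd (reflv (x + (0 : ℝ) • v) u)).hasFDerivAt.comp_hasDerivAt
    (0 : ℝ) (hasDerivAt_line_reflv hx u v)
  refine (h.clm_apply hw).congr_deriv ?_
  simp

lemma differentiableAt_comp_reflv (hq : ContDiff ℝ ∞ q) {x : Evec m} (hx : x ≠ 0) (u : Evec m) :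
    DifferentiableAt ℝ (fun x => q (reflv x u)) x :=
  (hq.differentiable (by simp) _).comp x ((contDiffAt_reflv hx u).differentiableAt (by simp))

lemma differentiableAt_fderiv_reflv (hq : ContDiff ℝ ∞ q) {x : Evec m} (hx : x ≠ 0) (u : Evec m) :
    DifferentiableAt ℝ (fun x => fderiv ℝ q (reflv x u)) x :=
  (((hq.fderiv_right (m := ∞) (by simp)).differentiable (by simp)) _).comp x
    ((contDiffAt_reflv hx u).differentiableAt (by simp))

lemma pd1_mul_reflv (hq : ContDiff ℝ ∞ q) {g : Evec m → ℝ} {g' : Evec m →L[ℝ] ℝ} {x : Evec m}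
    (hx : x ≠ 0) (hg : HasFDerivAt g g' x) (u : Evec m) (j : Fin m) :
    pd1 j (fun x u => g x * q (reflv x u)) x u =
      g' (ev j) * q (reflv x u) + g x * fderiv ℝ q (reflv x u) (reflDeriv x u (ev j)) := by
  refine fderiv_eq_of_line (hg.differentiableAt.mul (differentiableAt_comp_reflv hq hx u)) ?_
  have h := (hg.hasLineDerivAt (ev j)).mul (hasDerivAt_line_comp_reflv hq hx u (ev j))
  refine h.congr_deriv ?_
  simp

/-- `R_x` is self-adjoint and isometric, in the form of a trace identity. -/
lemma hess_trace_reflv (hq : HarmHom κ q) {x : Evec m} (hx : x ≠ 0) (y : Evec m) :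
    ∑ j, fderiv ℝ (fderiv ℝ q) y (reflv x (ev j)) (reflv x (ev j)) = 0 := by
  set H := fderiv ℝ (fderiv ℝ q) y
  have hn := inner_self_mul_invSq hx
  have key : ∀ j, H (reflv x (ev j)) (reflv x (ev j)) = H (ev j) (ev j)
      - 4 * invSq x * (⟪x, ev j⟫ * H x (ev j))
      + 4 * invSq x ^ 2 * H x x * (⟪x, ev j⟫ * ⟪x, ev j⟫) := by
    intro j
    simp only [reflv_eq, map_sub, map_smul, _root_.sub_apply, _root_.smul_apply, smul_eq_mul]
    rw [show H (ev j) x = H x (ev j) from hess_symm hq.smooth y (ev j) x]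
    ring
  simp only [key, Finset.sum_add_distrib, Finset.sum_sub_distrib, ← Finset.mul_sum]
  rw [sum_inner_ev_mul_map, sum_inner_ev_mul_inner_ev, hq.hess_trace]
  linear_combination (4 * invSq x * H x x) * hn

lemma hasDerivAt_line_reflDeriv_snd (x u v w : Evec m) :
    HasDerivAt (fun t : ℝ => reflDeriv x (u + t • w) v) (reflDeriv x w v) 0 := by
  have h1 := hasDerivAt_line_inner u w v
  have h2 : HasDerivAt (fun t : ℝ => ⟪x, u + t • w⟫) ⟪x, w⟫ 0 := by
    simpa [real_inner_comm] using hasDerivAt_line_inner u w x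
  have h := (((h1.smul_const x).add (h2.smul_const v)).const_smul (-2 * invSq x)).add
    ((((h2.const_mul 4).mul_const ⟪x, v⟫).mul_const (invSq x ^ 2)).smul_const x)
  exact h

lemma hasDerivAt_line_reflv_snd (x u w : Evec m) :
    HasDerivAt (fun t : ℝ => reflv x (u + t • w)) (reflv x w) 0 := by
  have := (reflL x).hasFDerivAt.comp_hasDerivAt (0 : ℝ) (hasDerivAt_line u w)
  simpa [Function.comp_def, reflL_apply] using this

lemma contDiff_reflv_snd (x : Evec m) : ContDiff ℝ ∞ (reflv x) := by
  rw [show reflv x = reflL x from funext fun u => (reflL_apply x u).symm]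
  exact (reflL x).contDiff

lemma contDiff_reflDeriv_snd (x v : Evec m) : ContDiff ℝ ∞ (fun u => reflDeriv x u v) := by
  have h1 : ContDiff ℝ ∞ (fun u : Evec m => ⟪u, v⟫) := contDiff_id.inner ℝ contDiff_const
  have h2 : ContDiff ℝ ∞ (fun u : Evec m => ⟪x, u⟫) := contDiff_const.inner ℝ contDiff_id
  unfold reflDeriv
  fun_prop

lemma pd2_pd1_mul_reflv (hq : ContDiff ℝ ∞ q) {g : Evec m → ℝ} {g' : Evec m →L[ℝ] ℝ}
    {x : Evec m} (hx : x ≠ 0) (hg : HasFDerivAt g g' x) (u : Evec m) (i j : Fin m) :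
    pd2 i (pd1 j (fun x u => g x * q (reflv x u))) x u =
      g' (ev j) * fderiv ℝ q (reflv x u) (reflv x (ev i))
      + g x * (fderiv ℝ (fderiv ℝ q) (reflv x u) (reflv x (ev i)) (reflDeriv x u (ev j))
        + fderiv ℝ q (reflv x u) (reflDeriv x (ev i) (ev j))) := by
  unfold pd2
  rw [show (fun u₁ => pd1 j (fun x u => g x * q (reflv x u)) x u₁) = fun u =>
    g' (ev j) * q (reflv x u) + g x * fderiv ℝ q (reflv x u) (reflDeriv x u (ev j)) from
    funext fun u => pd1_mul_reflv hq hx hg u j]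
  have hs := contDiff_reflv_snd x
  have hd := contDiff_reflDeriv_snd x (ev j)
  have hq' : ContDiff ℝ ∞ (fderiv ℝ q) := hq.fderiv_right (m := ∞) (by simp)
  refine fderiv_eq_of_line ?_ ?_
  · have e1 : DifferentiableAt ℝ (fun u => q (reflv x u)) u :=
      (hq.comp hs).differentiable (by simp) u
    have e2 : DifferentiableAt ℝ (fun u => fderiv ℝ q (reflv x u)) u :=
      (hq'.comp hs).differentiable (by simp) u
    have e3 : DifferentiableAt ℝ (fun u => reflDeriv x u (ev j)) u :=
      hd.differentiable (by simp) u
    exact (e1.const_mul _).add ((e2.clm_apply e3).const_mul _)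
  · have hR := hasDerivAt_line_reflv_snd x u (ev i)
    have h0 : reflv x (u + (0 : ℝ) • ev i) = reflv x u := by simp
    have h1 : HasDerivAt (fun t : ℝ => q (reflv x (u + t • ev i)))
        (fderiv ℝ q (reflv x u) (reflv x (ev i))) 0 := by
      rw [← h0]
      exact (hq.differentiable (by simp) _).hasFDerivAt.comp_hasDerivAt (0 : ℝ) hR
    have h2 : HasDerivAt (fun t : ℝ => fderiv ℝ q (reflv x (u + t • ev i)))
        (fderiv ℝ (fderiv ℝ q) (reflv x u) (reflv x (ev i))) 0 := by
      rw [← h0]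
      exact (hq'.differentiable (by simp) _).hasFDerivAt.comp_hasDerivAt (0 : ℝ) hR
    have h3 := h2.clm_apply (hasDerivAt_line_reflDeriv_snd x u (ev j) (ev i))
    refine ((h1.const_mul (g' (ev j))).add (h3.const_mul (g x))).congr_deriv ?_
    simp

/-- The operator `⟨∂_u, ∂_x⟩` applied to `g(x) q(R_x u)`. -/
lemma sum_pd2_pd1_mul_reflv (hq : HarmHom κ q) {g : Evec m → ℝ} {g' : Evec m →L[ℝ] ℝ}
    {x : Evec m} (hx : x ≠ 0) (hg : HasFDerivAt g g' x) (u : Evec m) :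
    ∑ j, pd2 j (pd1 j (fun x u => g x * q (reflv x u))) x u =
      ∑ j, g' (ev j) * fderiv ℝ q (reflv x u) (reflv x (ev j))
      - 2 * g x * (m + κ - 2) * invSq x * fderiv ℝ q (reflv x u) x := by
  have hn := inner_self_mul_invSq hx
  simp only [pd2_pd1_mul_reflv hq.smooth hx hg, Finset.sum_add_distrib, ← Finset.mul_sum]
  set y := reflv x u with hy
  set L := fderiv ℝ q y
  set H := fderiv ℝ (fderiv ℝ q) y with hH
  have hRy : ∀ v, reflDeriv x u v = (-2 * invSq x) • (⟪u, v⟫ • x + ⟪x, u⟫ • reflv x v) := by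
    intro v
    rw [reflDeriv, reflv_eq]
    module
  have h1 : ∑ j, H (reflv x (ev j)) (reflDeriv x u (ev j)) = -2 * invSq x * (κ - 1) * L x := by
    have e1 : ∑ j, ⟪u, ev j⟫ * H (reflv x (ev j)) x = H y x := by
      have := sum_inner_ev_mul_map ((H.flip x).comp (reflL x)) u
      simpa [reflL_apply] using this
    have e2 := hess_trace_reflv hq hx y
    simp only [hRy, map_add, map_smul, smul_eq_mul, mul_add, Finset.sum_add_distrib]
    simp only [← Finset.mul_sum]
    rw [e1, e2, hq.hess_euler]
    ring
  have h2 : ∑ j, L (reflDeriv x (ev j) (ev j)) = -2 * invSq x * (m - 1) * L x := by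
    have e1 : ∑ j, ⟪x, ev j⟫ * L (ev j) = L x := sum_inner_ev_mul_map L x
    have e2 := sum_inner_ev_mul_inner_ev x x
    have : ∀ j, L (reflDeriv x (ev j) (ev j)) = -2 * invSq x * L x
        - 2 * invSq x * (⟪x, ev j⟫ * L (ev j))
        + 4 * invSq x ^ 2 * L x * (⟪x, ev j⟫ * ⟪x, ev j⟫) := by
      intro j
      simp only [reflDeriv, map_add, map_smul, smul_eq_mul, inner_ev_self]
      ring
    simp only [this, Finset.sum_add_distrib, Finset.sum_sub_distrib, ← Finset.mul_sum]
    rw [e1, e2]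
    simp only [Finset.sum_const, Finset.card_univ, Fintype.card_fin, nsmul_eq_mul]
    linear_combination (4 * invSq x * L x) * hn
  rw [h1, h2]
  ring

/-- The second derivative of `x ↦ R_x(u)` in the direction of a unit vector `v`. -/
def reflDeriv₂ (x u v : Evec m) : Evec m :=
  ((-4 * invSq x) * ⟪u, v⟫) • v
    + (8 * invSq x ^ 2) • ((⟪x, v⟫ * ⟪u, v⟫) • x + (⟪x, u⟫ * ⟪x, v⟫) • v)
    + (4 * invSq x ^ 2 * ⟪x, u⟫) • x
    - (16 * ⟪x, u⟫ * invSq x ^ 3 * (⟪x, v⟫ * ⟪x, v⟫)) • x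

lemma hasDerivAt_line_reflDeriv_fst {x : Evec m} (hx : x ≠ 0) (u v w : Evec m) :
    HasDerivAt (fun t : ℝ => reflDeriv (x + t • w) u v)
      ((4 * ⟪x, w⟫ * invSq x ^ 2) • (⟪u, v⟫ • x + ⟪x, u⟫ • v)
        + (-2 * invSq x) • (⟪u, v⟫ • w + ⟪w, u⟫ • v)
        + (4 * (⟪w, u⟫ * ⟪x, v⟫ + ⟪x, u⟫ * ⟪w, v⟫) * invSq x ^ 2
          - 16 * ⟪x, u⟫ * ⟪x, v⟫ * ⟪x, w⟫ * invSq x ^ 3) • x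
        + (4 * ⟪x, u⟫ * ⟪x, v⟫ * invSq x ^ 2) • w) 0 := by
  have hl := hasDerivAt_line x w
  have hs := hasDerivAt_line_inner x w u
  have hv := hasDerivAt_line_inner x w v
  have hi := hasDerivAt_line_invSq hx w
  have h1 : HasDerivAt (fun t : ℝ => ⟪u, v⟫ • (x + t • w) + ⟪x + t • w, u⟫ • v) _ 0 :=
    (hl.const_smul ⟪u, v⟫).add (hs.smul_const v)
  have h2 : HasDerivAt (fun t : ℝ => (-2 * invSq (x + t • w)) •
      (⟪u, v⟫ • (x + t • w) + ⟪x + t • w, u⟫ • v)) _ 0 := (hi.const_mul (-2)).smul h1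
  have h3 : HasDerivAt (fun t : ℝ => 4 * ⟪x + t • w, u⟫ * ⟪x + t • w, v⟫) _ 0 :=
    (hs.const_mul 4).mul hv
  have h4 : HasDerivAt (fun t : ℝ => (4 * ⟪x + t • w, u⟫ * ⟪x + t • w, v⟫ *
      invSq (x + t • w) ^ 2) • (x + t • w)) _ 0 := (h3.mul (hi.pow 2)).smul hl
  refine (h2.add h4).congr_deriv ?_
  simp only [zero_smul, add_zero, Pi.mul_apply, Pi.pow_apply]
  norm_num
  module

lemma hasDerivAt_line_reflDeriv {x : Evec m} (hx : x ≠ 0) (u : Evec m) {v : Evec m}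
    (hv : ⟪v, v⟫ = 1) :
    HasDerivAt (fun t : ℝ => reflDeriv (x + t • v) u v) (reflDeriv₂ x u v) 0 := by
  refine (hasDerivAt_line_reflDeriv_fst hx u v v).congr_deriv ?_
  rw [reflDeriv₂, hv, real_inner_comm u v]
  module

lemma differentiableAt_reflDeriv {x : Evec m} (hx : x ≠ 0) (u v : Evec m) :
    DifferentiableAt ℝ (fun x => reflDeriv x u v) x := by
  have hi : DifferentiableAt ℝ invSq x := (contDiffAt_invSq hx).differentiableAt (by simp)
  have h1 : DifferentiableAt ℝ (fun x : Evec m => ⟪x, u⟫) x :=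
    differentiableAt_fun_id.inner ℝ (differentiableAt_const u)
  have h2 : DifferentiableAt ℝ (fun x : Evec m => ⟪x, v⟫) x :=
    differentiableAt_fun_id.inner ℝ (differentiableAt_const v)
  unfold reflDeriv
  fun_prop

/-- The Laplacian in `x` of `q(R_x u)`, and more generally of `g(x) q(R_x u)`. -/
lemma sum_pd1_pd1_mul_reflv (hq : HarmHom κ q) {g : Evec m → ℝ} {g' : Evec m → Evec m →L[ℝ] ℝ}
    {g'' : Evec m →L[ℝ] Evec m →L[ℝ] ℝ} {x : Evec m} (hx : x ≠ 0)
    (hg : ∀ x ≠ 0, HasFDerivAt g (g' x) x) (hg' : HasFDerivAt g' g'' x) (u : Evec m) :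
    ∑ j, pd1 j (pd1 j (fun x u => g x * q (reflv x u))) x u =
      (∑ j, g'' (ev j) (ev j)) * q (reflv x u)
      + 2 * ∑ j, g' x (ev j) * fderiv ℝ q (reflv x u) (reflDeriv x u (ev j))
      + 4 * g x * (invSq x ^ 2 * ⟪u, u⟫ * fderiv ℝ (fderiv ℝ q) (reflv x u) x x
        + (2 * κ + m - 4) * invSq x ^ 2 * ⟪x, u⟫ * fderiv ℝ q (reflv x u) x
        - κ * invSq x * q (reflv x u)) := by
  have hn := inner_self_mul_invSq hx
  have hloc : ∀ j, pd1 j (pd1 j (fun x u => g x * q (reflv x u))) x u =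
      g'' (ev j) (ev j) * q (reflv x u)
      + 2 * (g' x (ev j) * fderiv ℝ q (reflv x u) (reflDeriv x u (ev j)))
      + g x * (fderiv ℝ (fderiv ℝ q) (reflv x u) (reflDeriv x u (ev j)) (reflDeriv x u (ev j))
        + fderiv ℝ q (reflv x u) (reflDeriv₂ x u (ev j))) := by
    intro j
    have hev : (fun x₁ => pd1 j (fun x u => g x * q (reflv x u)) x₁ u) =ᶠ[𝓝 x] fun x =>
        g' x (ev j) * q (reflv x u) + g x * fderiv ℝ q (reflv x u) (reflDeriv x u (ev j)) := by
      filter_upwards [isOpen_ne.mem_nhds hx] with z hz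
      exact pd1_mul_reflv hq.smooth hz (hg z hz) u j
    unfold pd1 at hev ⊢
    rw [hev.fderiv_eq]
    have hY := hasDerivAt_line_reflDeriv hx u (inner_ev_self j)
    have hYd := differentiableAt_reflDeriv hx u (ev j)
    refine fderiv_eq_of_line ?_ ?_
    · exact ((hg'.differentiableAt.clm_apply (differentiableAt_const _)).mul
        (differentiableAt_comp_reflv hq.smooth hx u)).add
        ((hg x hx).differentiableAt.mul
          ((differentiableAt_fderiv_reflv hq.smooth hx u).clm_apply hYd))
    · have hg1 : HasDerivAt (fun t : ℝ => g' (x + t • ev j) (ev j)) (g'' (ev j) (ev j)) 0 := by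
        have := HasDerivAt.clm_apply (hg'.hasLineDerivAt (ev j)) (hasDerivAt_const (0 : ℝ) (ev j))
        simpa using this
      have hq0 := hasDerivAt_line_comp_reflv hq.smooth hx u (ev j)
      have hq1 := hasDerivAt_line_fderiv_reflv hq.smooth hx u (ev j) hY
      have h := (hg1.mul hq0).add (((hg x hx).hasLineDerivAt (ev j)).mul hq1)
      refine h.congr_deriv ?_
      simp only [zero_smul, add_zero]
      ring
  simp only [hloc, Finset.sum_add_distrib, ← Finset.mul_sum, ← Finset.sum_mul]
  set y := reflv x u with hy
  set L := fderiv ℝ q y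
  set H := fderiv ℝ (fderiv ℝ q) y with hH
  have hxy : u = y + (2 * ⟪x, u⟫ * invSq x) • x := by
    rw [hy, reflv_eq]; module
  have hHs : ∀ a b, H a b = H b a := hess_symm hq.smooth y
  have hHu : H u x = (κ - 1) * L x + 2 * ⟪x, u⟫ * invSq x * H x x := by
    conv_lhs => rw [hxy]
    simp only [map_add, map_smul, _root_.add_apply, _root_.smul_apply, smul_eq_mul]
    rw [hq.hess_euler]
  have hLu : L u = κ * q y + 2 * ⟪x, u⟫ * invSq x * L x := by
    conv_lhs => rw [hxy]
    simp only [map_add, map_smul, smul_eq_mul]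
    rw [hq.euler]
  have exx := sum_inner_ev_mul_inner_ev x x
  have exu := sum_inner_ev_mul_inner_ev x u
  have euu := sum_inner_ev_mul_inner_ev u u
  have hsum2 : ∑ j, H (reflDeriv x u (ev j)) (reflDeriv x u (ev j)) =
      4 * invSq x ^ 2 * (⟪u, u⟫ * H x x + 2 * ⟪x, u⟫ * ((κ - 1) * L x)) := by
    have : ∀ j, H (reflDeriv x u (ev j)) (reflDeriv x u (ev j)) =
        4 * invSq x ^ 2 * H x x * (⟪u, ev j⟫ * ⟪u, ev j⟫)
        + 8 * invSq x ^ 2 * ⟪x, u⟫ * (⟪u, ev j⟫ * H x (ev j))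
        + 4 * invSq x ^ 2 * ⟪x, u⟫ ^ 2 * H (ev j) (ev j)
        - 16 * invSq x ^ 3 * ⟪x, u⟫ * H x x * (⟪x, ev j⟫ * ⟪u, ev j⟫)
        - 16 * invSq x ^ 3 * ⟪x, u⟫ ^ 2 * (⟪x, ev j⟫ * H x (ev j))
        + 16 * invSq x ^ 4 * ⟪x, u⟫ ^ 2 * H x x * (⟪x, ev j⟫ * ⟪x, ev j⟫) := by
      intro j
      simp only [reflDeriv, map_add, map_smul, _root_.add_apply, _root_.smul_apply, smul_eq_mul]
      rw [hHs (ev j) x]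
      ring
    simp only [this, Finset.sum_add_distrib, Finset.sum_sub_distrib, ← Finset.mul_sum]
    rw [exx, exu, euu, sum_inner_ev_mul_map, sum_inner_ev_mul_map, hq.hess_trace, hHs x u, hHu]
    linear_combination (16 * invSq x ^ 3 * ⟪x, u⟫ ^ 2 * H x x) * hn
  have hsum1 : ∑ j, L (reflDeriv₂ x u (ev j)) =
      -4 * invSq x * L u + 4 * m * invSq x ^ 2 * ⟪x, u⟫ * L x := by
    have : ∀ j, L (reflDeriv₂ x u (ev j)) =
        -4 * invSq x * (⟪u, ev j⟫ * L (ev j))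
        + 8 * invSq x ^ 2 * L x * (⟪x, ev j⟫ * ⟪u, ev j⟫)
        + 8 * invSq x ^ 2 * ⟪x, u⟫ * (⟪x, ev j⟫ * L (ev j))
        + 4 * invSq x ^ 2 * ⟪x, u⟫ * L x
        - 16 * ⟪x, u⟫ * invSq x ^ 3 * L x * (⟪x, ev j⟫ * ⟪x, ev j⟫) := by
      intro j
      simp only [reflDeriv₂, map_add, map_sub, map_smul, smul_eq_mul]
      ring
    simp only [this, Finset.sum_add_distrib, Finset.sum_sub_distrib, ← Finset.mul_sum]
    rw [exx, exu, sum_inner_ev_mul_map, sum_inner_ev_mul_map]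
    simp only [Finset.sum_const, Finset.card_univ, Fintype.card_fin, nsmul_eq_mul]
    linear_combination (-16 * invSq x ^ 2 * ⟪x, u⟫ * L x) * hn
  rw [hsum2, hsum1, hLu]
  ring

end BosonicPoisson

namespace BosonicPoisson

open scoped ContDiff

variable {m : ℕ} {κ : ℝ} {q : Evec m → ℝ}

/-! ### Joint smoothness and linearity of the partial derivatives -/

lemma pd1_eq_of_differentiableAt {f : Evec m → Evec m → ℝ} {x u : Evec m}
    (hf : DifferentiableAt ℝ (fun p : Evec m × Evec m => f p.1 p.2) (x, u)) (i : Fin m) :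
    pd1 i f x u = fderiv ℝ (fun p : Evec m × Evec m => f p.1 p.2) (x, u) (ev i, 0) := by
  have h := (hf.hasFDerivAt.comp (f := fun x => (x, u)) x
    ((hasFDerivAt_id x).prodMk (hasFDerivAt_const u x))).fderiv
  unfold pd1
  simp only [Function.comp_def] at h
  rw [h]
  simp

lemma pd2_eq_of_differentiableAt {f : Evec m → Evec m → ℝ} {x u : Evec m}
    (hf : DifferentiableAt ℝ (fun p : Evec m × Evec m => f p.1 p.2) (x, u)) (i : Fin m) :
    pd2 i f x u = fderiv ℝ (fun p : Evec m × Evec m => f p.1 p.2) (x, u) (0, ev i) := by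
  have h := (hf.hasFDerivAt.comp (f := fun u => (x, u)) u
    ((hasFDerivAt_const x u).prodMk (hasFDerivAt_id u))).fderiv
  unfold pd2
  simp only [Function.comp_def] at h
  rw [h]
  simp

/-- Joint smoothness of a two-variable function over an open set of the first variable. -/
def SmoothOver (U : Set (Evec m)) (f : Evec m → Evec m → ℝ) : Prop :=
  ContDiffOn ℝ ∞ (fun p : Evec m × Evec m => f p.1 p.2) (U ×ˢ Set.univ)

namespace SmoothOver

variable {U : Set (Evec m)} {f f' : Evec m → Evec m → ℝ}

lemma differentiableAt (hU : IsOpen U) (hf : SmoothOver U f) {x : Evec m} (hx : x ∈ U)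
    (u : Evec m) : DifferentiableAt ℝ (fun p : Evec m × Evec m => f p.1 p.2) (x, u) :=
  (ContDiffOn.contDiffAt hf ((hU.prod isOpen_univ).mem_nhds ⟨hx, trivial⟩)).differentiableAt
    (by simp)

lemma differentiableAt_fst (hU : IsOpen U) (hf : SmoothOver U f) {x : Evec m} (hx : x ∈ U)
    (u : Evec m) : DifferentiableAt ℝ (fun x => f x u) x :=
  DifferentiableAt.comp (f := fun x => (x, u)) x (hf.differentiableAt hU hx u)
    (differentiableAt_id.prodMk (differentiableAt_const u))

lemma differentiableAt_snd (hU : IsOpen U) (hf : SmoothOver U f) {x : Evec m} (hx : x ∈ U)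
    (u : Evec m) : DifferentiableAt ℝ (fun u => f x u) u :=
  DifferentiableAt.comp (f := fun u => (x, u)) u (hf.differentiableAt hU hx u)
    ((differentiableAt_const x).prodMk differentiableAt_id)

lemma pd1_eq (hU : IsOpen U) (hf : SmoothOver U f) {x : Evec m} (hx : x ∈ U)
    (u : Evec m) (i : Fin m) :
    pd1 i f x u = fderiv ℝ (fun p : Evec m × Evec m => f p.1 p.2) (x, u) (ev i, 0) :=
  pd1_eq_of_differentiableAt (hf.differentiableAt hU hx u) i

lemma pd2_eq (hU : IsOpen U) (hf : SmoothOver U f) {x : Evec m} (hx : x ∈ U)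
    (u : Evec m) (i : Fin m) :
    pd2 i f x u = fderiv ℝ (fun p : Evec m × Evec m => f p.1 p.2) (x, u) (0, ev i) :=
  pd2_eq_of_differentiableAt (hf.differentiableAt hU hx u) i

lemma pd1 (hU : IsOpen U) (hf : SmoothOver U f) (i : Fin m) : SmoothOver U (pd1 i f) := by
  have h : ContDiffOn ℝ ∞ (fderiv ℝ (fun p : Evec m × Evec m => f p.1 p.2)) (U ×ˢ Set.univ) :=
    ContDiffOn.fderiv_of_isOpen hf (hU.prod isOpen_univ) (by simp)
  exact (h.clm_apply contDiffOn_const).congr fun p hp => hf.pd1_eq hU hp.1 p.2 i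

lemma pd2 (hU : IsOpen U) (hf : SmoothOver U f) (i : Fin m) : SmoothOver U (pd2 i f) := by
  have h : ContDiffOn ℝ ∞ (fderiv ℝ (fun p : Evec m × Evec m => f p.1 p.2)) (U ×ˢ Set.univ) :=
    ContDiffOn.fderiv_of_isOpen hf (hU.prod isOpen_univ) (by simp)
  exact (h.clm_apply contDiffOn_const).congr fun p hp => hf.pd2_eq hU hp.1 p.2 i

end SmoothOver

section Linearity

variable {U : Set (Evec m)} {ι : Type*} {s : Finset ι} {F : ι → Evec m → Evec m → ℝ}
  {f f' : Evec m → Evec m → ℝ}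

lemma pd1_congr (hU : IsOpen U) (h : ∀ x ∈ U, ∀ u, f x u = f' x u) (i : Fin m) :
    ∀ x ∈ U, ∀ u, pd1 i f x u = pd1 i f' x u := by
  intro x hx u
  have : (fun x => f x u) =ᶠ[𝓝 x] fun x => f' x u := by
    filter_upwards [hU.mem_nhds hx] with z hz using h z hz u
  unfold pd1
  rw [this.fderiv_eq]

lemma pd2_congr (h : ∀ x ∈ U, ∀ u, f x u = f' x u) (i : Fin m) :
    ∀ x ∈ U, ∀ u, pd2 i f x u = pd2 i f' x u := by
  intro x hx u
  unfold pd2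
  rw [show (fun u => f x u) = fun u => f' x u from funext fun u => h x hx u]

lemma pd1_sum (hU : IsOpen U) (hF : ∀ j ∈ s, SmoothOver U (F j)) (i : Fin m) :
    ∀ x ∈ U, ∀ u, pd1 i (fun x u => ∑ j ∈ s, F j x u) x u = ∑ j ∈ s, pd1 i (F j) x u := by
  intro x hx u
  unfold pd1
  rw [fderiv_fun_sum fun j hj => (hF j hj).differentiableAt_fst hU hx u]
  simp

lemma pd2_sum (hU : IsOpen U) (hF : ∀ j ∈ s, SmoothOver U (F j)) (i : Fin m) :
    ∀ x ∈ U, ∀ u, pd2 i (fun x u => ∑ j ∈ s, F j x u) x u = ∑ j ∈ s, pd2 i (F j) x u := by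
  intro x hx u
  unfold pd2
  rw [fderiv_fun_sum fun j hj => (hF j hj).differentiableAt_snd hU hx u]
  simp

lemma pd2_pd1_sum (hU : IsOpen U) (hF : ∀ j ∈ s, SmoothOver U (F j)) (i : Fin m) :
    ∀ x ∈ U, ∀ u, pd2 i (pd1 i (fun x u => ∑ j ∈ s, F j x u)) x u =
      ∑ j ∈ s, pd2 i (pd1 i (F j)) x u := by
  intro x hx u
  rw [pd2_congr (pd1_sum hU hF i) i x hx u, pd2_sum hU (fun j hj => (hF j hj).pd1 hU i) i x hx u]

end Linearity

/-- The operator `⟨∂_u, ∂_x⟩`. -/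
def divT (f : Evec m → Evec m → ℝ) (x u : Evec m) : ℝ := ∑ j, pd2 j (pd1 j f) x u

/-- The bosonic Laplacian in terms of `⟨∂_u, ∂_x⟩`. -/
lemma Dk_eq_divT {U : Set (Evec m)} (hU : IsOpen U) {f : Evec m → Evec m → ℝ}
    (hf : SmoothOver U f) (k : ℕ) {x : Evec m} (hx : x ∈ U) (u : Evec m) :
    Dk m k f x u = (∑ i, pd1 i (pd1 i f) x u)
      - (4 / ((m : ℝ) + 2 * k - 2)) * fderiv ℝ (fun x => divT f x u) x u
      + (4 * ‖u‖ ^ 2 / (((m : ℝ) + 2 * k - 2) * ((m : ℝ) + 2 * k - 4))) * divT (divT f) x u := by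
  have hs : ∀ j ∈ Finset.univ, SmoothOver U (pd2 j (pd1 j f)) :=
    fun j _ => (hf.pd1 hU j).pd2 hU j
  have h1 : ∑ i, ∑ j, u i * pd1 i (pd2 j (pd1 j f)) x u =
      fderiv ℝ (fun x => divT f x u) x u := by
    rw [← sum_inner_ev_mul_map]
    refine Finset.sum_congr rfl fun i _ => ?_
    rw [inner_ev, ← Finset.mul_sum]
    exact congrArg _ (pd1_sum hU hs i x hx u).symm
  have h2 : ∑ i, ∑ j, pd2 i (pd1 i (pd2 j (pd1 j f))) x u = divT (divT f) x u :=
    Finset.sum_congr rfl fun i _ => (pd2_pd1_sum hU hs i x hx u).symm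
  rw [Dk, h1, h2]

lemma smoothOver_mul_reflv (hq : ContDiff ℝ ∞ q) {g : Evec m → ℝ}
    (hg : ∀ x ≠ 0, ContDiffAt ℝ ∞ g x) :
    SmoothOver {x : Evec m | x ≠ 0} (fun x u => g x * q (reflv x u)) := by
  intro p hp
  have hx : p.1 ≠ 0 := hp.1
  have h1 : ContDiffAt ℝ ∞ (fun p : Evec m × Evec m => g p.1) p :=
    (hg _ hx).comp p contDiffAt_fst
  have h2 : ContDiffAt ℝ ∞ (fun p : Evec m × Evec m => invSq p.1) p :=
    (contDiffAt_invSq hx).comp p contDiffAt_fst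
  have h3 : ContDiffAt ℝ ∞ (fun p : Evec m × Evec m => ⟪p.1, p.2⟫) p :=
    contDiffAt_fst.inner ℝ contDiffAt_snd
  have h4 : ContDiffAt ℝ ∞ (fun p : Evec m × Evec m => reflv p.1 p.2) p := by
    simp only [reflv_eq]
    exact contDiffAt_snd.sub (((contDiffAt_const.mul h3).mul h2).smul contDiffAt_fst)
  exact (h1.mul (hq.contDiffAt.comp p h4)).contDiffWithinAt

end BosonicPoisson

namespace BosonicPoisson

open scoped ContDiff

variable {m : ℕ} {κ : ℝ} {q : Evec m → ℝ}

/-! ### The bosonic Laplacian of the Poisson kernel -/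

/-- The function `(α + ⟨b,x⟩|x|^{-2})|x|^{-m}`. -/
def kerσ (α : ℝ) (b x : Evec m) : ℝ := (α + ⟪b, x⟫ * invSq x) * invPow x

/-- The function `(α|x|² + ⟨b,x⟩)|x|^{-m}`. -/
def kerg (α : ℝ) (b x : Evec m) : ℝ := (α * ⟪x, x⟫ + ⟪b, x⟫) * invPow x

/-- The vector field `|x|^{-m} b - N (α + ⟨b,x⟩|x|^{-2})|x|^{-m} x`. -/
def kerG (N α : ℝ) (b x : Evec m) : Evec m := invPow x • b - (N * kerσ α b x) • x

lemma kerg_mul_invSq (α : ℝ) (b : Evec m) {x : Evec m} (hx : x ≠ 0) :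
    kerg α b x * invSq x = kerσ α b x := by
  rw [kerg, kerσ]
  linear_combination (α * invPow x) * inner_self_mul_invSq hx

lemma contDiffAt_inner_const (b x : Evec m) : ContDiffAt ℝ ∞ (fun x : Evec m => ⟪b, x⟫) x :=
  contDiffAt_const.inner ℝ contDiffAt_id

lemma contDiffAt_kerg (α : ℝ) (b : Evec m) {x : Evec m} (hx : x ≠ 0) :
    ContDiffAt ℝ ∞ (kerg α b) x :=
  ((contDiffAt_const.mul (contDiffAt_id.inner ℝ contDiffAt_id)).add
    (contDiffAt_inner_const b x)).mul (contDiffAt_invPow hx)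

lemma contDiffAt_kerσ (α : ℝ) (b : Evec m) {x : Evec m} (hx : x ≠ 0) :
    ContDiffAt ℝ ∞ (kerσ α b) x :=
  (contDiffAt_const.add ((contDiffAt_inner_const b x).mul (contDiffAt_invSq hx))).mul
    (contDiffAt_invPow hx)

lemma contDiffAt_kerG (N α : ℝ) (b : Evec m) {x : Evec m} (hx : x ≠ 0) :
    ContDiffAt ℝ ∞ (kerG N α b) x :=
  ((contDiffAt_invPow hx).smul contDiffAt_const).sub
    ((contDiffAt_const.mul (contDiffAt_kerσ α b hx)).smul contDiffAt_id)

lemma hasDerivAt_line_inner_left (b x v : Evec m) :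
    HasDerivAt (fun t : ℝ => ⟪b, x + t • v⟫) ⟪b, v⟫ 0 := by
  simpa [real_inner_comm] using hasDerivAt_line_inner x v b

lemma hasDerivAt_line_kerσ (α : ℝ) (b : Evec m) {x : Evec m} (hx : x ≠ 0) (v : Evec m) :
    HasDerivAt (fun t : ℝ => kerσ α b (x + t • v))
      ((-(m : ℝ) * ⟪x, v⟫ * α * invSq x + ⟪b, v⟫ * invSq x
        - (m + 2) * ⟪b, x⟫ * ⟪x, v⟫ * invSq x ^ 2) * invPow x) 0 := by
  have h := (((hasDerivAt_line_inner_left b x v).mul (hasDerivAt_line_invSq hx v)).const_add α).mul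
    (hasDerivAt_line_invPow hx v)
  refine h.congr_deriv ?_
  simp only [zero_smul, add_zero, Pi.mul_apply]
  ring

lemma hasDerivAt_line_kerg (α : ℝ) (b : Evec m) {x : Evec m} (hx : x ≠ 0) (v : Evec m) :
    HasDerivAt (fun t : ℝ => kerg α b (x + t • v))
      (((2 - (m : ℝ)) * α * ⟪x, v⟫ + ⟪b, v⟫ - m * ⟪x, v⟫ * ⟪b, x⟫ * invSq x) * invPow x) 0 := by
  have h1 : HasDerivAt (fun t : ℝ => ⟪x + t • v, x + t • v⟫) (2 * ⟪x, v⟫) 0 := by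
    refine ((hasDerivAt_line x v).inner ℝ (hasDerivAt_line x v)).congr_deriv ?_
    simp only [zero_smul, add_zero, real_inner_comm v x]
    ring
  have h := ((h1.const_mul α).add (hasDerivAt_line_inner_left b x v)).mul
    (hasDerivAt_line_invPow hx v)
  refine h.congr_deriv ?_
  simp only [zero_smul, add_zero, Pi.add_apply]
  linear_combination (-(m : ℝ) * α * ⟪x, v⟫ * invPow x) * inner_self_mul_invSq hx

lemma fderiv_kerg (α : ℝ) (b : Evec m) {x : Evec m} (hx : x ≠ 0) (v : Evec m) :
    fderiv ℝ (kerg α b) x v =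
      ((2 - (m : ℝ)) * α * ⟪x, v⟫ + ⟪b, v⟫ - m * ⟪x, v⟫ * ⟪b, x⟫ * invSq x) * invPow x :=
  fderiv_eq_of_line ((contDiffAt_kerg α b hx).differentiableAt (by simp))
    (hasDerivAt_line_kerg α b hx v)

lemma hess_kerg (α : ℝ) (b : Evec m) {x : Evec m} (hx : x ≠ 0) {v : Evec m} (hv : ⟪v, v⟫ = 1) :
    fderiv ℝ (fderiv ℝ (kerg α b)) x v v =
      (2 - m) * α * invPow x - 2 * m * invSq x * invPow x * (⟪x, v⟫ * ⟪b, v⟫)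
      - m * ⟪b, x⟫ * invSq x * invPow x
      + (m * (m - 2) * α * invSq x * invPow x +
        m * (m + 2) * ⟪b, x⟫ * invSq x ^ 2 * invPow x) * (⟪x, v⟫ * ⟪x, v⟫) := by
  have hd : DifferentiableAt ℝ (fderiv ℝ (kerg α b)) x :=
    ((contDiffAt_kerg α b hx).fderiv_right (m := ∞) (by simp)).differentiableAt (by simp)
  have h0 : fderiv ℝ (fun z => fderiv ℝ (kerg α b) z v) x v =
      fderiv ℝ (fderiv ℝ (kerg α b)) x v v := by
    rw [fderiv_clm_apply hd (differentiableAt_const v)]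
    simp
  rw [← h0]
  refine fderiv_eq_of_line (hd.clm_apply (differentiableAt_const v)) ?_
  have hev : (fun t : ℝ => fderiv ℝ (kerg α b) (x + t • v) v) =ᶠ[𝓝 0] fun t =>
      ((2 - (m : ℝ)) * α * ⟪x + t • v, v⟫ + ⟪b, v⟫
        - m * ⟪x + t • v, v⟫ * ⟪b, x + t • v⟫ * invSq (x + t • v)) * invPow (x + t • v) := by
    have : ∀ᶠ t : ℝ in 𝓝 0, x + t • v ≠ 0 :=
      (hasDerivAt_line x v).continuousAt.eventually_ne (by simpa using hx)
    filter_upwards [this] with t ht using fderiv_kerg α b ht v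
  refine HasDerivAt.congr_of_eventuallyEq ?_ hev
  have h1 := hasDerivAt_line_inner x v v
  have h := ((((h1.const_mul ((2 - (m : ℝ)) * α)).add_const ⟪b, v⟫).sub
    (((h1.const_mul (m : ℝ)).mul (hasDerivAt_line_inner_left b x v)).mul
      (hasDerivAt_line_invSq hx v))).mul (hasDerivAt_line_invPow hx v))
  refine h.congr_deriv ?_
  simp only [zero_smul, add_zero, Pi.mul_apply, Pi.sub_apply, hv]
  ring

lemma lapl_kerg (α : ℝ) (b : Evec m) {x : Evec m} (hx : x ≠ 0) :
    ∑ j, fderiv ℝ (fderiv ℝ (kerg α b)) x (ev j) (ev j) = 0 := by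
  simp only [hess_kerg α b hx (inner_ev_self _), Finset.sum_add_distrib, Finset.sum_sub_distrib,
    ← Finset.mul_sum, sum_inner_ev_mul_inner_ev]
  simp only [Finset.sum_const, Finset.card_univ, Fintype.card_fin, nsmul_eq_mul]
  rw [real_inner_comm b x]
  linear_combination (m * (m - 2) * α * invPow x +
        m * (m + 2) * ⟪b, x⟫ * invSq x * invPow x) * inner_self_mul_invSq hx

/-- `⟨∂_u, ∂_x⟩` applied to the Poisson kernel. -/
lemma divT_kerg (hq : HarmHom κ q) (α : ℝ) (b : Evec m) {x : Evec m} (hx : x ≠ 0) (u : Evec m) :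
    divT (fun x u => kerg α b x * q (reflv x u)) x u =
      fderiv ℝ q (reflv x u) (kerG (m + 2 * κ - 2) α b x) := by
  have hn := inner_self_mul_invSq hx
  have hσ := kerg_mul_invSq α b hx
  rw [divT, sum_pd2_pd1_mul_reflv hq hx
    ((contDiffAt_kerg α b hx).differentiableAt (by simp)).hasFDerivAt]
  set L := fderiv ℝ q (reflv x u)
  have key : ∀ j, fderiv ℝ (kerg α b) x (ev j) * L (reflv x (ev j)) =
      ((2 - (m : ℝ)) * α - m * ⟪b, x⟫ * invSq x) * invPow x * (⟪x, ev j⟫ * L (ev j))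
      + invPow x * (⟪b, ev j⟫ * L (ev j))
      - 2 * invSq x * L x * ((2 - (m : ℝ)) * α - m * ⟪b, x⟫ * invSq x) * invPow x
        * (⟪x, ev j⟫ * ⟪x, ev j⟫)
      - 2 * invSq x * L x * invPow x * (⟪b, ev j⟫ * ⟪x, ev j⟫) := by
    intro j
    rw [fderiv_kerg α b hx, reflv_eq]
    simp only [map_sub, map_smul, smul_eq_mul]
    ring
  simp only [key, Finset.sum_add_distrib, Finset.sum_sub_distrib, ← Finset.mul_sum,
    sum_inner_ev_mul_inner_ev, sum_inner_ev_mul_map]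
  simp only [kerG, map_sub, map_smul, smul_eq_mul]
  have hσ' : kerσ α b x = (α + ⟪b, x⟫ * invSq x) * invPow x := rfl
  linear_combination (-2 * ((m : ℝ) + κ - 2) * L x) * hσ
    + (-2 * L x * ((2 - (m : ℝ)) * α - m * ⟪b, x⟫ * invSq x) * invPow x) * hn
    + ((2 - (m : ℝ)) * L x) * hσ'

lemma hasDerivAt_line_kerG (N α : ℝ) (b : Evec m) {x : Evec m} (hx : x ≠ 0) (v : Evec m) :
    HasDerivAt (fun t : ℝ => kerG N α b (x + t • v))
      ((-(m : ℝ) * ⟪x, v⟫ * invSq x * invPow x) • b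
        - (N * ((-(m : ℝ) * ⟪x, v⟫ * α * invSq x + ⟪b, v⟫ * invSq x
          - (m + 2) * ⟪b, x⟫ * ⟪x, v⟫ * invSq x ^ 2) * invPow x)) • x
        - (N * kerσ α b x) • v) 0 := by
  have h := ((hasDerivAt_line_invPow hx v).smul_const b).sub
    (((hasDerivAt_line_kerσ α b hx v).const_mul N).smul (hasDerivAt_line x v))
  refine h.congr_deriv ?_
  simp only [zero_smul, add_zero]
  module

end BosonicPoisson

namespace BosonicPoisson

open scoped ContDiff

variable {m : ℕ} {κ : ℝ} {q : Evec m → ℝ}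

lemma divT_divT_kerg (hq : HarmHom κ q) (α : ℝ) (b : Evec m) {x : Evec m} (hx : x ≠ 0)
    (u : Evec m) :
    divT (divT (fun x u => kerg α b x * q (reflv x u))) x u =
      (m + 2 * κ - 4) * invSq x *
        ((m + 2 * κ - 2) * kerσ α b x * fderiv ℝ (fderiv ℝ q) (reflv x u) x x
          - 2 * invPow x * fderiv ℝ (fderiv ℝ q) (reflv x u) x b) := by
  set N : ℝ := m + 2 * κ - 2 with hN
  have hU : IsOpen {x : Evec m | x ≠ 0} := isOpen_ne
  set F : Fin m → Evec m → Evec m → ℝ := fun l x u =>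
    ⟪kerG N α b x, ev l⟫ * pdv l q (reflv x u) with hF
  have hcl : ∀ l, ∀ x ≠ 0, ContDiffAt ℝ ∞ (fun x => ⟪kerG N α b x, ev l⟫) x := fun l x hx =>
    (contDiffAt_kerG N α b hx).inner ℝ contDiffAt_const
  have hFs : ∀ l ∈ Finset.univ, SmoothOver {x : Evec m | x ≠ 0} (F l) := fun l _ =>
    smoothOver_mul_reflv (contDiff_pdv hq.smooth l) (hcl l)
  have hsum : ∀ x ∈ {x : Evec m | x ≠ 0}, ∀ u,
      divT (fun x u => kerg α b x * q (reflv x u)) x u = ∑ l, F l x u := by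
    intro x hx u
    rw [divT_kerg hq α b hx u, ← sum_inner_ev_mul_map]
    rfl
  have hn := inner_self_mul_invSq hx
  set y := reflv x u with hy
  set H := fderiv ℝ (fderiv ℝ q) y with hH
  have hHs : ∀ a b, H a b = H b a := hess_symm hq.smooth y
  have hHd : ∀ l v, fderiv ℝ (pdv l q) y v = H v (ev l) := fun l v =>
    fderiv_apply_const hq.smooth y (ev l) v
  have hGd : ∀ l v, fderiv ℝ (fun x => ⟪kerG N α b x, ev l⟫) x v =
      ⟪(-(m : ℝ) * ⟪x, v⟫ * invSq x * invPow x) • b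
        - (N * ((-(m : ℝ) * ⟪x, v⟫ * α * invSq x + ⟪b, v⟫ * invSq x
          - (m + 2) * ⟪b, x⟫ * ⟪x, v⟫ * invSq x ^ 2) * invPow x)) • x
        - (N * kerσ α b x) • v, ev l⟫ := by
    intro l v
    refine fderiv_eq_of_line ((hcl l x hx).differentiableAt (by simp)) ?_
    simpa using (hasDerivAt_line_kerG N α b hx v).inner ℝ (hasDerivAt_const (0 : ℝ) (ev l))
  have hT : divT (divT (fun x u => kerg α b x * q (reflv x u))) x u =
      ∑ l, divT (F l) x u := by
    unfold divT at hsum ⊢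
    rw [Finset.sum_comm]
    refine Finset.sum_congr rfl fun i _ => ?_
    rw [pd2_congr (pd1_congr hU hsum i) i x hx u, pd2_pd1_sum hU hFs i x hx u]
  have hTl : ∀ l, divT (F l) x u =
      ∑ j, ⟪(-(m : ℝ) * ⟪x, ev j⟫ * invSq x * invPow x) • b
        - (N * ((-(m : ℝ) * ⟪x, ev j⟫ * α * invSq x + ⟪b, ev j⟫ * invSq x
          - (m + 2) * ⟪b, x⟫ * ⟪x, ev j⟫ * invSq x ^ 2) * invPow x)) • x
        - (N * kerσ α b x) • ev j, ev l⟫ * H (reflv x (ev j)) (ev l)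
      - 2 * (m + κ - 3) * invSq x * (⟪kerG N α b x, ev l⟫ * H x (ev l)) := by
    intro l
    have := sum_pd2_pd1_mul_reflv (hq.pdv l) hx
      (((hcl l x hx).differentiableAt (by simp)).hasFDerivAt) u
    rw [divT, hF]
    refine this.trans ?_
    simp only [hGd, ← hy, hHd]
    ring
  rw [hT]
  simp only [hTl, Finset.sum_sub_distrib, ← Finset.mul_sum, sum_inner_ev_mul_map]
  rw [Finset.sum_comm]
  simp only [sum_inner_ev_mul_map]
  have key : ∀ j, H (reflv x (ev j)) ((-(m : ℝ) * ⟪x, ev j⟫ * invSq x * invPow x) • b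
        - (N * ((-(m : ℝ) * ⟪x, ev j⟫ * α * invSq x + ⟪b, ev j⟫ * invSq x
          - (m + 2) * ⟪b, x⟫ * ⟪x, ev j⟫ * invSq x ^ 2) * invPow x)) • x
        - (N * kerσ α b x) • ev j) =
      -(m : ℝ) * invSq x * invPow x * (⟪x, ev j⟫ * H b (ev j))
      + 2 * m * invSq x ^ 2 * invPow x * H x b * (⟪x, ev j⟫ * ⟪x, ev j⟫)
      + N * (m * α * invSq x + (m + 2) * ⟪b, x⟫ * invSq x ^ 2) * invPow x
        * (⟪x, ev j⟫ * H x (ev j))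
      - 2 * invSq x * H x x * N * (m * α * invSq x + (m + 2) * ⟪b, x⟫ * invSq x ^ 2) * invPow x
        * (⟪x, ev j⟫ * ⟪x, ev j⟫)
      - N * invSq x * invPow x * (⟪b, ev j⟫ * H x (ev j))
      + 2 * N * invSq x ^ 2 * invPow x * H x x * (⟪b, ev j⟫ * ⟪x, ev j⟫)
      - N * kerσ α b x * H (ev j) (ev j)
      + 2 * N * invSq x * kerσ α b x * (⟪x, ev j⟫ * H x (ev j)) := by
    intro j
    rw [reflv_eq]
    simp only [map_sub, map_smul, _root_.sub_apply, _root_.smul_apply, smul_eq_mul]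
    rw [hHs (ev j) b, hHs (ev j) x]
    ring
  simp only [key, Finset.sum_add_distrib, Finset.sum_sub_distrib, ← Finset.mul_sum,
    sum_inner_ev_mul_inner_ev, sum_inner_ev_mul_map]
  rw [hH, hq.hess_trace, ← hH]
  simp only [kerG, map_sub, map_smul, smul_eq_mul]
  have hσ' : kerσ α b x = (α + ⟪b, x⟫ * invSq x) * invPow x := rfl
  rw [hHs b x]
  linear_combination (2 * m * invSq x * invPow x * H x b - 2 * H x x * N *
      (m * α * invSq x + (m + 2) * ⟪b, x⟫ * invSq x ^ 2) * invPow x) * hn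
    + (N * m * invSq x * H x x) * hσ'
    + (2 * invSq x * invPow x * H x b) * hN

/-- The Poisson kernel is annihilated by the bosonic Laplacian. -/
theorem Dk_kerg {k : ℕ} (hk : (m : ℝ) + 2 * k - 4 > 0) (hq : HarmHom (k : ℝ) q) (α : ℝ)
    (b : Evec m) {x : Evec m} (hx : x ≠ 0) (u : Evec m) :
    Dk m k (fun x u => kerg α b x * q (reflv x u)) x u = 0 := by
  have hU : IsOpen {x : Evec m | x ≠ 0} := isOpen_ne
  have hn := inner_self_mul_invSq hx
  have hσ := kerg_mul_invSq α b hx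
  rw [Dk_eq_divT hU (smoothOver_mul_reflv hq.smooth fun x hx => contDiffAt_kerg α b hx) k hx u,
    divT_divT_kerg hq α b hx u]
  set N : ℝ := m + 2 * k - 2 with hN
  have hN0 : N ≠ 0 := by rw [hN]; linarith
  have hN2 : (m : ℝ) + 2 * k - 4 ≠ 0 := hk.ne'
  have hlap := sum_pd1_pd1_mul_reflv hq hx (g := kerg α b) (g' := fderiv ℝ (kerg α b))
    (g'' := fderiv ℝ (fderiv ℝ (kerg α b)) x)
    (fun x hx => ((contDiffAt_kerg α b hx).differentiableAt (by simp)).hasFDerivAt)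
    (((contDiffAt_kerg α b hx).fderiv_right (m := ∞) (by simp)).differentiableAt
      (by simp)).hasFDerivAt u
  rw [hlap, lapl_kerg α b hx]
  have hB : fderiv ℝ (fun x => divT (fun x u => kerg α b x * q (reflv x u)) x u) x u =
      fderiv ℝ (fderiv ℝ q) (reflv x u) (reflDeriv x u u) (kerG N α b x)
      + fderiv ℝ q (reflv x u) ((-(m : ℝ) * ⟪x, u⟫ * invSq x * invPow x) • b
        - (N * ((-(m : ℝ) * ⟪x, u⟫ * α * invSq x + ⟪b, u⟫ * invSq x
          - (m + 2) * ⟪b, x⟫ * ⟪x, u⟫ * invSq x ^ 2) * invPow x)) • x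
        - (N * kerσ α b x) • u) := by
    have hev : (fun x => divT (fun x u => kerg α b x * q (reflv x u)) x u) =ᶠ[𝓝 x]
        fun x => fderiv ℝ q (reflv x u) (kerG N α b x) := by
      filter_upwards [hU.mem_nhds hx] with z hz using divT_kerg hq α b hz u
    rw [hev.fderiv_eq]
    refine fderiv_eq_of_line ((differentiableAt_fderiv_reflv hq.smooth hx u).clm_apply
      ((contDiffAt_kerG N α b hx).differentiableAt (by simp))) ?_
    have h := hasDerivAt_line_fderiv_reflv hq.smooth hx u u (hasDerivAt_line_kerG N α b hx u)
    refine h.congr_deriv ?_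
    simp
  rw [hB]
  set y := reflv x u with hy
  set L := fderiv ℝ q y with hL
  set H := fderiv ℝ (fderiv ℝ q) y with hH
  have hxy : u = y + (2 * ⟪x, u⟫ * invSq x) • x := by
    rw [hy, reflv_eq]; module
  have hHs : ∀ a b, H a b = H b a := hess_symm hq.smooth y
  have hHu : ∀ w, H u w = (k - 1) * L w + 2 * ⟪x, u⟫ * invSq x * H x w := by
    intro w
    conv_lhs => rw [hxy]
    simp only [map_add, map_smul, _root_.add_apply, _root_.smul_apply, smul_eq_mul]
    rw [hH, hq.hess_euler]
  have hLu : L u = k * q y + 2 * ⟪x, u⟫ * invSq x * L x := by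
    conv_lhs => rw [hxy]
    simp only [map_add, map_smul, smul_eq_mul]
    rw [hL, hq.euler]
  have hcross : ∑ j, fderiv ℝ (kerg α b) x (ev j) * L (reflDeriv x u (ev j)) =
      -2 * invPow x * invSq x * (⟪b, u⟫ * L x + ⟪x, u⟫ * L b
        - 2 * ⟪x, u⟫ * ⟪b, x⟫ * invSq x * L x) := by
    have key : ∀ j, fderiv ℝ (kerg α b) x (ev j) * L (reflDeriv x u (ev j)) =
        ((2 - (m : ℝ)) * α - m * ⟪b, x⟫ * invSq x) * invPow x *
          (-2 * invSq x * (L x * (⟪x, ev j⟫ * ⟪u, ev j⟫) + ⟪x, u⟫ * (⟪x, ev j⟫ * L (ev j)))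
          + 4 * ⟪x, u⟫ * invSq x ^ 2 * L x * (⟪x, ev j⟫ * ⟪x, ev j⟫))
        + invPow x *
          (-2 * invSq x * (L x * (⟪b, ev j⟫ * ⟪u, ev j⟫) + ⟪x, u⟫ * (⟪b, ev j⟫ * L (ev j)))
          + 4 * ⟪x, u⟫ * invSq x ^ 2 * L x * (⟪b, ev j⟫ * ⟪x, ev j⟫)) := by
      intro j
      rw [fderiv_kerg α b hx, reflDeriv]
      simp only [map_add, map_smul, smul_eq_mul]
      ring
    simp only [key, Finset.sum_add_distrib, ← Finset.mul_sum,
      sum_inner_ev_mul_inner_ev, sum_inner_ev_mul_map]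
    linear_combination (((2 - (m : ℝ)) * α - m * ⟪b, x⟫ * invSq x) * invPow x *
      4 * ⟪x, u⟫ * invSq x * L x) * hn
  rw [hcross, reflDeriv]
  simp only [kerG, map_sub, map_add, map_smul, _root_.add_apply, _root_.smul_apply, smul_eq_mul]
  rw [hHu x, hHu b, hLu, ← real_inner_self_eq_norm_sq]
  have hc : 4 * ⟪u, u⟫ / (N * (m + 2 * k - 4)) * ((m + 2 * k - 4) * invSq x *
      (N * kerσ α b x * H x x - 2 * invPow x * H x b)) =
      4 / N * (⟪u, u⟫ * invSq x * (N * kerσ α b x * H x x - 2 * invPow x * H x b)) := by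
    field_simp
  have hσ' : kerσ α b x = (α + ⟪b, x⟫ * invSq x) * invPow x := rfl
  have hA : ∀ A : ℝ, A = 4 / N * (N * (A / 4)) := fun A => by field_simp
  rw [hc, hA (_ + _ + _)]
  rw [← mul_sub, ← mul_add]
  refine mul_eq_zero_of_right _ ?_
  rw [hσ'] at hσ ⊢
  simp only [hN]
  linear_combination ((m + 2 * k - 2) * (invSq x * ⟪u, u⟫ * H x x
    + (2 * k + m - 4) * invSq x * ⟪x, u⟫ * L x - k * q y)) * hσ

end BosonicPoisson

namespace BosonicPoisson

open scoped ContDiff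

variable {m : ℕ}

/-! ### The surface measure -/

instance : IsFiniteMeasure (sphereM m) := by
  unfold sphereM; infer_instance

lemma measurableEmbedding_sphere :
    MeasurableEmbedding (Subtype.val : sphere (0 : Evec m) 1 → Evec m) :=
  MeasurableEmbedding.subtype_coe isClosed_sphere.measurableSet

lemma ae_sphereM : ∀ᵐ ζ ∂sphereM m, ‖ζ‖ = 1 := by
  rw [sphereM, measurableEmbedding_sphere.ae_map_iff]
  exact .of_forall fun ζ => by simp

lemma sphereM_restrict : (sphereM m).restrict (sphere 0 1) = sphereM m :=
  Measure.restrict_eq_self_of_ae_mem (by simpa using ae_sphereM)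

lemma integrable_sphereM {F : Type*} [NormedAddCommGroup F] {f : Evec m → F}
    (hf : ContinuousOn f (sphere 0 1)) : Integrable f (sphereM m) := by
  rw [← sphereM_restrict]
  exact hf.integrableOn_compact (isCompact_sphere 0 1)

lemma integral_sphereM_congr {F : Type*} [NormedAddCommGroup F] [NormedSpace ℝ F]
    {f g : Evec m → F} (h : ∀ ζ, ‖ζ‖ = 1 → f ζ = g ζ) :
    ∫ ζ, f ζ ∂sphereM m = ∫ ζ, g ζ ∂sphereM m :=
  integral_congr_ae (ae_sphereM.mono h)

lemma map_neg_sphereM : (sphereM m).map (fun ζ => -ζ) = sphereM m := by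
  ext s hs
  rw [Measure.map_apply measurable_neg hs, sphereM, Measure.map_apply measurable_subtype_coe hs,
    Measure.map_apply measurable_subtype_coe (measurable_neg hs),
    Measure.toSphere_apply' _ (measurable_subtype_coe hs),
    Measure.toSphere_apply' _ (measurable_subtype_coe (measurable_neg hs))]
  congr 1
  rw [← Measure.measure_neg]
  congr 1
  ext z
  simp only [Set.mem_neg, Set.mem_smul, Set.mem_image, Set.mem_preimage, Subtype.exists,
    mem_sphere_zero_iff_norm, exists_and_left]
  constructor
  · rintro ⟨r, hr, ζ, ⟨w, hw, hw1, rfl⟩, h⟩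
    exact ⟨r, hr, -w, ⟨-w, hw, by simpa using hw1, rfl⟩, by simp [h]⟩
  · rintro ⟨r, hr, ζ, ⟨w, hw, hw1, rfl⟩, h⟩
    exact ⟨r, hr, -w, ⟨-w, by simpa using hw, by simpa using hw1, rfl⟩, by simp [h]⟩

lemma integral_sphereM_neg (f : Evec m → ℝ) :
    ∫ ζ, f (-ζ) ∂sphereM m = ∫ ζ, f ζ ∂sphereM m := by
  conv_rhs => rw [← map_neg_sphereM]
  exact ((Homeomorph.neg (Evec m)).measurableEmbedding.integral_map f).symm

/-! ### Polar coordinates -/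

/-- The measure `r^n dr` on `(0, ∞)`. -/
def radM (n : ℕ) : Measure ℝ :=
  (volume.restrict (Set.Ioi (0 : ℝ))).withDensity fun r => ENNReal.ofReal (r ^ n)

instance (n : ℕ) : SFinite (radM n) := by unfold radM; infer_instance

lemma map_volumeIoiPow (n : ℕ) :
    (Measure.volumeIoiPow n).map Subtype.val = radM n := by
  ext s hs
  rw [Measure.map_apply measurable_subtype_coe hs, Measure.volumeIoiPow,
    withDensity_apply _ (measurable_subtype_coe hs), radM, withDensity_apply _ hs,
    ← lintegral_indicator (measurable_subtype_coe hs), ← lintegral_indicator hs,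
    lintegral_subtype_comap measurableSet_Ioi (fun r : ℝ => s.indicator
      (fun r => ENNReal.ofReal (r ^ n)) r) |>.symm]
  rfl

lemma measurePreserving_polar (hm : 0 < m) :
    MeasurePreserving (fun p : Evec m × ℝ => p.2 • p.1)
      ((sphereM m).prod (radM (m - 1))) volume := by
  have : Nontrivial (Evec m) := by
    have : Nonempty (Fin m) := ⟨⟨0, hm⟩⟩
    infer_instance
  refine ⟨by fun_prop, ?_⟩
  have h := (volume : Measure (Evec m)).measurePreserving_homeomorphUnitSphereProd
  rw [finrank_euclideanSpace_fin] at h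
  rw [sphereM, ← map_volumeIoiPow, Measure.map_prod_map _ _ measurable_subtype_coe
    measurable_subtype_coe, ← h.map_eq, Measure.map_map (by fun_prop) (by fun_prop),
    Measure.map_map (by fun_prop) (by fun_prop)]
  have : ((fun p : Evec m × ℝ => p.2 • p.1) ∘ Prod.map Subtype.val Subtype.val) ∘
      homeomorphUnitSphereProd (Evec m) = Subtype.val := by
    funext z
    have : ‖z.1‖ ≠ 0 := norm_ne_zero_iff.2 z.2
    simp [smul_smul, this]
  rw [this, map_comap_subtype_coe (measurableSet_singleton _).compl, restrict_compl_singleton]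

lemma integral_radM (n : ℕ) (f : ℝ → ℝ) :
    ∫ r, f r ∂radM n = ∫ r in Set.Ioi (0 : ℝ), r ^ n * f r := by
  rw [radM, integral_withDensity_eq_integral_toReal_smul (by fun_prop) (by simp)]
  refine setIntegral_congr_fun measurableSet_Ioi fun r hr => ?_
  have : 0 ≤ r ^ n := pow_nonneg (le_of_lt hr) n
  simp [ENNReal.toReal_ofReal this]

lemma integrable_polar {f : Evec m → ℝ} (hm : 0 < m) (hf : Integrable f) :
    Integrable (fun p : Evec m × ℝ => f (p.2 • p.1)) ((sphereM m).prod (radM (m - 1))) :=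
  (measurePreserving_polar hm).integrable_comp_of_integrable hf

lemma integral_polar_symm (hm : 0 < m) {f : Evec m → ℝ} (hf : Integrable f) :
    ∫ z, f z = ∫ r in Set.Ioi (0 : ℝ), r ^ (m - 1) * ∫ θ, f (r • θ) ∂sphereM m := by
  have h := measurePreserving_polar hm
  rw [← h.map_eq, integral_map h.measurable.aemeasurable (by rw [h.map_eq]; exact hf.1),
    integral_prod_symm _ (integrable_polar hm hf), integral_radM]

end BosonicPoisson

namespace BosonicPoisson

open scoped ContDiff

variable {m : ℕ}

/-! ### A divergence theorem on the sphere -/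

lemma fderiv_smul_of_homogeneous {Ψ : Evec m → ℝ} (hm : 0 < m)
    (hΨ : ∀ x ≠ 0, ContDiffAt ℝ ∞ Ψ x)
    (hom : ∀ t : ℝ, 0 < t → ∀ x ≠ 0, t ^ (m - 1) * Ψ (t • x) = Ψ x)
    {r : ℝ} (hr : 0 < r) {x : Evec m} (hx : x ≠ 0) (v : Evec m) :
    r ^ m * fderiv ℝ Ψ (r • x) v = fderiv ℝ Ψ x v := by
  have hd : DifferentiableAt ℝ Ψ (r • x) :=
    (hΨ _ (smul_ne_zero hr.ne' hx)).differentiableAt (by simp)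
  symm
  refine fderiv_eq_of_line ((hΨ x hx).differentiableAt (by simp)) ?_
  have h1 : HasDerivAt (fun t : ℝ => Ψ (r • x + t • (r • v))) (fderiv ℝ Ψ (r • x) (r • v)) 0 :=
    hd.hasFDerivAt.hasLineDerivAt (r • v)
  have h2 := h1.const_mul (r ^ (m - 1))
  have hev : (fun t : ℝ => Ψ (x + t • v)) =ᶠ[𝓝 0]
      fun t => r ^ (m - 1) * Ψ (r • x + t • (r • v)) := by
    have : ∀ᶠ t : ℝ in 𝓝 0, x + t • v ≠ 0 :=
      (hasDerivAt_line x v).continuousAt.eventually_ne (by simpa using hx)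
    filter_upwards [this] with t ht
    rw [← hom r hr _ ht, smul_add, smul_comm r t v]
  refine (h2.congr_of_eventuallyEq hev).congr_deriv ?_
  obtain ⟨n, rfl⟩ := Nat.exists_eq_succ_of_ne_zero hm.ne'
  simp only [map_smul, smul_eq_mul, Nat.succ_eq_add_one, Nat.add_sub_cancel]
  ring

/-- A bump function on the line, supported in `[1, 3]`. -/
def annBump : ContDiffBump (2 : ℝ) := ⟨1 / 2, 1, by norm_num, by norm_num⟩

lemma annBump_eq_zero {r : ℝ} (h : ¬ (1 ≤ r ∧ r ≤ 3)) : annBump r = 0 := by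
  refine annBump.zero_of_le_dist ?_
  simp only [annBump, Real.dist_eq]
  rw [le_abs]
  by_contra hc
  push Not at hc
  exact h ⟨by linarith, by linarith⟩

lemma deriv_annBump_eq_zero {r : ℝ} (h : ¬ (1 ≤ r ∧ r ≤ 3)) : deriv annBump r = 0 := by
  have : (annBump : ℝ → ℝ) =ᶠ[𝓝 r] fun _ => 0 := by
    have hc : IsOpen {r : ℝ | ¬ (1 ≤ r ∧ r ≤ 3)} :=
      (isClosed_Icc (a := (1 : ℝ)) (b := 3)).isOpen_compl
    filter_upwards [hc.mem_nhds h] with z hz using annBump_eq_zero hz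
  rw [this.deriv_eq]
  simp

lemma contDiff_annBump : ContDiff ℝ ∞ (annBump : ℝ → ℝ) := annBump.contDiff

lemma integral_deriv_annBump_sq :
    ∫ r in Set.Ioi (0 : ℝ), 2 * r * deriv annBump (r ^ 2) = 0 := by
  have hd : ∀ r : ℝ, HasDerivAt (fun r : ℝ => annBump (r ^ 2)) (2 * r * deriv annBump (r ^ 2)) r := by
    intro r
    have h := (contDiff_annBump.differentiable (by simp) (r ^ 2)).hasDerivAt.comp r
      (hasDerivAt_pow 2 r)
    refine h.congr_deriv ?_
    simp; ring
  have hz : ∀ r : ℝ, 2 < r → annBump (r ^ 2) = 0 := fun r hr =>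
    annBump_eq_zero fun h => by nlinarith [h.2]
  have hcont : Continuous fun r : ℝ => 2 * r * deriv annBump (r ^ 2) := by
    have : Continuous (deriv (annBump : ℝ → ℝ)) := contDiff_annBump.continuous_deriv (by simp)
    fun_prop
  have hInt : IntegrableOn (fun r : ℝ => 2 * r * deriv annBump (r ^ 2)) (Set.Ioi 0) := by
    refine (hcont.integrable_of_hasCompactSupport ?_).integrableOn
    refine HasCompactSupport.intro (isCompact_Icc (a := (-2 : ℝ)) (b := 2)) fun r hr => ?_
    rw [deriv_annBump_eq_zero, mul_zero]
    rintro ⟨-, h2⟩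
    exact hr ⟨by nlinarith, by nlinarith⟩
  have := integral_Ioi_of_hasDerivAt_of_tendsto (a := 0) (m := 0)
    (hd 0).continuousAt.continuousWithinAt (fun r _ => hd r) hInt
    (tendsto_const_nhds.congr' <| by
      filter_upwards [eventually_gt_atTop 2] with r hr using (hz r hr).symm)
  rw [this, annBump_eq_zero (by norm_num)]
  simp

lemma integral_annBump_sq_div_pos :
    0 < ∫ r in Set.Ioi (0 : ℝ), annBump (r ^ 2) * r⁻¹ := by
  have hnn : ∀ r ∈ Set.Ioi (0 : ℝ), 0 ≤ annBump (r ^ 2) * r⁻¹ := fun r hr =>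
    mul_nonneg annBump.nonneg (inv_nonneg.2 (le_of_lt hr))
  have hInt : IntegrableOn (fun r : ℝ => annBump (r ^ 2) * r⁻¹) (Set.Ioi 0) := by
    have hI : IntegrableOn (fun r : ℝ => annBump (r ^ 2) * r⁻¹) (Set.Icc 1 2) := by
      refine ContinuousOn.integrableOn_compact isCompact_Icc ?_
      refine ContinuousOn.mul (by have := annBump.continuous; fun_prop) ?_
      exact continuousOn_id.inv₀ fun r hr => (lt_of_lt_of_le one_pos hr.1).ne'
    refine hI.of_forall_sdiff_eq_zero measurableSet_Ioi fun r hr => ?_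
    have hr0 : (0 : ℝ) < r := hr.1
    rw [annBump_eq_zero, zero_mul]
    rintro ⟨h1, h2⟩
    exact hr.2 ⟨by nlinarith, by nlinarith⟩
  rw [setIntegral_pos_iff_support_of_nonneg_ae
    ((ae_restrict_iff' measurableSet_Ioi).2 (.of_forall hnn)) hInt]
  have hsub : Set.Ioo (1.3 : ℝ) 1.5 ⊆
      Function.support (fun r : ℝ => annBump (r ^ 2) * r⁻¹) ∩ Set.Ioi 0 := by
    intro r hr
    have hr0 : 0 < r := lt_trans (by norm_num) hr.1
    refine ⟨?_, hr0⟩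
    have : 0 < annBump (r ^ 2) := by
      refine annBump.pos_of_mem_ball ?_
      simp only [annBump, mem_ball, Real.dist_eq, abs_lt]
      constructor <;> nlinarith [hr.1, hr.2]
    exact (mul_pos this (inv_pos.2 hr0)).ne'
  refine lt_of_lt_of_le ?_ (measure_mono hsub)
  rw [Real.volume_Ioo]
  norm_num

lemma integral_sphereM_fderiv_eq_zero {Ψ : Evec m → ℝ} (hm : 0 < m)
    (hΨ : ∀ x ≠ 0, ContDiffAt ℝ ∞ Ψ x)
    (hom : ∀ t : ℝ, 0 < t → ∀ x ≠ 0, t ^ (m - 1) * Ψ (t • x) = Ψ x) (v : Evec m) :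
    ∫ θ, fderiv ℝ Ψ θ v ∂sphereM m = 0 := by
  set φ : Evec m → ℝ := fun z => annBump (‖z‖ ^ 2) with hφ
  have hφs : ContDiff ℝ ∞ φ := contDiff_annBump.comp (contDiff_norm_sq ℝ)
  set K : Set (Evec m) := closedBall 0 2 ∩ {z | 1 ≤ ‖z‖} with hK
  have hKc : IsCompact K := (isCompact_closedBall 0 2).inter_right
    (isClosed_le continuous_const continuous_norm)
  have hK0 : ∀ z ∈ K, z ≠ 0 := by
    rintro z hz rfl
    have := hz.2
    norm_num at this
  have hmem : ∀ z, z ∉ K → ¬ (1 ≤ ‖z‖ ^ 2 ∧ ‖z‖ ^ 2 ≤ 3) := by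
    rintro z hz ⟨h1, h2⟩
    have := norm_nonneg z
    exact hz ⟨by simpa using (by nlinarith : ‖z‖ ≤ 2), by simpa using (by nlinarith : 1 ≤ ‖z‖)⟩
  have hφ0 : ∀ z, z ∉ K → φ z = 0 := fun z hz => annBump_eq_zero (hmem z hz)
  have hφd : ∀ z, fderiv ℝ φ z v = 2 * deriv annBump (‖z‖ ^ 2) * ⟪z, v⟫ := by
    intro z
    refine fderiv_eq_of_line (hφs.differentiable (by simp) z) ?_
    have h := (contDiff_annBump.differentiable (by simp)
      (‖z + (0 : ℝ) • v‖ ^ 2)).hasDerivAt.comp (0 : ℝ) (hasDerivAt_line z v).norm_sq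
    refine h.congr_deriv ?_
    simp only [zero_smul, add_zero]
    ring
  have hφd0 : ∀ z, z ∉ K → fderiv ℝ φ z v = 0 := fun z hz => by
    rw [hφd, deriv_annBump_eq_zero (hmem z hz)]; ring
  have hInt : ∀ f : Evec m → ℝ, ContinuousOn f K → (∀ z, z ∉ K → f z = 0) → Integrable f := by
    intro f hf h0
    have := hf.integrableOn_compact hKc (μ := volume)
    rwa [integrableOn_iff_integrable_of_support_subset] at this
    intro z hz
    by_contra hc
    exact hz (h0 z hc)
  have hΨc : ContinuousOn Ψ K := fun z hz => (hΨ z (hK0 z hz)).continuousAt.continuousWithinAt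
  have hΨd : ContinuousOn (fun z => fderiv ℝ Ψ z v) K := fun z hz => by
    have h1 : ContinuousAt (fderiv ℝ Ψ) z :=
      ((hΨ z (hK0 z hz)).fderiv_right (m := ∞) (by simp)).continuousAt
    exact (h1.clm_apply continuousAt_const).continuousWithinAt
  have hφc : ContinuousOn φ K := hφs.continuous.continuousOn
  have hφdc : ContinuousOn (fun z => fderiv ℝ φ z v) K :=
    ((hφs.continuous_fderiv (by simp)).clm_apply continuous_const).continuousOn
  have i1 : Integrable (fun z => fderiv ℝ φ z v * Ψ z) :=
    hInt _ (hφdc.mul hΨc) fun z hz => by rw [hφd0 z hz, zero_mul]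
  have i2 : Integrable (fun z => φ z * fderiv ℝ Ψ z v) :=
    hInt _ (hφc.mul hΨd) fun z hz => by rw [hφ0 z hz, zero_mul]
  have i3 : Integrable (fun z => φ z * Ψ z) :=
    hInt _ (hφc.mul hΨc) fun z hz => by rw [hφ0 z hz, zero_mul]
  have hts : tsupport φ ⊆ K := by
    refine closure_minimal (fun z hz => ?_) hKc.isClosed
    by_contra hc
    exact hz (hφ0 z hc)
  have ibp := integral_mul_fderiv_eq_neg_fderiv_mul_of_integrable i1 i2 i3
    (fun z _ => hφs.differentiable (by simp) z)
    (fun z hz => (hΨ z (hK0 z (hts hz))).differentiableAt (by simp))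
  rw [integral_polar_symm hm i1, integral_polar_symm hm i2] at ibp
  have e1 : ∫ r in Set.Ioi (0 : ℝ), r ^ (m - 1) *
      ∫ θ, fderiv ℝ φ (r • θ) v * Ψ (r • θ) ∂sphereM m = 0 := by
    have : ∀ r ∈ Set.Ioi (0 : ℝ), r ^ (m - 1) *
        ∫ θ, fderiv ℝ φ (r • θ) v * Ψ (r • θ) ∂sphereM m =
        (2 * r * deriv annBump (r ^ 2)) * ∫ θ, ⟪θ, v⟫ * Ψ θ ∂sphereM m := by
      intro r hr
      have hr0 : 0 < r := hr
      rw [← integral_const_mul, ← integral_const_mul]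
      refine integral_sphereM_congr fun θ hθ => ?_
      have hθ0 : θ ≠ 0 := by rintro rfl; simp at hθ
      rw [hφd, norm_smul, hθ, Real.norm_of_nonneg hr0.le, ← hom r hr0 θ hθ0, inner_smul_left]
      simp
      ring
    rw [setIntegral_congr_fun measurableSet_Ioi this, integral_mul_const,
      integral_deriv_annBump_sq, zero_mul]
  have e2 : ∫ r in Set.Ioi (0 : ℝ), r ^ (m - 1) *
      ∫ θ, φ (r • θ) * fderiv ℝ Ψ (r • θ) v ∂sphereM m =
      (∫ r in Set.Ioi (0 : ℝ), annBump (r ^ 2) * r⁻¹) * ∫ θ, fderiv ℝ Ψ θ v ∂sphereM m := by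
    rw [← integral_mul_const]
    refine setIntegral_congr_fun measurableSet_Ioi fun r hr => ?_
    have hr0 : 0 < r := hr
    rw [← integral_const_mul, ← integral_const_mul]
    refine integral_sphereM_congr fun θ hθ => ?_
    have hθ0 : θ ≠ 0 := by rintro rfl; simp at hθ
    rw [hφ]
    simp only
    rw [norm_smul, hθ, Real.norm_of_nonneg hr0.le, ← fderiv_smul_of_homogeneous hm hΨ hom hr0 hθ0]
    obtain ⟨n, rfl⟩ := Nat.exists_eq_succ_of_ne_zero hm.ne'
    simp only [Nat.succ_eq_add_one, Nat.add_sub_cancel]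
    field_simp
    ring
  rw [e1, e2, neg_zero] at ibp
  exact (mul_eq_zero.1 ibp).resolve_left integral_annBump_sq_div_pos.ne'

end BosonicPoisson

namespace BosonicPoisson

open scoped ContDiff

variable {m : ℕ} {κ : ℝ} {q : Evec m → ℝ}

/-! ### The spherical mean of `θ ↦ q(R_θ ν)` -/

lemma invPow_smul {t : ℝ} (ht : 0 < t) (x : Evec m) : invPow (t • x) = (t ^ m)⁻¹ * invPow x := by
  simp [invPow, norm_smul, mul_pow, abs_of_pos ht, mul_comm]

lemma reflv_smul {t : ℝ} (ht : t ≠ 0) (x u : Evec m) : reflv (t • x) u = reflv x u := by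
  rw [reflv, reflv, smul_smul, inner_smul_left, norm_smul]
  congr 2
  simp [mul_pow]
  by_cases hx : ‖x‖ = 0
  · simp [hx]
  · field_simp

lemma reflv_neg (x u : Evec m) : reflv (-x) u = reflv x u := by
  simpa using reflv_smul (t := -1) (by norm_num) x u

lemma contDiffAt_comp_reflv (hq : ContDiff ℝ ∞ q) {x : Evec m} (hx : x ≠ 0) (u : Evec m) :
    ContDiffAt ℝ ∞ (fun x => q (reflv x u)) x :=
  hq.contDiffAt.comp x (contDiffAt_reflv hx u)

lemma contDiffAt_meanField (hq : ContDiff ℝ ∞ q) {x : Evec m} (hx : x ≠ 0) (u : Evec m) :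
    ContDiffAt ℝ ∞ (fun x => invPow x * ⟪x, u⟫ * q (reflv x u)) x :=
  ((contDiffAt_invPow hx).mul (contDiffAt_id.inner ℝ contDiffAt_const)).mul
    (contDiffAt_comp_reflv hq hx u)

lemma sum_fderiv_meanField (hq : HarmHom κ q) {x : Evec m} (hx : x ≠ 0) (u : Evec m) :
    ∑ j, fderiv ℝ (fun x => invPow x * ⟪x, u⟫ * pdv j q (reflv x u)) x (ev j) =
      invPow x * (fderiv ℝ q (reflv x u) u
        - (m + 2 * κ - 2) * invSq x * ⟪x, u⟫ * fderiv ℝ q (reflv x u) x) := by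
  have hn := inner_self_mul_invSq hx
  set y := reflv x u with hy
  set L := fderiv ℝ q y with hL
  set H := fderiv ℝ (fderiv ℝ q) y with hH
  have key : ∀ j, fderiv ℝ (fun x => invPow x * ⟪x, u⟫ * pdv j q (reflv x u)) x (ev j) =
      (-(m : ℝ) * invSq x * invPow x * ⟪x, u⟫) * (⟪x, ev j⟫ * L (ev j))
      + invPow x * (⟪u, ev j⟫ * L (ev j))
      + (invPow x * ⟪x, u⟫) * (-2 * invSq x * (⟪u, ev j⟫ * H x (ev j) + ⟪x, u⟫ * H (ev j) (ev j))
        + 4 * ⟪x, u⟫ * invSq x ^ 2 * (⟪x, ev j⟫ * H x (ev j))) := by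
    intro j
    refine fderiv_eq_of_line
      ((contDiffAt_meanField (contDiff_pdv hq.smooth j) hx u).differentiableAt (by simp)) ?_
    have h := ((hasDerivAt_line_invPow hx (ev j)).mul (hasDerivAt_line_inner x (ev j) u)).mul
      (hasDerivAt_line_comp_reflv (contDiff_pdv hq.smooth j) hx u (ev j))
    refine h.congr_deriv ?_
    have e : ∀ w, fderiv ℝ (pdv j q) y w = H w (ev j) := fun w =>
      fderiv_apply_const hq.smooth y (ev j) w
    have e2 : pdv j q y = L (ev j) := rfl
    simp only [zero_smul, add_zero, Pi.mul_apply, ← hy, e, e2, reflDeriv, map_add, map_smul,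
      _root_.add_apply, _root_.smul_apply, smul_eq_mul, real_inner_comm u (ev j)]
    ring
  simp only [key, Finset.sum_add_distrib, ← Finset.mul_sum, sum_inner_ev_mul_map,
    hq.hess_trace, hH]
  rw [← hH]
  have hu : u = y + (2 * ⟪x, u⟫ * invSq x) • x := by rw [hy, reflv_eq]; abel
  have h1 : H x u = (κ - 1) * L x + 2 * ⟪x, u⟫ * invSq x * H x x := by
    conv_lhs => rw [hu]
    rw [map_add, map_smul, hH, hess_symm hq.smooth y x y, hq.hess_euler]
    rfl
  rw [h1]
  ring

lemma mean_relation (hm : 0 < m) (hq : HarmHom κ q) (ν : Evec m) :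
    ∫ θ, fderiv ℝ q (reflv θ ν) ν ∂sphereM m =
      (m + 2 * κ - 2) * ∫ θ, ⟪θ, ν⟫ * fderiv ℝ q (reflv θ ν) θ ∂sphereM m := by
  have hsph : ∀ θ ∈ sphere (0 : Evec m) 1, θ ≠ 0 := by
    rintro θ hθ rfl
    simp at hθ
  have hq' : ContDiff ℝ ∞ (fderiv ℝ q) := hq.smooth.fderiv_right (m := ∞) (by simp)
  have hL : ∀ θ ∈ sphere (0 : Evec m) 1, ContinuousAt (fun θ => fderiv ℝ q (reflv θ ν)) θ :=
    fun θ hθ => hq'.continuous.continuousAt.comp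
      (contDiffAt_reflv (hsph θ hθ) ν).continuousAt
  have i1 : Integrable (fun θ => fderiv ℝ q (reflv θ ν) ν) (sphereM m) :=
    integrable_sphereM fun θ hθ => ((hL θ hθ).clm_apply continuousAt_const).continuousWithinAt
  have i2 : Integrable (fun θ => ⟪θ, ν⟫ * fderiv ℝ q (reflv θ ν) θ) (sphereM m) :=
    integrable_sphereM fun θ hθ => (ContinuousAt.mul (by fun_prop)
      ((hL θ hθ).clm_apply continuousAt_id)).continuousWithinAt
  have h0 : ∑ j, ∫ θ, fderiv ℝ (fun x => invPow x * ⟪x, ν⟫ * pdv j q (reflv x ν)) θ (ev j)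
      ∂sphereM m = 0 := by
    refine Finset.sum_eq_zero fun j _ => integral_sphereM_fderiv_eq_zero hm
      (fun x hx => contDiffAt_meanField (contDiff_pdv hq.smooth j) hx ν) (fun t ht x hx => ?_) _
    simp only [invPow_smul ht, reflv_smul ht.ne', inner_smul_left]
    obtain ⟨n, rfl⟩ := Nat.exists_eq_succ_of_ne_zero hm.ne'
    simp only [Nat.succ_eq_add_one, Nat.add_sub_cancel, RCLike.conj_to_real]
    field_simp
    ring
  rw [← integral_finsetSum] at h0
  · rw [integral_sphereM_congr (g := fun θ => fderiv ℝ q (reflv θ ν) ν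
        - (m + 2 * κ - 2) * (⟪θ, ν⟫ * fderiv ℝ q (reflv θ ν) θ)),
      integral_sub i1 (i2.const_mul _), integral_const_mul] at h0
    · linarith
    · intro θ hθ
      rw [sum_fderiv_meanField hq (hsph θ (by simpa using hθ)) ν]
      simp [invPow, invSq, hθ]
      ring
  · intro j _
    refine integrable_sphereM fun θ hθ => ?_
    exact ((((contDiffAt_meanField (contDiff_pdv hq.smooth j) (hsph θ hθ) ν).fderiv_right
      (m := ∞) (by simp)).continuousAt).clm_apply continuousAt_const).continuousWithinAt

lemma integral_comp_reflv (hm : 3 ≤ m) (k : ℕ) (q : Evec m → ℝ) (hq : HarmHom (k : ℝ) q)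
    (ν : Evec m) :
    ∫ θ, q (reflv θ ν) ∂sphereM m = (m - 2) / (m + 2 * k - 2) * omegaS m * q ν := by
  have hm' : (3 : ℝ) ≤ m := by exact_mod_cast hm
  induction k generalizing q with
  | zero =>
    have hc : ∀ y, q y = q 0 := by
      intro y
      have hd : ∀ t : ℝ, HasDerivAt (fun t : ℝ => q (t • y)) 0 t := by
        intro t
        have h := (hq.smooth.differentiable (by simp) (t • y)).hasFDerivAt.comp_hasDerivAt t
          ((hasDerivAt_id t).smul_const y)
        refine h.congr_deriv ?_
        rw [one_smul]
        rcases eq_or_ne t 0 with rfl | ht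
        · have := hq.hess_euler 0 y
          simp at this
          simpa using this
        · have := hq.euler (t • y)
          rw [map_smul] at this
          simpa [ht] using this
      have := is_const_of_deriv_eq_zero (fun t => (hd t).differentiableAt)
        (fun t => (hd t).deriv) 1 0
      simpa using this
    simp only [hc (reflv _ _), hc ν]
    have : (m : ℝ) - 2 ≠ 0 := by linarith
    simp [omegaS, Measure.real, this]
  | succ k ih =>
    have hk0 : (0 : ℝ) ≤ k := by positivity
    have hrel := mean_relation (by omega) hq ν
    have hsph : ∀ θ ∈ sphere (0 : Evec m) 1, θ ≠ 0 := by
      rintro θ hθ rfl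
      simp at hθ
    have hq' : ContDiff ℝ ∞ (fderiv ℝ q) := hq.smooth.fderiv_right (m := ∞) (by simp)
    have hL : ∀ θ ∈ sphere (0 : Evec m) 1, ContinuousAt (fun θ => fderiv ℝ q (reflv θ ν)) θ :=
      fun θ hθ => hq'.continuous.continuousAt.comp
        (contDiffAt_reflv (hsph θ hθ) ν).continuousAt
    have i0 : Integrable (fun θ => q (reflv θ ν)) (sphereM m) :=
      integrable_sphereM fun θ hθ =>
        (contDiffAt_comp_reflv hq.smooth (hsph θ hθ) ν).continuousAt.continuousWithinAt
    have i2 : Integrable (fun θ => ⟪θ, ν⟫ * fderiv ℝ q (reflv θ ν) θ) (sphereM m) :=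
      integrable_sphereM fun θ hθ => (ContinuousAt.mul (by fun_prop)
        ((hL θ hθ).clm_apply continuousAt_id)).continuousWithinAt
    have e1 : ∫ θ, fderiv ℝ q (reflv θ ν) ν ∂sphereM m =
        (k + 1) * (∫ θ, q (reflv θ ν) ∂sphereM m)
          + 2 * ∫ θ, ⟪θ, ν⟫ * fderiv ℝ q (reflv θ ν) θ ∂sphereM m := by
      rw [← integral_const_mul, ← integral_const_mul,
        ← integral_add (i0.const_mul _) (i2.const_mul _)]
      refine integral_sphereM_congr fun θ hθ => ?_
      have hE := hq.euler (reflv θ ν)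
      set L := fderiv ℝ q (reflv θ ν)
      rw [reflv_eq, map_sub, map_smul, ← reflv_eq] at hE
      simp [invSq, hθ] at hE
      linarith
    have e2 : ∫ θ, fderiv ℝ q (reflv θ ν) ν ∂sphereM m =
        (m - 2) / (m + 2 * k - 2) * omegaS m * ((k + 1) * q ν) := by
      have : ∀ θ, fderiv ℝ q (reflv θ ν) ν = ∑ j, ⟪ν, ev j⟫ * pdv j q (reflv θ ν) := fun θ =>
        (sum_inner_ev_mul_map _ ν).symm
      simp only [this]
      rw [integral_finsetSum]
      · have hj : ∀ j, HarmHom (k : ℝ) (pdv j q) := fun j => by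
          simpa using hq.pdv j
        simp only [integral_const_mul, ih _ (hj _)]
        have hE := hq.euler ν
        rw [← sum_inner_ev_mul_map] at hE
        push_cast at hE
        rw [← hE, Finset.mul_sum]
        refine Finset.sum_congr rfl fun j _ => ?_
        simp only [pdv]
        ring
      · intro j _
        refine (integrable_sphereM fun θ hθ => ?_).const_mul _
        exact (contDiffAt_comp_reflv (contDiff_pdv hq.smooth j)
          (hsph θ hθ) ν).continuousAt.continuousWithinAt
    have h1 : (m : ℝ) + 2 * k - 2 ≠ 0 := by linarith
    have h2 : (m : ℝ) + 2 * (k + 1) - 2 ≠ 0 := by linarith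
    have h3 : (k : ℝ) + 1 ≠ 0 := by linarith
    push_cast at hrel ⊢
    rw [e2] at hrel e1
    set I0 := ∫ θ, q (reflv θ ν) ∂sphereM m
    set I1 := ∫ θ, ⟪θ, ν⟫ * fderiv ℝ q (reflv θ ν) θ ∂sphereM m
    refine mul_left_cancel₀ h3 ?_
    have hI1 : I1 = (m - 2) / (m + 2 * k - 2) * omegaS m * ((k + 1) * q ν) /
        (m + 2 * (k + 1) - 2) := by
      rw [hrel]; field_simp
    rw [hI1] at e1
    have : (k + 1) * I0 = (m - 2) / (m + 2 * k - 2) * omegaS m * ((k + 1) * q ν)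
      - 2 * ((m - 2) / (m + 2 * k - 2) * omegaS m * ((k + 1) * q ν) /
        (m + 2 * (k + 1) - 2)) := by linarith
    rw [this]
    field_simp
    ring

end BosonicPoisson

namespace BosonicPoisson

open scoped ContDiff

variable {m : ℕ}

/-! ### Differentiation under the integral over the sphere -/

lemma hasFDerivAt_integral_sphereM {E F : Type*} [NormedAddCommGroup E] [NormedSpace ℝ E]
    [ProperSpace E] [NormedAddCommGroup F] [NormedSpace ℝ F] {U : Set E} (hU : IsOpen U)
    {G : E → Evec m → F} {G' : E → Evec m → E →L[ℝ] F}
    (hG : ContinuousOn (fun p : E × Evec m => G p.1 p.2) (U ×ˢ sphere 0 1))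
    (hG' : ContinuousOn (fun p : E × Evec m => G' p.1 p.2) (U ×ˢ sphere 0 1))
    (hd : ∀ x ∈ U, ∀ ζ ∈ sphere (0 : Evec m) 1, HasFDerivAt (fun x => G x ζ) (G' x ζ) x)
    {x : E} (hx : x ∈ U) :
    HasFDerivAt (fun x => ∫ ζ, G x ζ ∂sphereM m) (∫ ζ, G' x ζ ∂sphereM m) x := by
  obtain ⟨ε, hε, hεU⟩ := nhds_basis_closedBall.mem_iff.1 (hU.mem_nhds hx)
  have hcomp : IsCompact (closedBall x ε ×ˢ sphere (0 : Evec m) 1) :=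
    (isCompact_closedBall x ε).prod (isCompact_sphere 0 1)
  obtain ⟨C, hC⟩ := hcomp.exists_bound_of_continuousOn
    (hG'.mono (Set.prod_mono hεU subset_rfl))
  have hsec : ∀ y ∈ U, ContinuousOn (G y) (sphere 0 1) := fun y hy =>
    hG.comp (f := fun ζ => (y, ζ)) (by fun_prop) fun ζ hζ => ⟨hy, hζ⟩
  have hsec' : ContinuousOn (G' x) (sphere 0 1) :=
    hG'.comp (f := fun ζ => (x, ζ)) (by fun_prop) fun ζ hζ => ⟨hx, hζ⟩
  refine hasFDerivAt_integral_of_dominated_of_fderiv_le (bound := fun _ => C)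
    (closedBall_mem_nhds x hε) ?_ (integrable_sphereM (hsec x hx))
    (integrable_sphereM hsec').aestronglyMeasurable ?_ (integrable_const C) ?_
  · filter_upwards [hU.mem_nhds hx] with y hy
    exact (integrable_sphereM (hsec y hy)).aestronglyMeasurable
  · filter_upwards [ae_sphereM] with ζ hζ y hy
    exact hC (y, ζ) ⟨hy, by simpa using hζ⟩
  · filter_upwards [ae_sphereM] with ζ hζ y hy
    exact hd y (hεU hy) ζ (by simpa using hζ)

/-! ### Central projection of the sphere from an interior point -/

variable {F : Evec m → ℝ}

/-- Homogeneity of degree `0` under positive dilations, with smoothness off the origin. -/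
structure SmoothHom (F : Evec m → ℝ) : Prop where
  smooth : ∀ a ≠ 0, ContDiffAt ℝ ∞ F a
  hom : ∀ t : ℝ, 0 < t → ∀ a, F (t • a) = F a

lemma SmoothHom.contDiffAt_invPow_mul (hF : SmoothHom F) {a : Evec m} (ha : a ≠ 0) :
    ContDiffAt ℝ ∞ (fun a => invPow a * F a) a :=
  (contDiffAt_invPow ha).mul (hF.smooth a ha)

lemma SmoothHom.euler (hF : SmoothHom F) {a : Evec m} (ha : a ≠ 0) :
    fderiv ℝ (fun a => invPow a * F a) a a = -m * (invPow a * F a) := by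
  refine fderiv_eq_of_line ((hF.contDiffAt_invPow_mul ha).differentiableAt (by simp)) ?_
  have h1 : HasDerivAt (fun t : ℝ => F (a + t • a)) 0 0 := by
    refine (hasDerivAt_const (0 : ℝ) (F a)).congr_of_eventuallyEq ?_
    filter_upwards [lt_mem_nhds (show (-1 : ℝ) < 0 by norm_num)] with t ht
    rw [show a + t • a = (1 + t) • a by rw [add_smul, one_smul], hF.hom _ (by linarith)]
  refine ((hasDerivAt_line_invPow ha a).mul h1).congr_deriv ?_
  simp only [zero_smul, add_zero, mul_zero]
  linear_combination (-(m : ℝ) * invPow a * F a) * inner_self_mul_invSq ha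

lemma norm_ne_smul {x ζ : Evec m} {t : ℝ} (ht : |t| * ‖x‖ < 1) (hζ : ‖ζ‖ = 1) : ζ - t • x ≠ 0 := by
  intro h
  rw [sub_eq_zero] at h
  rw [h, norm_smul, Real.norm_eq_abs] at hζ
  linarith

/-- The divergence of the velocity field of the central projection. -/
lemma sum_fderiv_projField (hF : SmoothHom F) {x z : Evec m} {t : ℝ} (ht : |t| * ‖x‖ < 1)
    (hz : ‖z‖ = 1) :
    ∑ j, fderiv ℝ (fun z => (invPow (z - (t * ‖z‖) • x) * F (z - (t * ‖z‖) • x)) *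
        (‖z‖ * ⟪x, ev j⟫ - ⟪x, z⟫ * ‖z‖⁻¹ * ⟪z, ev j⟫)) z (ev j) =
      (1 - t * ⟪x, z⟫) * fderiv ℝ (fun a => invPow a * F a) (z - t • x) x
        + ⟪x, z⟫ * (invPow (z - t • x) * F (z - t • x)) := by
  set φ : Evec m → ℝ := fun a => invPow a * F a with hφ
  set a := z - t • x with ha
  have ha0 : a ≠ 0 := norm_ne_smul ht hz
  have hz0 : z ≠ 0 := by rintro rfl; simp at hz
  have hzz : ⟪z, z⟫ = 1 := by rw [real_inner_self_eq_norm_sq, hz]; norm_num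
  have ha' : z - (t * ‖z‖) • x = a := by rw [hz, mul_one]
  have hφd : DifferentiableAt ℝ φ a := (hF.contDiffAt_invPow_mul ha0).differentiableAt (by simp)
  set L := fderiv ℝ φ a with hL
  have hin : DifferentiableAt ℝ (fun z : Evec m => z - (t * ‖z‖) • x) z :=
    differentiableAt_id.sub (((differentiableAt_id.norm ℝ hz0).const_mul t).smul_const x)
  have key : ∀ j, fderiv ℝ (fun z => φ (z - (t * ‖z‖) • x) *
        (‖z‖ * ⟪x, ev j⟫ - ⟪x, z⟫ * ‖z‖⁻¹ * ⟪z, ev j⟫)) z (ev j) =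
      (⟪x, ev j⟫ * L (ev j) - ⟪x, z⟫ * (⟪z, ev j⟫ * L (ev j)))
      - t * L x * (⟪z, ev j⟫ * ⟪x, ev j⟫ - ⟪x, z⟫ * (⟪z, ev j⟫ * ⟪z, ev j⟫))
      + φ a * (⟪z, ev j⟫ * ⟪x, ev j⟫ - ⟪x, ev j⟫ * ⟪z, ev j⟫
        + ⟪x, z⟫ * (⟪z, ev j⟫ * ⟪z, ev j⟫) - ⟪x, z⟫ * ⟪ev j, ev j⟫) := by
    intro j
    refine fderiv_eq_of_line ?_ ?_
    · refine DifferentiableAt.mul ?_ ?_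
      · exact DifferentiableAt.comp z (by rwa [ha']) hin
      · have h1 : DifferentiableAt ℝ (fun z : Evec m => ‖z‖) z := differentiableAt_id.norm ℝ hz0
        have h2 : DifferentiableAt ℝ (fun z : Evec m => ‖z‖⁻¹) z := h1.inv (by simpa using hz0)
        have h3 : DifferentiableAt ℝ (fun z : Evec m => ⟪x, z⟫) z :=
          (differentiableAt_const x).inner ℝ differentiableAt_id
        have h4 : DifferentiableAt ℝ (fun z : Evec m => ⟪z, ev j⟫) z :=
          differentiableAt_id.inner ℝ (differentiableAt_const _)
        exact (h1.mul_const _).sub ((h3.mul h2).mul h4)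
    · have hN := hasDerivAt_line_norm hz0 (ev j)
      have hline := hasDerivAt_line z (ev j)
      have h1 := hline.sub ((hN.const_mul t).smul_const x)
      have hφ' : HasFDerivAt φ L ((fun s : ℝ => z + s • ev j - (t * ‖z + s • ev j‖) • x) 0) := by
        simp only [zero_smul, add_zero, ha']
        exact hφd.hasFDerivAt
      have h2 := hφ'.comp_hasDerivAt (0 : ℝ) h1
      have hNi := hN.inv (by simpa using hz0)
      have h3 := (hN.mul_const ⟪x, ev j⟫).sub
        (((hasDerivAt_line_inner_left x z (ev j)).mul hNi).mul (hasDerivAt_line_inner z (ev j) (ev j)))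
      refine (h2.mul h3).congr_deriv ?_
      simp only [zero_smul, add_zero, Pi.mul_apply, Pi.sub_apply, Pi.inv_apply, Function.comp_apply,
        hz, map_sub, map_smul, smul_eq_mul]
      norm_num
      ring
  rw [Finset.sum_congr rfl fun j _ => key j]
  simp only [Finset.sum_add_distrib, Finset.sum_sub_distrib, ← Finset.mul_sum,
    sum_inner_ev_mul_map, sum_inner_ev_mul_inner_ev, inner_ev_self]
  simp only [Finset.sum_const, Finset.card_univ, Fintype.card_fin, nsmul_eq_mul, hzz]
  have hE := hF.euler ha0
  rw [← hφ, ← hL] at hE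
  have hz' : L z = L a + t * L x := by
    have : z = a + t • x := by rw [ha]; abel
    conv_lhs => rw [this]
    simp
  rw [hz', hE, real_inner_comm z x]
  simp only [hφ]
  ring

lemma integral_projField (hm : 0 < m) (hF : SmoothHom F) {x : Evec m} {t : ℝ}
    (ht : |t| * ‖x‖ < 1) :
    ∫ z, ((1 - t * ⟪x, z⟫) * fderiv ℝ (fun a => invPow a * F a) (z - t • x) x
        + ⟪x, z⟫ * (invPow (z - t • x) * F (z - t • x))) ∂sphereM m = 0 := by
  have hA : ∀ z : Evec m, z ≠ 0 → z - (t * ‖z‖) • x ≠ 0 := by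
    intro z hz h
    have hz' : 0 < ‖z‖ := norm_pos_iff.2 hz
    rw [sub_eq_zero] at h
    have := congrArg norm h
    rw [norm_smul, Real.norm_eq_abs, abs_mul, abs_of_pos hz'] at this
    nlinarith
  have hsm : ∀ j : Fin m, ∀ z ≠ 0, ContDiffAt ℝ ∞ (fun z =>
      (invPow (z - (t * ‖z‖) • x) * F (z - (t * ‖z‖) • x)) *
        (‖z‖ * ⟪x, ev j⟫ - ⟪x, z⟫ * ‖z‖⁻¹ * ⟪z, ev j⟫)) z := by
    intro j z hz
    have hN : ContDiffAt ℝ ∞ (fun z : Evec m => ‖z‖) z := contDiffAt_norm ℝ hz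
    have hin : ContDiffAt ℝ ∞ (fun z : Evec m => z - (t * ‖z‖) • x) z :=
      contDiffAt_id.sub ((contDiffAt_const.mul hN).smul contDiffAt_const)
    have h1 := (hF.contDiffAt_invPow_mul (hA z hz)).comp z hin
    have h3 : ContDiffAt ℝ ∞ (fun z : Evec m => ⟪z, ev j⟫) z :=
      contDiffAt_id.inner ℝ contDiffAt_const
    exact h1.mul ((hN.mul contDiffAt_const).sub
      (((contDiffAt_inner_const x z).mul (hN.inv (by simpa using hz))).mul h3))
  have h0 : ∑ j, ∫ z, fderiv ℝ (fun z => (invPow (z - (t * ‖z‖) • x) * F (z - (t * ‖z‖) • x)) *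
        (‖z‖ * ⟪x, ev j⟫ - ⟪x, z⟫ * ‖z‖⁻¹ * ⟪z, ev j⟫)) z (ev j) ∂sphereM m = 0 := by
    refine Finset.sum_eq_zero fun j _ => integral_sphereM_fderiv_eq_zero hm (hsm j)
      (fun s hs z hz => ?_) _
    have hz' : ‖z‖ ≠ 0 := norm_ne_zero_iff.2 hz
    rw [show s • z - (t * ‖s • z‖) • x = s • (z - (t * ‖z‖) • x) by
      rw [norm_smul, Real.norm_of_nonneg hs.le, smul_sub, smul_smul]; congr 2; ring,
      hF.hom s hs, invPow_smul hs, norm_smul, Real.norm_of_nonneg hs.le, inner_smul_left,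
      inner_smul_right]
    obtain ⟨n, rfl⟩ := Nat.exists_eq_succ_of_ne_zero hm.ne'
    simp only [Nat.succ_eq_add_one, Nat.add_sub_cancel, RCLike.conj_to_real]
    field_simp
    try ring
  rw [← integral_finsetSum] at h0
  · rw [← h0]
    exact integral_sphereM_congr fun z hz => (sum_fderiv_projField hF ht hz).symm
  · intro j _
    refine integrable_sphereM fun z hz => ?_
    have hz0 : z ≠ 0 := by rintro rfl; simp at hz
    exact ((((hsm j z hz0).fderiv_right (m := ∞) (by simp)).continuousAt).clm_apply
      continuousAt_const).continuousWithinAt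

/-- Central projection from `x`: the surface measure seen from an interior point. -/
lemma integral_central_projection (hm : 0 < m) (hF : SmoothHom F) {x : Evec m} (hx : ‖x‖ < 1) :
    ∫ ζ, invPow (ζ - x) * F (ζ - x) * (1 - ⟪x, ζ⟫) ∂sphereM m = ∫ ζ, F ζ ∂sphereM m := by
  set φ : Evec m → ℝ := fun a => invPow a * F a with hφ
  set U : Set ℝ := {t | |t| * ‖x‖ < 1} with hU
  have hUo : IsOpen U := isOpen_lt (by fun_prop) continuous_const
  set G : ℝ → Evec m → ℝ := fun t ζ => φ (ζ - t • x) * (1 - t * ⟪x, ζ⟫) with hG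
  set d : ℝ → Evec m → ℝ := fun t ζ =>
    -((1 - t * ⟪x, ζ⟫) * fderiv ℝ φ (ζ - t • x) x + ⟪x, ζ⟫ * φ (ζ - t • x)) with hd
  have hne : ∀ p ∈ U ×ˢ sphere (0 : Evec m) 1, p.2 - p.1 • x ≠ 0 := fun p hp =>
    norm_ne_smul hp.1 (by simpa using hp.2)
  have hφa : ∀ a ≠ 0, ContDiffAt ℝ ∞ φ a := fun a ha => hF.contDiffAt_invPow_mul ha
  have hcφ : ContinuousOn (fun p : ℝ × Evec m => φ (p.2 - p.1 • x)) (U ×ˢ sphere 0 1) :=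
    fun p hp => ((hφa _ (hne p hp)).continuousAt.comp (f := fun p : ℝ × Evec m => p.2 - p.1 • x)
      (by fun_prop)).continuousWithinAt
  have hcφ' : ContinuousOn (fun p : ℝ × Evec m => fderiv ℝ φ (p.2 - p.1 • x) x)
      (U ×ˢ sphere 0 1) := fun p hp => by
    have h := ((hφa _ (hne p hp)).fderiv_right (m := ∞) (by simp)).continuousAt.comp
      (f := fun p : ℝ × Evec m => p.2 - p.1 • x) (x := p) (by fun_prop)
    exact (h.clm_apply continuousAt_const).continuousWithinAt
  have hσ : Continuous (fun p : ℝ × Evec m => 1 - p.1 * ⟪x, p.2⟫) := by fun_prop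
  have hGc : ContinuousOn (fun p : ℝ × Evec m => G p.1 p.2) (U ×ˢ sphere 0 1) :=
    hcφ.mul hσ.continuousOn
  have hdc : ContinuousOn (fun p : ℝ × Evec m => d p.1 p.2) (U ×ˢ sphere 0 1) :=
    ((hσ.continuousOn.mul hcφ').add
      (ContinuousOn.mul (Continuous.continuousOn (by fun_prop)) hcφ)).neg
  have hder : ∀ t ∈ U, HasDerivAt (fun t => ∫ ζ, G t ζ ∂sphereM m) 0 t := by
    intro t ht
    have h := hasFDerivAt_integral_sphereM hUo hGc
      (G' := fun t ζ => ContinuousLinearMap.toSpanSingleton ℝ (d t ζ)) ?_ ?_ ht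
    · have h' := h.hasDerivAt
      refine h'.congr_deriv ?_
      rw [ContinuousLinearMap.integral_apply]
      · simp only [ContinuousLinearMap.toSpanSingleton_apply, one_smul, hd]
        rw [integral_neg, integral_projField hm hF ht, neg_zero]
      · refine integrable_sphereM fun ζ hζ => ?_
        have h1 : ContinuousOn (d t) (sphere 0 1) :=
          hdc.comp (f := fun ζ => (t, ζ)) (by fun_prop) fun ζ hζ => ⟨ht, hζ⟩
        exact ((ContinuousLinearMap.toSpanSingletonLE ℝ ℝ ℝ).continuous_of_finiteDimensional.comp_continuousOn
          h1) ζ hζ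
    · exact ((ContinuousLinearMap.toSpanSingletonLE ℝ ℝ ℝ).continuous_of_finiteDimensional.comp_continuousOn
          hdc)
    · intro s hs ζ hζ
      have hline : HasDerivAt (fun s : ℝ => ζ - s • x) (-x) s := by
        simpa using ((hasDerivAt_id s).smul_const x).const_sub ζ
      have h1 := ((hφa _ (hne (s, ζ) ⟨hs, hζ⟩)).differentiableAt
        (by simp)).hasFDerivAt.comp_hasDerivAt s hline
      have h2 : HasDerivAt (fun s : ℝ => 1 - s * ⟪x, ζ⟫) (-⟪x, ζ⟫) s := by
        simpa using ((hasDerivAt_id s).mul_const ⟪x, ζ⟫).const_sub 1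
      have h3 := (h1.mul h2).congr_deriv (g' := d s ζ) (by simp [hd]; ring)
      exact h3.hasFDerivAt
  have hsub : Set.Icc (0 : ℝ) 1 ⊆ U := fun t ht => by
    have : |t| ≤ 1 := abs_le.2 ⟨by linarith [ht.1], ht.2⟩
    calc |t| * ‖x‖ ≤ 1 * ‖x‖ := by gcongr
      _ < 1 := by linarith
  have hconst := constant_of_has_deriv_right_zero (a := 0) (b := 1)
    (f := fun t => ∫ ζ, G t ζ ∂sphereM m)
    (fun t ht => (hder t (hsub ht)).continuousAt.continuousWithinAt)
    (fun t ht => (hder t (hsub ⟨ht.1, ht.2.le⟩)).hasDerivWithinAt) 1 (by simp)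
  simp only [hG, one_smul, zero_smul, one_mul, zero_mul, sub_zero, mul_one] at hconst
  rw [hconst]
  refine integral_sphereM_congr fun ζ hζ => ?_
  simp [hφ, invPow, hζ]

/-- The Poisson-type mean value identity for even functions of the direction `ζ - x`. -/
lemma integral_poisson_even (hm : 0 < m) (hF : SmoothHom F) (heven : ∀ a, F (-a) = F a)
    {x : Evec m} (hx : ‖x‖ < 1) :
    ∫ ζ, (1 - ‖x‖ ^ 2) / ‖x - ζ‖ ^ m * F (x - ζ) ∂sphereM m = ∫ ζ, F ζ ∂sphereM m := by
  have hx2 : 0 < 1 - ‖x‖ ^ 2 := by nlinarith [norm_nonneg x]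
  set o : Evec m → ℝ := fun a => (⟪x, a⟫ * ‖a‖⁻¹) / √((⟪x, a⟫ * ‖a‖⁻¹) ^ 2 + (1 - ‖x‖ ^ 2)) with ho
  have hpos : ∀ a, 0 < (⟪x, a⟫ * ‖a‖⁻¹) ^ 2 + (1 - ‖x‖ ^ 2) := fun a => by positivity
  have hos : ∀ a ≠ 0, ContDiffAt ℝ ∞ o a := by
    intro a ha
    have h1 : ContDiffAt ℝ ∞ (fun a : Evec m => ⟪x, a⟫ * ‖a‖⁻¹) a :=
      (contDiffAt_inner_const x a).mul ((contDiffAt_norm ℝ ha).inv (by simpa using ha))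
    exact h1.div (((h1.pow 2).add contDiffAt_const).sqrt (hpos a).ne')
      (Real.sqrt_pos.2 (hpos a)).ne'
  have hodd : ∀ a, o (-a) = -o a := by
    intro a
    simp only [ho, inner_neg_right, norm_neg, neg_mul, neg_sq, neg_div]
  have hohom : ∀ t : ℝ, 0 < t → ∀ a, o (t • a) = o a := by
    intro t ht a
    have : ⟪x, t • a⟫ * ‖t • a‖⁻¹ = ⟪x, a⟫ * ‖a‖⁻¹ := by
      rw [inner_smul_right, norm_smul, Real.norm_of_nonneg ht.le]
      field_simp
    simp only [ho, this]
  have hF' : SmoothHom (fun a => F a * (1 + o a)) :=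
    ⟨fun a ha => (hF.smooth a ha).mul (contDiffAt_const.add (hos a ha)),
      fun t ht a => by simp only [hF.hom t ht, hohom t ht]⟩
  have hsph : ∀ θ ∈ sphere (0 : Evec m) 1, θ ≠ 0 := by
    rintro θ hθ rfl
    simp at hθ
  have i1 : Integrable F (sphereM m) := integrable_sphereM fun θ hθ =>
    (hF.smooth θ (hsph θ hθ)).continuousAt.continuousWithinAt
  have i2 : Integrable (fun a => F a * o a) (sphereM m) := integrable_sphereM fun θ hθ =>
    ((hF.smooth θ (hsph θ hθ)).continuousAt.mul
      (hos θ (hsph θ hθ)).continuousAt).continuousWithinAt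
  have hz : ∫ a, F a * o a ∂sphereM m = 0 := by
    have h := integral_sphereM_neg (fun a => F a * o a)
    simp only [heven, hodd, mul_neg, integral_neg] at h
    linarith
  have h := integral_central_projection hm hF' hx
  simp only [mul_add, mul_one] at h
  rw [integral_add i1 i2, hz, add_zero] at h
  rw [← h]
  refine integral_sphereM_congr fun ζ hζ => ?_
  have ha0 : ζ - x ≠ 0 := by
    intro hc
    rw [sub_eq_zero] at hc
    rw [hc] at hζ
    linarith
  rw [show x - ζ = -(ζ - x) by abel, heven, norm_neg, invPow]
  set a := ζ - x with ha
  have hd : 0 < ‖a‖ := norm_pos_iff.2 ha0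
  have hζa : ζ = x + a := by rw [ha]; abel
  have hσ : ⟪x, ζ⟫ = ‖x‖ ^ 2 + ⟪x, a⟫ := by
    rw [hζa, inner_add_right, real_inner_self_eq_norm_sq]
  have hnorm : 1 = ‖x‖ ^ 2 + 2 * ⟪x, a⟫ + ‖a‖ ^ 2 := by
    rw [← norm_add_sq_real, ← hζa, hζ]; norm_num
  have hlt : ⟪x, ζ⟫ < 1 := by
    have := real_inner_le_norm x ζ
    rw [hζ] at this
    linarith
  set β := ⟪x, a⟫ * ‖a‖⁻¹ with hβ
  have hβa : ⟪x, a⟫ = β * ‖a‖ := by rw [hβ]; field_simp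
  have hsum : 0 < ‖a‖ + β := by
    have : 0 < ‖a‖ * (‖a‖ + β) := by nlinarith
    exact (pos_iff_pos_of_mul_pos this).1 hd
  have hoa : o a = β / (‖a‖ + β) := by
    simp only [ho, ← hβ]
    rw [show β ^ 2 + (1 - ‖x‖ ^ 2) = (‖a‖ + β) ^ 2 by nlinarith, Real.sqrt_sq hsum.le]
  rw [hoa, hσ, hβa, show 1 - ‖x‖ ^ 2 = ‖a‖ ^ 2 + 2 * β * ‖a‖ by nlinarith,
    show 1 - (‖x‖ ^ 2 + β * ‖a‖) = ‖a‖ * (‖a‖ + β) by nlinarith]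
  field_simp
  ring

end BosonicPoisson

namespace BosonicPoisson

open scoped ContDiff

variable {m k : ℕ}

/-! ### The finite-dimensional space `ℋ_k` -/

lemma contDiff_eval (P : MvPolynomial (Fin m) ℝ) :
    ContDiff ℝ ∞ (fun x : Evec m => MvPolynomial.eval (fun i => x i) P) := by
  simp only [MvPolynomial.eval_eq]
  refine ContDiff.sum fun d _ => contDiff_const.mul ?_
  refine contDiff_prod fun i _ => ContDiff.pow ?_ _
  fun_prop

lemma IsHk.contDiff {p : Evec m → ℝ} (hp : IsHk m k p) : ContDiff ℝ ∞ p := by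
  obtain ⟨P, hP⟩ := hp.1
  rw [show p = fun x => MvPolynomial.eval (fun i => x i) P from funext hP]
  exact contDiff_eval P

lemma IsHk.harmHom {p : Evec m → ℝ} (hp : IsHk m k p) : HarmHom (k : ℝ) p where
  smooth := IsHk.contDiff hp
  harm := hp.2.2
  euler y := by
    have h1 := ((IsHk.contDiff hp).differentiable (by simp) ((1 : ℝ) • y)).hasFDerivAt.comp_hasDerivAt
      (1 : ℝ) ((hasDerivAt_id (1 : ℝ)).smul_const y)
    have h2 : HasDerivAt (fun c : ℝ => c ^ k * p y) (k * p y) 1 := by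
      simpa using (hasDerivAt_pow k (1 : ℝ)).mul_const (p y)
    have h3 : (p ∘ fun c : ℝ => id c • y) = fun c : ℝ => c ^ k * p y :=
      funext fun c => hp.2.1 c y
    rw [h3] at h1
    simpa using h1.unique h2

lemma lapl_add {p q : Evec m → ℝ} (hp : ContDiff ℝ ∞ p) (hq : ContDiff ℝ ∞ q) (x : Evec m) :
    lapl (p + q) x = lapl p x + lapl q x := by
  simp only [lapl, ← Finset.sum_add_distrib]
  refine Finset.sum_congr rfl fun i _ => ?_
  have h1 : pdv i (p + q) = pdv i p + pdv i q := by
    funext y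
    simp only [pdv, Pi.add_apply]
    rw [fderiv_add (hp.differentiable (by simp) y) (hq.differentiable (by simp) y)]
    rfl
  rw [h1]
  change fderiv ℝ (pdv i p + pdv i q) x _ = _
  rw [fderiv_add ((contDiff_pdv hp i).differentiable (by simp) x)
    ((contDiff_pdv hq i).differentiable (by simp) x)]
  rfl

lemma lapl_smul {p : Evec m → ℝ} (hp : ContDiff ℝ ∞ p) (c : ℝ) (x : Evec m) :
    lapl (c • p) x = c * lapl p x := by
  simp only [lapl, Finset.mul_sum]
  refine Finset.sum_congr rfl fun i _ => ?_
  have h1 : pdv i (c • p) = c • pdv i p := by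
    funext y
    simp only [pdv, Pi.smul_apply]
    rw [fderiv_const_smul (hp.differentiable (by simp) y)]
    rfl
  rw [h1]
  change fderiv ℝ (c • pdv i p) x _ = _
  rw [fderiv_const_smul ((contDiff_pdv hp i).differentiable (by simp) x)]
  rfl

/-- `ℋ_k` as a space of functions. -/
def Hk (m k : ℕ) : Submodule ℝ (Evec m → ℝ) where
  carrier := {p | IsHk m k p}
  add_mem' := by
    rintro p q hp hq
    obtain ⟨P, hP⟩ := hp.1
    obtain ⟨Q, hQ⟩ := hq.1
    refine ⟨⟨P + Q, fun x => by simp [hP, hQ]⟩, fun c x => ?_, fun x => ?_⟩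
    · simp only [Pi.add_apply, hp.2.1, hq.2.1]
      ring
    · rw [lapl_add (IsHk.contDiff hp) (IsHk.contDiff hq), hp.2.2, hq.2.2, add_zero]
  zero_mem' := ⟨⟨0, by simp⟩, by simp, fun x => by
    simp only [lapl]
    refine Finset.sum_eq_zero fun i _ => ?_
    have h0 : pdv i (0 : Evec m → ℝ) = 0 := by funext y; simp [pdv]
    rw [h0, h0]; rfl⟩
  smul_mem' := by
    rintro c p hp
    obtain ⟨P, hP⟩ := hp.1
    refine ⟨⟨MvPolynomial.C c * P, fun x => by simp [hP]⟩, fun d x => ?_, fun x => ?_⟩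
    · simp only [Pi.smul_apply, hp.2.1, smul_eq_mul]
      ring
    · rw [lapl_smul (IsHk.contDiff hp), hp.2.2, mul_zero]

lemma eval_smul_of_isHomogeneous {P : MvPolynomial (Fin m) ℝ} {j : ℕ} (hP : P.IsHomogeneous j)
    (c : ℝ) (x : Evec m) :
    MvPolynomial.eval (fun i => (c • x) i) P = c ^ j * MvPolynomial.eval (fun i => x i) P := by
  simp only [MvPolynomial.eval_eq, Finset.mul_sum]
  refine Finset.sum_congr rfl fun d hd => ?_
  have hdeg : ∑ i ∈ d.support, d i = j := by
    have := hP (MvPolynomial.mem_support_iff.1 hd)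
    rw [Finsupp.weight_apply, Finsupp.sum] at this
    simpa using this
  simp only [PiLp.smul_apply, smul_eq_mul, mul_pow, Finset.prod_mul_distrib,
    Finset.prod_pow_eq_pow_sum, hdeg]
  ring

lemma IsHk.eval_homogeneousComponent {p : Evec m → ℝ} (hp : IsHk m k p)
    {P : MvPolynomial (Fin m) ℝ} (hP : ∀ x : Evec m, p x = MvPolynomial.eval (fun i => x i) P)
    (x : Evec m) :
    p x = MvPolynomial.eval (fun i => x i) (MvPolynomial.homogeneousComponent k P) := by
  set A : ℕ → ℝ := fun j =>
    MvPolynomial.eval (fun i => x i) (MvPolynomial.homogeneousComponent j P) with hA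
  have hpoly : (∑ j ∈ Finset.range (P.totalDegree + 1),
      Polynomial.C (A j) * Polynomial.X ^ j : Polynomial ℝ) =
      Polynomial.C (p x) * Polynomial.X ^ k := by
    refine Polynomial.funext fun c => ?_
    have h1 := hP (c • x)
    rw [hp.2.1, ← MvPolynomial.sum_homogeneousComponent P, map_sum] at h1
    simp only [Polynomial.eval_finsetSum, Polynomial.eval_mul, Polynomial.eval_C,
      Polynomial.eval_pow, Polynomial.eval_X]
    rw [mul_comm, h1]
    refine Finset.sum_congr rfl fun j _ => ?_
    rw [eval_smul_of_isHomogeneous (MvPolynomial.homogeneousComponent_isHomogeneous j P), mul_comm]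
  have hco := congrArg (fun Q => Polynomial.coeff Q k) hpoly
  simp only [Polynomial.finsetSum_coeff, Polynomial.coeff_C_mul_X_pow, Finset.sum_ite_eq,
    Finset.mem_range, if_true] at hco
  rw [← hco]
  split_ifs with hk
  · rfl
  · rw [MvPolynomial.homogeneousComponent_eq_zero _ _ (by omega), map_zero]

instance : FiniteDimensional ℝ (Hk m k) := by
  let E : MvPolynomial (Fin m) ℝ →ₗ[ℝ] (Evec m → ℝ) :=
    { toFun := fun P x => MvPolynomial.eval (fun i => x i) P
      map_add' := fun P Q => by funext x; simp
      map_smul' := fun c P => by funext x; simp [MvPolynomial.smul_eval] }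
  have hle : Hk m k ≤ (MvPolynomial.restrictTotalDegree (Fin m) ℝ k).map E := by
    intro p hp
    obtain ⟨P, hP⟩ := hp.1
    refine ⟨MvPolynomial.homogeneousComponent k P, ?_, ?_⟩
    · exact (MvPolynomial.mem_restrictTotalDegree _ _ _).2
        (MvPolynomial.homogeneousComponent_isHomogeneous k P).totalDegree_le
    · funext x
      exact (IsHk.eval_homogeneousComponent hp hP x).symm
  exact Submodule.finiteDimensional_of_le hle

/-- Evaluation at a point, as a functional on `ℋ_k`. -/
def evalHk (m k : ℕ) (v : Evec m) : Module.Dual ℝ (Hk m k) where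
  toFun p := p.1 v
  map_add' _ _ := rfl
  map_smul' _ _ := rfl

lemma span_evalHk : Submodule.span ℝ (evalHk m k '' closedBall 0 1) = ⊤ := by
  rw [← Subspace.dualCoannihilator_dualAnnihilator_eq
    (W := Submodule.span ℝ (evalHk m k '' closedBall 0 1))]
  have : (Submodule.span ℝ (evalHk m k '' closedBall 0 1)).dualCoannihilator = ⊥ := by
    rw [eq_bot_iff]
    intro p hp
    rw [Submodule.mem_dualCoannihilator] at hp
    have h0 : ∀ v ∈ closedBall (0 : Evec m) 1, p.1 v = 0 := fun v hv =>
      hp (evalHk m k v) (Submodule.subset_span ⟨v, hv, rfl⟩)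
    rw [Submodule.mem_bot]
    refine Subtype.ext (funext fun v => ?_)
    rcases eq_or_ne v 0 with rfl | hv
    · exact h0 0 (by simp)
    · have hn : ‖v‖ ≠ 0 := norm_ne_zero_iff.2 hv
      have h1 := h0 (‖v‖⁻¹ • v) (by simp [norm_smul, hn])
      rw [p.2.2.1] at h1
      exact (mul_eq_zero.1 h1).resolve_left (pow_ne_zero _ (inv_ne_zero hn))
  rw [this, Submodule.dualAnnihilator_bot]

/-- Elements of `ℋ_k` are recovered linearly from finitely many values in the unit ball. -/
lemma exists_interpolation (m k : ℕ) : ∃ (n : ℕ) (v : Fin n → Evec m) (e : Fin n → Evec m → ℝ),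
    (∀ i, v i ∈ closedBall (0 : Evec m) 1) ∧ (∀ i, IsHk m k (e i)) ∧
    ∀ q, IsHk m k q → ∀ u, q u = ∑ i, q (v i) * e i u := by
  set b := Module.Basis.ofSpan (K := ℝ) (s := evalHk m k '' closedBall 0 1) span_evalHk.ge with hb
  have : Fintype ((linearIndepOn_empty ℝ id).extend
      (Set.empty_subset (evalHk m k '' closedBall 0 1))) :=
    FiniteDimensional.fintypeBasisIndex b
  obtain ⟨n, ⟨σ⟩⟩ := Finite.exists_equiv_fin ((linearIndepOn_empty ℝ id).extend
      (Set.empty_subset (evalHk m k '' closedBall 0 1)))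
  set b' := b.reindex σ with hb'
  have hmem : ∀ i, ∃ v ∈ closedBall (0 : Evec m) 1, evalHk m k v = b' i := fun i =>
    Module.Basis.ofSpan_subset span_evalHk.ge ⟨σ.symm i, by simp [hb', hb]⟩
  choose v hv hvb using hmem
  refine ⟨n, v, fun i => ((Module.evalEquiv ℝ (Hk m k)).symm (b'.coord i)).1, hv,
    fun i => ((Module.evalEquiv ℝ (Hk m k)).symm (b'.coord i)).2, fun q hq u => ?_⟩
  have h1 : ∀ i, ((Module.evalEquiv ℝ (Hk m k)).symm (b'.coord i)).1 u =
      b'.repr (evalHk m k u) i := fun i =>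
    Module.apply_evalEquiv_symm_apply ℝ (Hk m k) (evalHk m k u) (b'.coord i)
  have h2 := congrArg (fun f : Module.Dual ℝ (Hk m k) => f ⟨q, hq⟩) (b'.sum_repr (evalHk m k u))
  simp only [LinearMap.sum_apply, LinearMap.smul_apply, ← hvb, smul_eq_mul] at h2
  simp only [h1]
  exact h2.symm.trans (Finset.sum_congr rfl fun i _ => mul_comm _ _)

end BosonicPoisson

namespace BosonicPoisson

open scoped ContDiff

variable {m k : ℕ}

/-! ### Differentiation of sphere integrals of smooth kernels -/

/-- Joint smoothness of a kernel `G ζ x u` off the diagonal `x = ζ`. -/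
def SmoothKer (G : Evec m → Evec m → Evec m → ℝ) : Prop :=
  ContDiffOn ℝ ∞ (fun p : (Evec m × Evec m) × Evec m => G p.2 p.1.1 p.1.2) {p | p.1.1 ≠ p.2}

lemma isOpen_offDiag : IsOpen {p : (Evec m × Evec m) × Evec m | p.1.1 ≠ p.2} :=
  isOpen_ne_fun (by fun_prop) (by fun_prop)

lemma ne_of_mem_ball_of_mem_sphere {x ζ : Evec m} (hx : x ∈ ball (0 : Evec m) 1)
    (hζ : ζ ∈ sphere (0 : Evec m) 1) : x ≠ ζ := by
  rintro rfl
  simp only [mem_ball_zero_iff, mem_sphere_zero_iff_norm] at hx hζ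
  linarith

namespace SmoothKer

variable {G : Evec m → Evec m → Evec m → ℝ}

lemma hasFDerivAt (hG : SmoothKer G) {x ζ : Evec m} (hx : x ≠ ζ) (u : Evec m) :
    HasFDerivAt (fun p : Evec m × Evec m => G ζ p.1 p.2)
      ((fderiv ℝ (fun p : (Evec m × Evec m) × Evec m => G p.2 p.1.1 p.1.2) ((x, u), ζ)).comp
        (ContinuousLinearMap.inl ℝ (Evec m × Evec m) (Evec m))) (x, u) := by
  have h : DifferentiableAt ℝ (fun p : (Evec m × Evec m) × Evec m => G p.2 p.1.1 p.1.2)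
      ((x, u), ζ) :=
    (ContDiffOn.contDiffAt hG (isOpen_offDiag.mem_nhds hx)).differentiableAt (by simp)
  exact h.hasFDerivAt.comp (f := fun p : Evec m × Evec m => (p, ζ)) (x, u)
    ((hasFDerivAt_id (x, u)).prodMk (hasFDerivAt_const ζ (x, u)))

lemma continuousOn_fderiv (hG : SmoothKer G) :
    ContDiffOn ℝ ∞ (fderiv ℝ (fun p : (Evec m × Evec m) × Evec m => G p.2 p.1.1 p.1.2))
      {p | p.1.1 ≠ p.2} :=
  ContDiffOn.fderiv_of_isOpen hG isOpen_offDiag (by simp)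

lemma pd1 (hG : SmoothKer G) (i : Fin m) : SmoothKer (fun ζ => pd1 i (G ζ)) := by
  refine (hG.continuousOn_fderiv.clm_apply (contDiffOn_const (c := ((ev i, 0), 0)))).congr
    fun p hp => ?_
  obtain ⟨⟨x, u⟩, ζ⟩ := p
  have h := hG.hasFDerivAt (x := x) (ζ := ζ) hp u
  change _root_.pd1 i (G ζ) x u = _
  rw [pd1_eq_of_differentiableAt h.differentiableAt, h.fderiv]
  rfl

lemma pd2 (hG : SmoothKer G) (i : Fin m) : SmoothKer (fun ζ => pd2 i (G ζ)) := by
  refine (hG.continuousOn_fderiv.clm_apply (contDiffOn_const (c := ((0, ev i), 0)))).congr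
    fun p hp => ?_
  obtain ⟨⟨x, u⟩, ζ⟩ := p
  have h := hG.hasFDerivAt (x := x) (ζ := ζ) hp u
  change _root_.pd2 i (G ζ) x u = _
  rw [pd2_eq_of_differentiableAt h.differentiableAt, h.fderiv]
  rfl

end SmoothKer

variable {ι : Type*} [Fintype ι] {w : ι → Evec m → ℝ}

/-- Kernels which, over the ball, are combinations of smooth kernels with coefficients `w i`
depending only on the boundary point. -/
def WeightedKer (w : ι → Evec m → ℝ) (G : Evec m → Evec m → Evec m → ℝ) : Prop :=
  ∃ H : ι → Evec m → Evec m → Evec m → ℝ, (∀ i, SmoothKer (H i)) ∧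
    ∀ ζ ∈ sphere (0 : Evec m) 1, ∀ x ∈ ball (0 : Evec m) 1, ∀ u,
      G ζ x u = ∑ i, w i ζ * H i ζ x u

namespace WeightedKer

variable {G : Evec m → Evec m → Evec m → ℝ}

lemma exists_hasFDerivAt (hG : WeightedKer w G) :
    ∃ H : ι → Evec m → Evec m → Evec m → ℝ, (∀ i, SmoothKer (H i)) ∧
      ∀ ζ ∈ sphere (0 : Evec m) 1, ∀ x ∈ ball (0 : Evec m) 1, ∀ u,
        G ζ x u = ∑ i, w i ζ * H i ζ x u ∧
        HasFDerivAt (fun p : Evec m × Evec m => G ζ p.1 p.2)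
          (∑ i, w i ζ • (fderiv ℝ
            (fun p : (Evec m × Evec m) × Evec m => H i p.2 p.1.1 p.1.2) ((x, u), ζ)).comp
              (ContinuousLinearMap.inl ℝ (Evec m × Evec m) (Evec m))) (x, u) := by
  obtain ⟨H, hH, hGH⟩ := hG
  refine ⟨H, hH, fun ζ hζ x hx u => ⟨hGH ζ hζ x hx u, ?_⟩⟩
  have h : HasFDerivAt (fun p : Evec m × Evec m => ∑ i, w i ζ * H i ζ p.1 p.2) _ (x, u) :=
    HasFDerivAt.fun_sum fun i (_ : i ∈ Finset.univ) =>
      ((hH i).hasFDerivAt (ne_of_mem_ball_of_mem_sphere hx hζ) u).const_mul (w i ζ)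
  refine h.congr_of_eventuallyEq ?_
  have : ball (0 : Evec m) 1 ×ˢ (Set.univ : Set (Evec m)) ∈ 𝓝 (x, u) :=
    (isOpen_ball.prod isOpen_univ).mem_nhds ⟨hx, trivial⟩
  filter_upwards [this] with p hp using hGH ζ hζ p.1 hp.1 p.2

lemma differentiableAt (hG : WeightedKer w G) {ζ x : Evec m} (hζ : ζ ∈ sphere (0 : Evec m) 1)
    (hx : x ∈ ball (0 : Evec m) 1) (u : Evec m) :
    DifferentiableAt ℝ (fun p : Evec m × Evec m => G ζ p.1 p.2) (x, u) := by
  obtain ⟨H, -, h⟩ := hG.exists_hasFDerivAt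
  exact (h ζ hζ x hx u).2.differentiableAt

lemma pd1 (hG : WeightedKer w G) (i : Fin m) : WeightedKer w (fun ζ => pd1 i (G ζ)) := by
  obtain ⟨H, hH, h⟩ := hG.exists_hasFDerivAt
  refine ⟨fun l ζ => _root_.pd1 i (H l ζ), fun l => (hH l).pd1 i, fun ζ hζ x hx u => ?_⟩
  have hd := (h ζ hζ x hx u).2
  change _root_.pd1 i (G ζ) x u = ∑ l, w l ζ * _root_.pd1 i (H l ζ) x u
  rw [pd1_eq_of_differentiableAt hd.differentiableAt, hd.fderiv, _root_.sum_apply]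
  refine Finset.sum_congr rfl fun l _ => ?_
  have hl := (hH l).hasFDerivAt (ne_of_mem_ball_of_mem_sphere hx hζ) u
  rw [pd1_eq_of_differentiableAt hl.differentiableAt, hl.fderiv]
  rfl

lemma pd2 (hG : WeightedKer w G) (i : Fin m) : WeightedKer w (fun ζ => pd2 i (G ζ)) := by
  obtain ⟨H, hH, h⟩ := hG.exists_hasFDerivAt
  refine ⟨fun l ζ => _root_.pd2 i (H l ζ), fun l => (hH l).pd2 i, fun ζ hζ x hx u => ?_⟩
  have hd := (h ζ hζ x hx u).2
  change _root_.pd2 i (G ζ) x u = ∑ l, w l ζ * _root_.pd2 i (H l ζ) x u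
  rw [pd2_eq_of_differentiableAt hd.differentiableAt, hd.fderiv, _root_.sum_apply]
  refine Finset.sum_congr rfl fun l _ => ?_
  have hl := (hH l).hasFDerivAt (ne_of_mem_ball_of_mem_sphere hx hζ) u
  rw [pd2_eq_of_differentiableAt hl.differentiableAt, hl.fderiv]
  rfl

lemma mapsTo_offDiag : Set.MapsTo (fun p : (Evec m × Evec m) × Evec m => p)
    ((ball (0 : Evec m) 1 ×ˢ Set.univ) ×ˢ sphere 0 1) {p | p.1.1 ≠ p.2} :=
  fun _ hp => ne_of_mem_ball_of_mem_sphere hp.1.1 hp.2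

lemma continuousOn (hG : WeightedKer w G)
    (hw : ∀ i, ContinuousOn (w i) (sphere (0 : Evec m) 1)) :
    ContinuousOn (fun p : (Evec m × Evec m) × Evec m => G p.2 p.1.1 p.1.2)
      ((ball (0 : Evec m) 1 ×ˢ Set.univ) ×ˢ sphere 0 1) := by
  obtain ⟨H, hH, h⟩ := hG
  have h1 : ContinuousOn (fun p : (Evec m × Evec m) × Evec m =>
      ∑ i, w i p.2 * H i p.2 p.1.1 p.1.2) ((ball (0 : Evec m) 1 ×ˢ Set.univ) ×ˢ sphere 0 1) :=
    continuousOn_finsetSum _ fun i _ =>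
      ((hw i).comp continuousOn_snd fun p hp => hp.2).mul
        ((hH i).continuousOn.mono mapsTo_offDiag)
  exact h1.congr fun p hp => h p.2 hp.2 p.1.1 hp.1.1 p.1.2

lemma continuousOn_fderiv (hG : WeightedKer w G)
    (hw : ∀ i, ContinuousOn (w i) (sphere (0 : Evec m) 1)) :
    ContinuousOn (fun p : (Evec m × Evec m) × Evec m =>
      fderiv ℝ (fun q : Evec m × Evec m => G p.2 q.1 q.2) p.1)
      ((ball (0 : Evec m) 1 ×ˢ Set.univ) ×ˢ sphere 0 1) := by
  obtain ⟨H, hH, h⟩ := hG.exists_hasFDerivAt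
  have h1 : ContinuousOn (fun p : (Evec m × Evec m) × Evec m =>
      ∑ i, w i p.2 • (fderiv ℝ
        (fun p : (Evec m × Evec m) × Evec m => H i p.2 p.1.1 p.1.2) p).comp
          (ContinuousLinearMap.inl ℝ (Evec m × Evec m) (Evec m)))
      ((ball (0 : Evec m) 1 ×ˢ Set.univ) ×ˢ sphere 0 1) :=
    continuousOn_finsetSum _ fun i _ =>
      ((hw i).comp continuousOn_snd fun p hp => hp.2).smul
        (((hH i).continuousOn_fderiv.continuousOn.mono mapsTo_offDiag).clm_comp continuousOn_const)
  exact h1.congr fun p hp => (h p.2 hp.2 p.1.1 hp.1.1 p.1.2).2.fderiv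

lemma integrable (hG : WeightedKer w G)
    (hw : ∀ i, ContinuousOn (w i) (sphere (0 : Evec m) 1)) {x : Evec m}
    (hx : x ∈ ball (0 : Evec m) 1) (u : Evec m) : Integrable (fun ζ => G ζ x u) (sphereM m) :=
  integrable_sphereM ((hG.continuousOn hw).comp (f := fun ζ => ((x, u), ζ))
    (by fun_prop) fun _ hζ => ⟨⟨hx, trivial⟩, hζ⟩)

lemma hasFDerivAt_integral (hG : WeightedKer w G)
    (hw : ∀ i, ContinuousOn (w i) (sphere (0 : Evec m) 1)) {x : Evec m}
    (hx : x ∈ ball (0 : Evec m) 1) (u : Evec m) :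
    HasFDerivAt (fun p : Evec m × Evec m => ∫ ζ, G ζ p.1 p.2 ∂sphereM m)
      (∫ ζ, fderiv ℝ (fun q : Evec m × Evec m => G ζ q.1 q.2) (x, u) ∂sphereM m) (x, u) := by
  have hU : IsOpen (ball (0 : Evec m) 1 ×ˢ (Set.univ : Set (Evec m))) :=
    isOpen_ball.prod isOpen_univ
  have hxu : (x, u) ∈ ball (0 : Evec m) 1 ×ˢ (Set.univ : Set (Evec m)) := ⟨hx, trivial⟩
  have hd : ∀ p ∈ ball (0 : Evec m) 1 ×ˢ (Set.univ : Set (Evec m)),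
      ∀ ζ ∈ sphere (0 : Evec m) 1, HasFDerivAt (fun p : Evec m × Evec m => G ζ p.1 p.2)
        (fderiv ℝ (fun q : Evec m × Evec m => G ζ q.1 q.2) p) p :=
    fun p hp ζ hζ => (hG.differentiableAt hζ hp.1 p.2).hasFDerivAt
  have h1 := hG.continuousOn hw
  have h2 := hG.continuousOn_fderiv hw
  exact hasFDerivAt_integral_sphereM (E := Evec m × Evec m) (F := ℝ) hU
    (G := fun p ζ => G ζ p.1 p.2)
    (G' := fun p ζ => fderiv ℝ (fun q : Evec m × Evec m => G ζ q.1 q.2) p) h1 h2 hd hxu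

lemma integrable_fderiv (hG : WeightedKer w G)
    (hw : ∀ i, ContinuousOn (w i) (sphere (0 : Evec m) 1)) {x : Evec m}
    (hx : x ∈ ball (0 : Evec m) 1) (u : Evec m) :
    Integrable (fun ζ => fderiv ℝ (fun q : Evec m × Evec m => G ζ q.1 q.2) (x, u)) (sphereM m) :=
  integrable_sphereM ((hG.continuousOn_fderiv hw).comp (f := fun ζ => ((x, u), ζ))
    (by fun_prop) fun _ hζ => ⟨⟨hx, trivial⟩, hζ⟩)

lemma pd1_integral (hG : WeightedKer w G)
    (hw : ∀ i, ContinuousOn (w i) (sphere (0 : Evec m) 1)) (i : Fin m) :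
    ∀ x ∈ ball (0 : Evec m) 1, ∀ u,
      _root_.pd1 i (fun x u => ∫ ζ, G ζ x u ∂sphereM m) x u =
        ∫ ζ, _root_.pd1 i (G ζ) x u ∂sphereM m := by
  intro x hx u
  have h := hG.hasFDerivAt_integral hw hx u
  rw [pd1_eq_of_differentiableAt h.differentiableAt, h.fderiv,
    ContinuousLinearMap.integral_apply (hG.integrable_fderiv hw hx u)]
  exact integral_sphereM_congr fun ζ hζ =>
    (pd1_eq_of_differentiableAt (hG.differentiableAt (by simpa using hζ) hx u) i).symm

lemma pd2_integral (hG : WeightedKer w G)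
    (hw : ∀ i, ContinuousOn (w i) (sphere (0 : Evec m) 1)) (i : Fin m) :
    ∀ x ∈ ball (0 : Evec m) 1, ∀ u,
      _root_.pd2 i (fun x u => ∫ ζ, G ζ x u ∂sphereM m) x u =
        ∫ ζ, _root_.pd2 i (G ζ) x u ∂sphereM m := by
  intro x hx u
  have h := hG.hasFDerivAt_integral hw hx u
  rw [pd2_eq_of_differentiableAt h.differentiableAt, h.fderiv,
    ContinuousLinearMap.integral_apply (hG.integrable_fderiv hw hx u)]
  exact integral_sphereM_congr fun ζ hζ =>
    (pd2_eq_of_differentiableAt (hG.differentiableAt (by simpa using hζ) hx u) i).symm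

/-- The bosonic Laplacian commutes with integration over the boundary. -/
lemma Dk_integral (hG : WeightedKer w G)
    (hw : ∀ i, ContinuousOn (w i) (sphere (0 : Evec m) 1)) {x : Evec m}
    (hx : x ∈ ball (0 : Evec m) 1) (u : Evec m) :
    Dk m k (fun x u => ∫ ζ, G ζ x u ∂sphereM m) x u = ∫ ζ, Dk m k (G ζ) x u ∂sphereM m := by
  have hB : IsOpen (ball (0 : Evec m) 1) := isOpen_ball
  have h11 : ∀ i, _root_.pd1 i (_root_.pd1 i (fun x u => ∫ ζ, G ζ x u ∂sphereM m)) x u =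
      ∫ ζ, _root_.pd1 i (_root_.pd1 i (G ζ)) x u ∂sphereM m := fun i => by
    rw [pd1_congr hB (hG.pd1_integral hw i) i x hx u, (hG.pd1 i).pd1_integral hw i x hx u]
  have h21 : ∀ j, ∀ x ∈ ball (0 : Evec m) 1, ∀ u,
      _root_.pd2 j (_root_.pd1 j (fun x u => ∫ ζ, G ζ x u ∂sphereM m)) x u =
      ∫ ζ, _root_.pd2 j (_root_.pd1 j (G ζ)) x u ∂sphereM m := fun j x hx u => by
    rw [pd2_congr (hG.pd1_integral hw j) j x hx u, (hG.pd1 j).pd2_integral hw j x hx u]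
  have h121 : ∀ i j, ∀ x ∈ ball (0 : Evec m) 1, ∀ u,
      _root_.pd1 i (_root_.pd2 j (_root_.pd1 j (fun x u => ∫ ζ, G ζ x u ∂sphereM m))) x u =
      ∫ ζ, _root_.pd1 i (_root_.pd2 j (_root_.pd1 j (G ζ))) x u ∂sphereM m := fun i j x hx u => by
    rw [pd1_congr hB (h21 j) i x hx u, ((hG.pd1 j).pd2 j).pd1_integral hw i x hx u]
  have h2121 : ∀ i j,
      _root_.pd2 i (_root_.pd1 i (_root_.pd2 j (_root_.pd1 j
        (fun x u => ∫ ζ, G ζ x u ∂sphereM m)))) x u =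
      ∫ ζ, _root_.pd2 i (_root_.pd1 i (_root_.pd2 j (_root_.pd1 j (G ζ)))) x u ∂sphereM m :=
    fun i j => by
      rw [pd2_congr (h121 i j) i x hx u, (((hG.pd1 j).pd2 j).pd1 i).pd2_integral hw i x hx u]
  have i1 : ∀ i, Integrable (fun ζ => _root_.pd1 i (_root_.pd1 i (G ζ)) x u) (sphereM m) :=
    fun i => ((hG.pd1 i).pd1 i).integrable hw hx u
  have i2 : ∀ i j, Integrable
      (fun ζ => u i * _root_.pd1 i (_root_.pd2 j (_root_.pd1 j (G ζ))) x u) (sphereM m) :=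
    fun i j => ((((hG.pd1 j).pd2 j).pd1 i).integrable hw hx u).const_mul _
  have i3 : ∀ i j, Integrable
      (fun ζ => _root_.pd2 i (_root_.pd1 i (_root_.pd2 j (_root_.pd1 j (G ζ)))) x u)
      (sphereM m) :=
    fun i j => ((((hG.pd1 j).pd2 j).pd1 i).pd2 i).integrable hw hx u
  have j1 := integrable_finsetSum Finset.univ fun i _ => i1 i
  have j2 := (integrable_finsetSum Finset.univ fun i _ =>
    integrable_finsetSum Finset.univ fun j _ => i2 i j).const_mul (4 / ((m : ℝ) + 2 * k - 2))
  have j3 := (integrable_finsetSum Finset.univ fun i _ =>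
    integrable_finsetSum Finset.univ fun j _ => i3 i j).const_mul
      (4 * ‖u‖ ^ 2 / (((m : ℝ) + 2 * k - 2) * ((m : ℝ) + 2 * k - 4)))
  have j12 : Integrable (fun ζ => (∑ i, _root_.pd1 i (_root_.pd1 i (G ζ)) x u) -
      4 / ((m : ℝ) + 2 * k - 2) * ∑ i, ∑ j,
        u i * _root_.pd1 i (_root_.pd2 j (_root_.pd1 j (G ζ))) x u) (sphereM m) := j1.sub j2
  unfold Dk
  rw [integral_add j12 j3, integral_sub j1 j2, integral_const_mul, integral_const_mul,
    integral_finsetSum _ fun i _ => i1 i,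
    integral_finsetSum _ fun i _ => integrable_finsetSum Finset.univ fun j _ => i2 i j,
    integral_finsetSum _ fun i _ => integrable_finsetSum Finset.univ fun j _ => i3 i j]
  simp only [h11, h2121, fun i j => h121 i j x hx u]
  congr 2
  · congr 1
    refine Finset.sum_congr rfl fun i _ => ?_
    rw [integral_finsetSum _ fun j _ => i2 i j]
    simp only [integral_const_mul]
  · refine Finset.sum_congr rfl fun i _ => ?_
    rw [integral_finsetSum _ fun j _ => i3 i j]

end WeightedKer

end BosonicPoisson

namespace BosonicPoisson

open scoped ContDiff

variable {m k : ℕ}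

/-! ### Reduction of the Poisson integral to a single integral -/

/-- The reflection `R_a` as a linear isometry. -/
def reflIso (a : Evec m) : Evec m ≃ₗᵢ[ℝ] Evec m :=
  (Submodule.reflection (Submodule.span ℝ {a})).trans (LinearIsometryEquiv.neg ℝ)

lemma reflIso_apply (a u : Evec m) : reflIso a u = reflv a u := by
  simp only [reflIso, LinearIsometryEquiv.trans_apply, LinearIsometryEquiv.coe_neg,
    Submodule.reflection_singleton_apply, reflv]
  rw [two_smul, ← add_smul, neg_sub]
  congr 2
  simp
  ring

lemma norm_reflv (a u : Evec m) : ‖reflv a u‖ = ‖u‖ := by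
  rw [← reflIso_apply, LinearIsometryEquiv.norm_map]

lemma reflv_reflv (a u : Evec m) : reflv a (reflv a u) = u := by
  simp [← reflIso_apply, reflIso, Submodule.reflection_reflection]

lemma kernel_reflv {Z : Evec m → Evec m → ℝ} (hZ : IsZk m k Z) (a u v : Evec m) :
    Z (reflv a u) v = Z u (reflv a v) := by
  have h := hZ.2.2.2.2 (reflIso a) u (reflv a v)
  rwa [reflIso_apply, reflIso_apply, reflv_reflv] at h

/-- The kernel `(1-|x|²)|x-ζ|^{-m} q(R_{x-ζ}(u))`. -/
def poissonKer (q : Evec m → ℝ) (ζ x u : Evec m) : ℝ :=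
  kerg (-1) ((-2 : ℝ) • ζ) (x - ζ) * q (reflv (x - ζ) u)

lemma kerg_sub {ζ : Evec m} (hζ : ‖ζ‖ = 1) (x : Evec m) :
    kerg (-1) ((-2 : ℝ) • ζ) (x - ζ) = (1 - ‖x‖ ^ 2) / ‖x - ζ‖ ^ m := by
  rw [kerg, invPow, div_eq_mul_inv]
  congr 1
  have h1 : ⟪ζ, ζ⟫ = (1 : ℝ) := by rw [real_inner_self_eq_norm_sq, hζ, one_pow]
  rw [← real_inner_self_eq_norm_sq x]
  simp only [inner_sub_left, inner_sub_right, inner_smul_left, real_inner_comm ζ x, h1]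
  simp
  ring

lemma smoothKer_poissonKer {q : Evec m → ℝ} (hq : ContDiff ℝ ∞ q) :
    SmoothKer (poissonKer q) := by
  intro p hp
  have hx : p.1.1 - p.2 ≠ 0 := sub_ne_zero.2 hp
  have h0 : ContDiffAt ℝ ∞ (fun p : (Evec m × Evec m) × Evec m => p.1.1 - p.2) p := by fun_prop
  have hu : ContDiffAt ℝ ∞ (fun p : (Evec m × Evec m) × Evec m => p.1.2) p := by fun_prop
  have hζ : ContDiffAt ℝ ∞ (fun p : (Evec m × Evec m) × Evec m => (-2 : ℝ) • p.2) p := by fun_prop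
  have h1 : ContDiffAt ℝ ∞ (fun p : (Evec m × Evec m) × Evec m => invSq (p.1.1 - p.2)) p :=
    ContDiffAt.comp (g := invSq) p (contDiffAt_invSq hx) h0
  have h2 : ContDiffAt ℝ ∞ (fun p : (Evec m × Evec m) × Evec m => invPow (p.1.1 - p.2)) p :=
    ContDiffAt.comp (g := invPow) p (contDiffAt_invPow hx) h0
  have h3 : ContDiffAt ℝ ∞
      (fun p : (Evec m × Evec m) × Evec m => reflv (p.1.1 - p.2) p.1.2) p := by
    simp only [reflv_eq]
    exact hu.sub (((contDiffAt_const.mul (h0.inner ℝ hu)).mul h1).smul h0)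
  exact ((((contDiffAt_const.mul (h0.inner ℝ h0)).add (hζ.inner ℝ h0)).mul h2).mul
    (hq.contDiffAt.comp p h3)).contDiffWithinAt

lemma inner_integral_PB {Z : Evec m → Evec m → ℝ} (hZ : IsZk m k Z) {q f : Evec m → ℝ}
    (hq : IsHk m k q) (hf : ∀ η ∈ closedBall (0 : Evec m) 1, f η = q η) {ζ : Evec m}
    (hζ : ‖ζ‖ = 1) (x ν : Evec m) :
    ∫ η, PB m k Z x ζ η ν * f η ∂sphereM m = cmk m k / 2 * poissonKer q ζ x ν := by
  have h : ∀ η : Evec m, ‖η‖ = 1 → PB m k Z x ζ η ν * f η =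
      cmk m k / 2 * ((1 - ‖x‖ ^ 2) / ‖x - ζ‖ ^ m) * (Z η (reflv (x - ζ) ν) * q η) := by
    intro η hη
    rw [PB, kernel_reflv hZ, hf η (by simp [hη])]
    ring
  rw [integral_sphereM_congr h, integral_const_mul, hZ.2.1 q hq, poissonKer, kerg_sub hζ]
  ring

lemma PBint_eq {Z : Evec m → Evec m → ℝ} (hZ : IsZk m k Z) {h : Evec m → Evec m → ℝ}
    (hH : ∀ ζ : Evec m, ‖ζ‖ = 1 → ∃ q, IsHk m k q ∧ ∀ η ∈ closedBall (0 : Evec m) 1, h ζ η = q η)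
    {n : ℕ} {v : Fin n → Evec m} {e : Fin n → Evec m → ℝ}
    (hv : ∀ i, v i ∈ closedBall (0 : Evec m) 1)
    (he : ∀ q, IsHk m k q → ∀ u, q u = ∑ i, q (v i) * e i u) :
    PBint m k Z h = fun x ν => ∫ ζ, ∑ i, (cmk m k / 2 * h ζ (v i)) * poissonKer (e i) ζ x ν
      ∂sphereM m := by
  funext x ν
  refine integral_sphereM_congr fun ζ hζ => ?_
  obtain ⟨q, hq, hhq⟩ := hH ζ hζ
  rw [inner_integral_PB hZ hq hhq hζ, poissonKer, he q hq, Finset.mul_sum, Finset.mul_sum]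
  refine Finset.sum_congr rfl fun i _ => ?_
  rw [hhq _ (hv i), poissonKer]
  ring

/-! ### The bosonic Laplacian of the Poisson integral -/

lemma pd1_translate (f : Evec m → Evec m → ℝ) (a : Evec m) (i : Fin m) :
    pd1 i (fun x u => f (x - a) u) = fun x u => pd1 i f (x - a) u := by
  funext x u
  simp only [pd1]
  rw [fderiv_comp_sub (f := fun x => f x u) a]

lemma pd2_translate (f : Evec m → Evec m → ℝ) (a : Evec m) (i : Fin m) :
    pd2 i (fun x u => f (x - a) u) = fun x u => pd2 i f (x - a) u := rfl

lemma Dk_translate (f : Evec m → Evec m → ℝ) (a x u : Evec m) :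
    Dk m k (fun x u => f (x - a) u) x u = Dk m k f (x - a) u := by
  simp only [Dk, pd1_translate, pd2_translate]

lemma Dk_poissonKer (hk : (m : ℝ) + 2 * k - 4 > 0) {q : Evec m → ℝ} (hq : IsHk m k q)
    {x ζ : Evec m} (hx : x ≠ ζ) (u : Evec m) : Dk m k (poissonKer q ζ) x u = 0 :=
  (Dk_translate (fun x u => kerg (-1) ((-2 : ℝ) • ζ) x * q (reflv x u)) ζ x u).trans
    (Dk_kerg hk (IsHk.harmHom hq) _ _ (sub_ne_zero.2 hx) u)

lemma sum_mul_poissonKer {ι : Type*} [Fintype ι] (c : ι → ℝ) (e : ι → Evec m → ℝ) (ζ : Evec m) :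
    (fun x u => ∑ i, c i * poissonKer (e i) ζ x u) =
      poissonKer (∑ i, c i • e i) ζ := by
  funext x u
  simp only [poissonKer, Finset.sum_apply, Pi.smul_apply, smul_eq_mul, Finset.mul_sum]
  exact Finset.sum_congr rfl fun i _ => by ring

lemma weightedKer_poissonKer {ι : Type*} [Fintype ι] (w : ι → Evec m → ℝ) {e : ι → Evec m → ℝ}
    (he : ∀ i, IsHk m k (e i)) :
    WeightedKer w (fun ζ x u => ∑ i, w i ζ * poissonKer (e i) ζ x u) :=
  ⟨fun i => poissonKer (e i), fun i => smoothKer_poissonKer (IsHk.contDiff (he i)),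
    fun _ _ _ _ _ => rfl⟩

lemma Dk_integral_poissonKer (hk : (m : ℝ) + 2 * k - 4 > 0) {ι : Type*} [Fintype ι]
    {w : ι → Evec m → ℝ} (hw : ∀ i, ContinuousOn (w i) (sphere (0 : Evec m) 1))
    {e : ι → Evec m → ℝ} (he : ∀ i, IsHk m k (e i)) {x : Evec m} (hx : ‖x‖ < 1) (u : Evec m) :
    Dk m k (fun x u => ∫ ζ, ∑ i, w i ζ * poissonKer (e i) ζ x u ∂sphereM m) x u = 0 := by
  have hx' : x ∈ ball (0 : Evec m) 1 := by simpa using hx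
  rw [(weightedKer_poissonKer w he).Dk_integral hw hx' u]
  refine (integral_sphereM_congr fun ζ hζ => ?_).trans (integral_zero _ ℝ)
  rw [sum_mul_poissonKer]
  refine Dk_poissonKer hk ?_ (ne_of_mem_ball_of_mem_sphere hx' (by simpa using hζ)) u
  exact (Hk m k).sum_mem fun i _ => (Hk m k).smul_mem _ (he i)

lemma continuousAt_integral_poissonKer {ι : Type*} [Fintype ι]
    {w : ι → Evec m → ℝ} (hw : ∀ i, ContinuousOn (w i) (sphere (0 : Evec m) 1))
    {e : ι → Evec m → ℝ} (he : ∀ i, IsHk m k (e i)) {x : Evec m} (hx : ‖x‖ < 1) (u : Evec m) :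
    ContinuousAt (fun x => ∫ ζ, ∑ i, w i ζ * poissonKer (e i) ζ x u ∂sphereM m) x := by
  have hx' : x ∈ ball (0 : Evec m) 1 := by simpa using hx
  exact ((weightedKer_poissonKer w he).hasFDerivAt_integral hw hx' u).continuousAt.comp
    (f := fun x => (x, u)) (by fun_prop)

end BosonicPoisson

namespace BosonicPoisson

open scoped ContDiff

variable {m k : ℕ}

/-! ### Boundary values of the Poisson integral -/

lemma omegaS_pos (hm : 0 < m) : 0 < omegaS m := by
  have : Nonempty (Fin m) := ⟨⟨0, hm⟩⟩
  rw [omegaS, sphereM, Measure.map_apply measurable_subtype_coe MeasurableSet.univ,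
    Set.preimage_univ]
  refine ENNReal.toReal_pos ?_ (measure_ne_top _ _)
  rw [Measure.toSphere_apply_univ]
  refine mul_ne_zero (by simpa using hm.ne') (measure_ball_pos _ _ one_pos).ne'

lemma integral_poisson (hm : 0 < m) {x : Evec m} (hx : ‖x‖ < 1) :
    ∫ ζ, (1 - ‖x‖ ^ 2) / ‖x - ζ‖ ^ m ∂sphereM m = omegaS m := by
  have h := integral_poisson_even (F := fun _ : Evec m => (1 : ℝ)) hm
    ⟨fun _ _ => contDiffAt_const, fun _ _ _ => rfl⟩ (fun _ => rfl) hx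
  simpa [omegaS, Measure.real] using h

lemma integral_poissonKer (hm : 3 ≤ m) {q : Evec m → ℝ} (hq : IsHk m k q) {x : Evec m}
    (hx : ‖x‖ < 1) (ν : Evec m) :
    cmk m k / 2 * ∫ ζ, poissonKer q ζ x ν ∂sphereM m = q ν := by
  have hm' : (3 : ℝ) ≤ m := by exact_mod_cast hm
  have hk0 : (0 : ℝ) ≤ k := k.cast_nonneg
  have h := integral_poisson_even (F := fun a => q (reflv a ν)) (by lia)
    ⟨fun a ha => contDiffAt_comp_reflv (IsHk.contDiff hq) ha ν,
      fun t ht a => by rw [reflv_smul ht.ne']⟩ (fun a => by rw [reflv_neg]) hx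
  rw [integral_comp_reflv hm k q (IsHk.harmHom hq) ν] at h
  rw [integral_sphereM_congr fun ζ hζ => by rw [poissonKer, kerg_sub hζ], h, cmk]
  have h1 := (omegaS_pos (m := m) (by lia)).ne'
  have h2 : (m : ℝ) - 2 ≠ 0 := by linarith
  have h3 : (m : ℝ) + 2 * k - 2 ≠ 0 := by linarith
  field_simp

lemma tendstoUniformlyOn_poisson {ζ₀ : Evec m} (hζ₀ : ‖ζ₀‖ = 1) {U : Set (Evec m)}
    (hU : IsOpen U) (h0 : ζ₀ ∈ U) :
    TendstoUniformlyOn (fun x ζ : Evec m => (1 - ‖x‖ ^ 2) / ‖x - ζ‖ ^ m) 0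
      (𝓝[ball (0 : Evec m) 1] ζ₀) (sphere 0 1 \ U) := by
  obtain ⟨r, hr, hrU⟩ := Metric.isOpen_iff.1 hU ζ₀ h0
  have hlim : Tendsto (fun x : Evec m => (1 - ‖x‖ ^ 2) / (r / 2) ^ m)
      (𝓝[ball (0 : Evec m) 1] ζ₀) (𝓝 0) := by
    have hc : Continuous (fun x : Evec m => (1 - ‖x‖ ^ 2) / (r / 2) ^ m) := by fun_prop
    have := (hc.tendsto ζ₀).mono_left (nhdsWithin_le_nhds (s := ball (0 : Evec m) 1))
    simpa [hζ₀] using this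
  rw [Metric.tendstoUniformlyOn_iff]
  intro ε hε
  filter_upwards [hlim.eventually (gt_mem_nhds hε), self_mem_nhdsWithin,
    nhdsWithin_le_nhds (ball_mem_nhds ζ₀ (half_pos hr))] with x hx1 hx2 hx3 ζ hζ
  have hx : ‖x‖ < 1 := by simpa using hx2
  have hnum : 0 ≤ 1 - ‖x‖ ^ 2 := by nlinarith [norm_nonneg x]
  have hfar : r ≤ dist ζ ζ₀ := by
    by_contra hlt
    exact hζ.2 (hrU (by simpa using not_le.1 hlt))
  have hd : r / 2 ≤ ‖x - ζ‖ := by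
    rw [← dist_eq_norm]
    have := dist_triangle ζ x ζ₀
    rw [mem_ball] at hx3
    rw [dist_comm ζ x] at this
    linarith
  have hle : (1 - ‖x‖ ^ 2) / ‖x - ζ‖ ^ m ≤ (1 - ‖x‖ ^ 2) / (r / 2) ^ m := by gcongr
  rw [Pi.zero_apply, dist_zero_left, Real.norm_of_nonneg (by positivity)]
  exact hle.trans_lt hx1

lemma continuousOn_poisson {x : Evec m} (hx : ‖x‖ < 1) :
    ContinuousOn (fun ζ : Evec m => (1 - ‖x‖ ^ 2) / ‖x - ζ‖ ^ m) (sphere 0 1) := by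
  refine ContinuousOn.div (by fun_prop) (by fun_prop) fun ζ hζ => pow_ne_zero _ ?_
  exact norm_ne_zero_iff.2 (sub_ne_zero.2 (ne_of_mem_ball_of_mem_sphere (by simpa using hx) hζ))

lemma tendsto_integral_poisson (hm : 0 < m) {ζ₀ : Evec m} (hζ₀ : ‖ζ₀‖ = 1) {g : Evec m → ℝ}
    (hg : ContinuousOn g (sphere 0 1)) :
    Tendsto (fun x => ∫ ζ, (1 - ‖x‖ ^ 2) / ‖x - ζ‖ ^ m * g ζ ∂sphereM m)
      (𝓝[ball (0 : Evec m) 1] ζ₀) (𝓝 (omegaS m * g ζ₀)) := by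
  have hω := (omegaS_pos hm).ne'
  have hs : MeasurableSet (sphere (0 : Evec m) 1) := isClosed_sphere.measurableSet
  have hball : ∀ᶠ x in 𝓝[ball (0 : Evec m) 1] ζ₀, ‖x‖ < 1 := by
    filter_upwards [self_mem_nhdsWithin] with x hx using by simpa using hx
  have h := tendsto_setIntegral_peak_smul_of_integrableOn_of_tendsto (μ := sphereM m)
    (s := sphere (0 : Evec m) 1) (t := sphere (0 : Evec m) 1) (x₀ := ζ₀) (g := g) (a := g ζ₀)
    (φ := fun x ζ => (omegaS m)⁻¹ * ((1 - ‖x‖ ^ 2) / ‖x - ζ‖ ^ m))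
    (l := 𝓝[ball (0 : Evec m) 1] ζ₀) hs hs subset_rfl self_mem_nhdsWithin (measure_ne_top _ _)
    (by
      filter_upwards [hball] with x hx ζ _
      have : 0 ≤ 1 - ‖x‖ ^ 2 := by nlinarith [norm_nonneg x]
      have := (omegaS_pos hm).le
      positivity)
    (fun U hU h0 => by
      have h1 := tendstoUniformlyOn_poisson hζ₀ hU h0
      have h2 := (uniformContinuous_const_smul ((omegaS m)⁻¹ : ℝ)).comp_tendstoUniformlyOn h1
      have h3 : ((fun b : ℝ => (omegaS m)⁻¹ • b) ∘ (0 : Evec m → ℝ)) = 0 := by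
        funext; simp
      rwa [h3] at h2)
    (by
      rw [sphereM_restrict]
      refine tendsto_const_nhds.congr' ?_
      filter_upwards [hball] with x hx
      rw [integral_const_mul, integral_poisson hm hx, inv_mul_cancel₀ hω])
    (by
      filter_upwards [hball] with x hx
      rw [sphereM_restrict]
      exact (integrable_sphereM
        ((continuousOn_poisson hx).const_smul (omegaS m)⁻¹)).aestronglyMeasurable)
    (by
      rw [IntegrableOn, sphereM_restrict]
      exact integrable_sphereM hg)
    (hg ζ₀ (by simpa using hζ₀))
  have h' := h.const_mul (omegaS m)
  refine h'.congr fun x => ?_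
  rw [sphereM_restrict, ← integral_const_mul]
  refine integral_congr_ae (.of_forall fun ζ => ?_)
  simp only [smul_eq_mul]
  field_simp

lemma integrable_mul_poissonKer {q : Evec m → ℝ} (hq : IsHk m k q) {x : Evec m} (hx : ‖x‖ < 1)
    (ν : Evec m) {g : Evec m → ℝ} (hg : ContinuousOn g (sphere 0 1)) :
    Integrable (fun ζ => g ζ * poissonKer q ζ x ν) (sphereM m) := by
  have := (weightedKer_poissonKer (fun _ : Fin 1 => g) (fun _ => hq)).integrable
    (fun _ => hg) (x := x) (by simpa using hx) ν
  simpa using this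

lemma tendsto_integral_mul_poissonKer_of_eq_zero (hm : 0 < m) {q : Evec m → ℝ}
    (hq : IsHk m k q) {ζ₀ ν : Evec m} (hζ₀ : ‖ζ₀‖ = 1) (hν : ‖ν‖ ≤ 1) {g : Evec m → ℝ}
    (hg : ContinuousOn g (sphere 0 1)) (hg0 : g ζ₀ = 0) :
    Tendsto (fun x => ∫ ζ, g ζ * poissonKer q ζ x ν ∂sphereM m)
      (𝓝[ball (0 : Evec m) 1] ζ₀) (𝓝 0) := by
  obtain ⟨B, hB⟩ := (isCompact_closedBall (0 : Evec m) 1).exists_bound_of_continuousOn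
    (IsHk.contDiff hq).continuous.continuousOn
  have hlim := (tendsto_integral_poisson hm hζ₀ hg.abs).const_mul B
  rw [hg0, abs_zero, mul_zero, mul_zero] at hlim
  refine squeeze_zero_norm' ?_ hlim
  filter_upwards [self_mem_nhdsWithin] with x hx2
  have hx : ‖x‖ < 1 := by simpa using hx2
  have hnum : 0 ≤ 1 - ‖x‖ ^ 2 := by nlinarith [norm_nonneg x]
  rw [← integral_const_mul]
  refine (norm_integral_le_integral_norm _).trans (integral_mono_ae
    (integrable_mul_poissonKer hq hx ν hg).norm
    ((integrable_sphereM ((continuousOn_poisson hx).mul hg.abs)).const_mul B) ?_)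
  filter_upwards [ae_sphereM] with ζ hζ
  have hq' : ‖q (reflv (x - ζ) ν)‖ ≤ B := hB _ (by simpa [norm_reflv] using hν)
  have hP : 0 ≤ (1 - ‖x‖ ^ 2) / ‖x - ζ‖ ^ m := by positivity
  rw [poissonKer, kerg_sub hζ, norm_mul, norm_mul, Real.norm_of_nonneg hP, Real.norm_eq_abs (g ζ)]
  calc |g ζ| * ((1 - ‖x‖ ^ 2) / ‖x - ζ‖ ^ m * ‖q (reflv (x - ζ) ν)‖)
      ≤ |g ζ| * ((1 - ‖x‖ ^ 2) / ‖x - ζ‖ ^ m * B) := by gcongr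
    _ = B * ((1 - ‖x‖ ^ 2) / ‖x - ζ‖ ^ m * |g ζ|) := by ring

lemma tendsto_integral_mul_poissonKer (hm : 3 ≤ m) {q : Evec m → ℝ}
    (hq : IsHk m k q) {ζ₀ ν : Evec m} (hζ₀ : ‖ζ₀‖ = 1) (hν : ‖ν‖ ≤ 1) {g : Evec m → ℝ}
    (hg : ContinuousOn g (sphere 0 1)) :
    Tendsto (fun x => ∫ ζ, (cmk m k / 2 * g ζ) * poissonKer q ζ x ν ∂sphereM m)
      (𝓝[ball (0 : Evec m) 1] ζ₀) (𝓝 (g ζ₀ * q ν)) := by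
  have hg' : ContinuousOn (fun ζ => cmk m k / 2 * (g ζ - g ζ₀)) (sphere 0 1) := by fun_prop
  have h := (tendsto_integral_mul_poissonKer_of_eq_zero (m := m) (by lia) hq hζ₀ hν hg'
    (by simp)).add_const (g ζ₀ * q ν)
  rw [zero_add] at h
  refine h.congr' ?_
  filter_upwards [self_mem_nhdsWithin] with x hx2
  have hx : ‖x‖ < 1 := by simpa using hx2
  have hc : ContinuousOn (fun _ : Evec m => cmk m k / 2 * g ζ₀) (sphere 0 1) := continuousOn_const
  have hsum : g ζ₀ * q ν = ∫ ζ, (cmk m k / 2 * g ζ₀) * poissonKer q ζ x ν ∂sphereM m := by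
    rw [integral_const_mul, ← integral_poissonKer hm hq hx ν]
    ring
  rw [hsum, ← integral_add (integrable_mul_poissonKer hq hx ν hg')
    (integrable_mul_poissonKer hq hx ν hc)]
  refine integral_congr_ae (.of_forall fun ζ => ?_)
  simp only
  ring

end BosonicPoisson

/-- Dirichlet problem in the unit ball with continuous data:
`𝒟_k P_B[h] = 0`, boundary limits, and continuity up to the boundary. -/
theorem stmt_7 (m k : ℕ) (hm : 3 ≤ m) (hk : 1 ≤ k)
    (Z : Evec m → Evec m → ℝ) (hZ : IsZk m k Z)
    (h : Evec m → Evec m → ℝ)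
    (hc : ContinuousOn (fun q : Evec m × Evec m => h q.1 q.2)
      (sphere (0 : Evec m) 1 ×ˢ closedBall (0 : Evec m) 1))
    (hH : ∀ ζ : Evec m, ‖ζ‖ = 1 → ∃ q, IsHk m k q ∧
      ∀ ω ∈ closedBall (0 : Evec m) 1, h ζ ω = q ω) :
    (∀ x ν : Evec m, ‖x‖ < 1 → ‖ν‖ < 1 → Dk m k (PBint m k Z h) x ν = 0) ∧
    (∀ ζ₀ : Evec m, ‖ζ₀‖ = 1 → ∀ ν : Evec m, ‖ν‖ < 1 →
      Tendsto (fun x => PBint m k Z h x ν) (𝓝[ball (0 : Evec m) 1] ζ₀) (𝓝 (h ζ₀ ν))) ∧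
    (∀ ν : Evec m, ‖ν‖ < 1 →
      ContinuousOn (fun x => if ‖x‖ < 1 then PBint m k Z h x ν else h x ν)
        (closedBall (0 : Evec m) 1)) := by
  obtain ⟨n, v, e, hv, he, hi⟩ := BosonicPoisson.exists_interpolation m k
  have hcv : ∀ ν ∈ closedBall (0 : Evec m) 1,
      ContinuousOn (fun ζ => h ζ ν) (sphere (0 : Evec m) 1) := fun ν hν =>
    hc.comp (f := fun ζ => (ζ, ν)) (by fun_prop) fun ζ hζ => ⟨hζ, hν⟩
  have hw : ∀ i, ContinuousOn (fun ζ => cmk m k / 2 * h ζ (v i)) (sphere (0 : Evec m) 1) :=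
    fun i => continuousOn_const.mul (hcv _ (hv i))
  have hP := BosonicPoisson.PBint_eq hZ hH hv hi
  have hlim : ∀ ζ₀ : Evec m, ‖ζ₀‖ = 1 → ∀ ν : Evec m, ‖ν‖ < 1 →
      Tendsto (fun x => PBint m k Z h x ν) (𝓝[ball (0 : Evec m) 1] ζ₀) (𝓝 (h ζ₀ ν)) := by
    intro ζ₀ hζ₀ ν hν
    obtain ⟨q, hq, hhq⟩ := hH ζ₀ hζ₀
    have h0 : h ζ₀ ν = ∑ i, h ζ₀ (v i) * e i ν := by
      rw [hhq ν (by simpa using hν.le), hi q hq ν]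
      exact Finset.sum_congr rfl fun i _ => by rw [hhq _ (hv i)]
    rw [h0]
    refine (tendsto_finsetSum Finset.univ fun i _ =>
      BosonicPoisson.tendsto_integral_mul_poissonKer hm (he i) hζ₀ hν.le
        (hcv _ (hv i))).congr' ?_
    filter_upwards [self_mem_nhdsWithin] with x hx
    rw [hP]
    exact (integral_finsetSum _ fun i _ =>
      BosonicPoisson.integrable_mul_poissonKer (he i) (by simpa using hx) ν (hw i)).symm
  refine ⟨fun x ν hx _ => ?_, hlim, fun ν hν x hx => ?_⟩
  · have hm' : (3 : ℝ) ≤ m := by exact_mod_cast hm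
    have hk' : (1 : ℝ) ≤ k := by exact_mod_cast hk
    rw [hP]
    exact BosonicPoisson.Dk_integral_poissonKer (by linarith) hw he hx ν
  · rcases (mem_closedBall_zero_iff.1 hx).lt_or_eq with hx1 | hx1
    · have hcx : ContinuousAt (fun x => PBint m k Z h x ν) x := by
        rw [hP]
        exact BosonicPoisson.continuousAt_integral_poissonKer hw he hx1 ν
      refine (hcx.congr ?_).continuousWithinAt
      filter_upwards [isOpen_ball.mem_nhds (mem_ball_zero_iff.2 hx1)] with y hy
      rw [if_pos (mem_ball_zero_iff.1 hy)]
    · rw [ContinuousWithinAt, if_neg hx1.not_lt, ← ball_union_sphere, nhdsWithin_union]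
      refine Tendsto.sup ((hlim x hx1 ν hν).congr' ?_)
        ((hcv ν (by simpa using hν.le) x (by simpa using hx1)).congr' ?_)
      · filter_upwards [self_mem_nhdsWithin] with y hy
        rw [if_pos (mem_ball_zero_iff.1 hy)]
      · filter_upwards [self_mem_nhdsWithin] with y hy
        rw [if_neg (mem_sphere_zero_iff_norm.1 hy).not_lt]
end
end

section
/- Let h : 𝕊^{m-1} × ℝ^m → ℝ be continuous on 𝕊^{m-1} × (closed unit ball), such that for each ζ ∈ 𝕊^{m-1} the function ω ↦ h(ζ,ω) coincides on the closed unit ball with an element of ℋ_k. Then there exists a constant a′_{m,k} > 0 depending only on m and k such that sup_{𝔹^m × 𝔹^m} |P_B[h]| ≤ a′_{m,k} · sup_{𝕊^{m-1} × 𝔹^m} |h|. -/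
noncomputable section

open MeasureTheory Metric Filter Topology
open scoped RealInnerProductSpace

/-- Integration in polar coordinates for nonnegative functions. -/
theorem lintegral_eq_lintegral_toSphere_volumeIoiPow {E : Type*} [NormedAddCommGroup E]
    [NormedSpace ℝ E] [FiniteDimensional ℝ E] [Nontrivial E] [MeasurableSpace E] [BorelSpace E]
    (μ : Measure E) [μ.IsAddHaarMeasure] {f : E → ENNReal} (hf : Measurable f) :
    ∫⁻ y, f y ∂μ = ∫⁻ ζ : sphere (0 : E) 1, ∫⁻ r : Set.Ioi (0 : ℝ), f (r.1 • ζ.1)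
      ∂(Measure.volumeIoiPow (Module.finrank ℝ E - 1)) ∂μ.toSphere := by
  have hg : Measurable fun p : sphere (0 : E) 1 × Set.Ioi (0 : ℝ) => f (p.2.1 • p.1.1) :=
    hf.comp (by fun_prop)
  rw [← lintegral_prod _ hg.aemeasurable,
    ← μ.measurePreserving_homeomorphUnitSphereProd.lintegral_comp hg,
    ← setLIntegral_univ f, ← setLIntegral_congr (MeasureTheory.compl_mem_ae_iff.2
      (measure_singleton 0) |> eventuallyEq_univ.2),
    ← lintegral_subtype_comap (measurableSet_singleton _).compl]
  refine lintegral_congr fun y => ?_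
  have hy : ‖y.1‖ ≠ 0 := norm_ne_zero_iff.2 y.2
  simp [smul_smul, hy]

/-- Lower bound for an integral against `volumeIoiPow` over an interval starting at `1`. -/
theorem mul_ofReal_le_lintegral_volumeIoiPow (n : ℕ) {ρ : ℝ} {c : ENNReal} {g : ℝ → ENNReal}
    (hg : Measurable g) (hc : ∀ r ∈ Set.Ioc 1 (1 + ρ), c ≤ g r) :
    c * ENNReal.ofReal ρ ≤ ∫⁻ r : Set.Ioi (0 : ℝ), g r ∂(Measure.volumeIoiPow n) := by
  rw [Measure.volumeIoiPow, lintegral_withDensity_eq_lintegral_mul _ (by fun_prop)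
    (g := fun r : Set.Ioi (0 : ℝ) => g r) (hg.comp measurable_subtype_coe)]
  simp only [Pi.mul_apply]
  rw [lintegral_subtype_comap measurableSet_Ioi fun r => ENNReal.ofReal (r ^ n) * g r]
  calc c * ENNReal.ofReal ρ = ∫⁻ _ in Set.Ioc 1 (1 + ρ), c := by simp
    _ ≤ ∫⁻ r in Set.Ioc 1 (1 + ρ), ENNReal.ofReal (r ^ n) * g r := by
      refine setLIntegral_mono' measurableSet_Ioc fun r hr => ?_
      have h1 : (1 : ENNReal) ≤ ENNReal.ofReal (r ^ n) := by
        rw [ENNReal.one_le_ofReal]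
        exact one_le_pow₀ hr.1.le
      simpa using mul_le_mul' h1 (hc r hr)
    _ ≤ _ := lintegral_mono_set fun r hr => Set.mem_Ioi.2 (zero_lt_one.trans hr.1)

/-- Scaling of the integral of `(δ + ‖z‖)⁻¹ ^ (m + 1)` over `ℝ^m`. -/
theorem lintegral_inv_add_norm_pow (m : ℕ) {δ : ℝ} (hδ : 0 < δ) :
    ∫⁻ z : Evec m, ENNReal.ofReal ((δ + ‖z‖) ^ (m + 1))⁻¹ =
      ENNReal.ofReal (δ⁻¹ * ∫ z : Evec m, ((1 + ‖z‖) ^ (m + 1))⁻¹) := by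
  have hscale : ∀ z : Evec m, ((δ + ‖z‖) ^ (m + 1))⁻¹ =
      (δ ^ (m + 1))⁻¹ * ((1 + ‖δ⁻¹ • z‖) ^ (m + 1))⁻¹ := by
    intro z
    rw [norm_smul, Real.norm_of_nonneg (inv_nonneg.2 hδ.le), ← mul_inv, ← mul_pow]
    congr 2
    field_simp
  have hint : Integrable fun z : Evec m => ((1 + ‖z‖) ^ (m + 1))⁻¹ := by
    have := integrable_one_add_norm (E := Evec m) (μ := volume) (r := ((m + 1 : ℕ) : ℝ))
      (by simp)
    refine this.congr (Eventually.of_forall fun z => ?_)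
    dsimp only
    rw [Real.rpow_neg (by positivity), Real.rpow_natCast]
  simp_rw [hscale]
  rw [← ofReal_integral_eq_lintegral_ofReal
    ((hint.comp_smul (inv_ne_zero hδ.ne')).const_mul _)
    (Eventually.of_forall fun z => by positivity), integral_const_mul,
    Measure.integral_comp_inv_smul_of_nonneg volume
      (fun z : Evec m => ((1 + ‖z‖) ^ (m + 1))⁻¹) hδ.le]
  congr 1
  rw [finrank_euclideanSpace_fin, smul_eq_mul, pow_succ]
  field_simp

/-- The classical Poisson kernel of the unit ball is bounded in `L¹` of the sphere, uniformly
in the point of the ball. -/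
theorem lintegral_poisson_le (m : ℕ) (hm : m ≠ 0) {x : Evec m} (hx : ‖x‖ < 1) :
    ∫⁻ ζ, ENNReal.ofReal ((1 - ‖x‖ ^ 2) / ‖x - ζ‖ ^ m) ∂(sphereM m) ≤
      ENNReal.ofReal (2 * 3 ^ (m + 1) * ∫ z : Evec m, ((1 + ‖z‖) ^ (m + 1))⁻¹) := by
  have : NeZero m := ⟨hm⟩
  set K := ∫ z : Evec m, ((1 + ‖z‖) ^ (m + 1))⁻¹
  set δ := 1 - ‖x‖ with hδ_def
  have hδ : 0 < δ := sub_pos.2 hx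
  set f : Evec m → ENNReal := fun z => ENNReal.ofReal ((δ + ‖z‖) ^ (m + 1))⁻¹ with hf_def
  have hf : Measurable f := by fun_prop
  have hpoint : ∀ ζ : sphere (0 : Evec m) 1,
      ENNReal.ofReal ((1 - ‖x‖ ^ 2) / ‖x - ζ.1‖ ^ m) ≤
        ENNReal.ofReal (2 * 3 ^ (m + 1) * δ) * ∫⁻ r : Set.Ioi (0 : ℝ), f (x - r.1 • ζ.1)
          ∂(Measure.volumeIoiPow (Module.finrank ℝ (Evec m) - 1)) := by
    intro ζ
    have hζ : ‖ζ.1‖ = 1 := norm_eq_of_mem_sphere ζ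
    set ρ := ‖x - ζ.1‖ with hρ_def
    have hδρ : δ ≤ ρ := by
      have := norm_sub_norm_le ζ.1 x
      rw [norm_sub_rev, hζ] at this
      exact this
    have hρ : 0 < ρ := hδ.trans_le hδρ
    have hlow := mul_ofReal_le_lintegral_volumeIoiPow (Module.finrank ℝ (Evec m) - 1)
      (ρ := ρ) (c := ENNReal.ofReal ((3 * ρ) ^ (m + 1))⁻¹) (g := fun r => f (x - r • ζ.1))
      (hf.comp (by fun_prop)) (by
        intro r hr
        have hnorm : ‖x - r • ζ.1‖ ≤ ρ + (r - 1) := by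
          have h1 : x - r • ζ.1 = (x - ζ.1) - (r - 1) • ζ.1 := by
            rw [sub_smul, one_smul]; abel
          rw [h1]
          refine (norm_sub_le _ _).trans_eq ?_
          rw [norm_smul, hζ, mul_one, Real.norm_of_nonneg (sub_nonneg.2 hr.1.le)]
        have hr2 := hr.2
        refine ENNReal.ofReal_le_ofReal ?_
        gcongr
        linarith)
    refine le_trans ?_ (mul_le_mul_right hlow _)
    rw [← ENNReal.ofReal_mul (by positivity), ← ENNReal.ofReal_mul (by positivity)]
    refine ENNReal.ofReal_le_ofReal ?_
    have h2 : 2 * 3 ^ (m + 1) * δ * (((3 * ρ) ^ (m + 1))⁻¹ * ρ) = 2 * δ / ρ ^ m := by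
      rw [mul_pow, pow_succ ρ]
      field_simp
    rw [h2]
    gcongr
    nlinarith [norm_nonneg x]
  calc ∫⁻ ζ, ENNReal.ofReal ((1 - ‖x‖ ^ 2) / ‖x - ζ‖ ^ m) ∂(sphereM m)
      = ∫⁻ ζ : sphere (0 : Evec m) 1, ENNReal.ofReal ((1 - ‖x‖ ^ 2) / ‖x - ζ.1‖ ^ m)
          ∂(volume : Measure (Evec m)).toSphere :=
        lintegral_map (by fun_prop) measurable_subtype_coe
    _ ≤ ENNReal.ofReal (2 * 3 ^ (m + 1) * δ) * ∫⁻ y, f (x - y) := by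
      rw [lintegral_eq_lintegral_toSphere_volumeIoiPow volume
          (f := fun y => f (x - y)) (hf.comp (by fun_prop)),
        ← lintegral_const_mul' _ _ ENNReal.ofReal_ne_top]
      exact lintegral_mono hpoint
    _ = ENNReal.ofReal (2 * 3 ^ (m + 1) * K) := by
      rw [lintegral_sub_left_eq_self, hf_def, lintegral_inv_add_norm_pow m hδ,
        ← ENNReal.ofReal_mul (by positivity)]
      rw [mul_assoc _ δ, mul_inv_cancel_left₀ hδ.ne']

theorem norm_reflv {m : ℕ} (a u : Evec m) : ‖reflv a u‖ = ‖u‖ := by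
  rcases eq_or_ne a 0 with rfl | ha
  · simp [reflv]
  have hna : ‖a‖ ≠ 0 := norm_ne_zero_iff.2 ha
  rw [← sq_eq_sq₀ (norm_nonneg _) (norm_nonneg _), reflv, norm_sub_sq_real, norm_smul,
    inner_smul_right, real_inner_comm, mul_pow, Real.norm_eq_abs, sq_abs]
  field_simp
  ring

instance isFiniteMeasure_sphereM (m : ℕ) : IsFiniteMeasure (sphereM m) :=
  inferInstanceAs (IsFiniteMeasure (Measure.map _ _))

theorem ae_sphereM_norm_eq_one (m : ℕ) : ∀ᵐ ζ ∂(sphereM m), ‖ζ‖ = 1 := by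
  rw [sphereM, ae_map_iff measurable_subtype_coe.aemeasurable
    (measurableSet_eq_fun (by fun_prop) (by fun_prop))]
  exact Eventually.of_forall fun ζ => norm_eq_of_mem_sphere ζ

/-- sup-norm bound for the unit-ball Poisson integral, with a constant
depending only on `m` and `k`. -/
theorem stmt_8 (m k : ℕ) (hm : 3 ≤ m) (hk : 1 ≤ k)
    (Z : Evec m → Evec m → ℝ) (hZ : IsZk m k Z) :
    ∃ a : ℝ, 0 < a ∧
      ∀ h : Evec m → Evec m → ℝ,
        ContinuousOn (fun q : Evec m × Evec m => h q.1 q.2)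
          (sphere (0 : Evec m) 1 ×ˢ closedBall (0 : Evec m) 1) →
        (∀ ζ : Evec m, ‖ζ‖ = 1 → ∃ q, IsHk m k q ∧
          ∀ ω ∈ closedBall (0 : Evec m) 1, h ζ ω = q ω) →
        ∀ M : ℝ, (∀ ζ ω : Evec m, ‖ζ‖ = 1 → ‖ω‖ ≤ 1 → |h ζ ω| ≤ M) →
          ∀ x ν : Evec m, ‖x‖ < 1 → ‖ν‖ < 1 → |PBint m k Z h x ν| ≤ a * M := by
  have hm0 : m ≠ 0 := by lia
  have : NeZero m := ⟨hm0⟩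
  set K := ∫ z : Evec m, ((1 + ‖z‖) ^ (m + 1))⁻¹ with hK_def
  have hK : 0 ≤ K := integral_nonneg fun z => by positivity
  set B := |cmk m k / 2| * hdim m k * (sphereM m).real Set.univ with hB_def
  have hB : 0 ≤ B := by positivity
  refine ⟨B * (2 * 3 ^ (m + 1) * K) + 1, by positivity, ?_⟩
  intro h _ _ M hM x ν hx hν
  have hM0 : 0 ≤ M := by
    obtain ⟨e, he⟩ := exists_norm_eq (Evec m) zero_le_one
    exact (abs_nonneg _).trans (hM e 0 he (by simp))
  have hker : 0 ≤ 1 - ‖x‖ ^ 2 := by nlinarith [norm_nonneg x]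
  have hinner : ∀ ζ : Evec m, ‖ζ‖ = 1 →
      ‖∫ ω, PB m k Z x ζ ω ν * h ζ ω ∂(sphereM m)‖ ≤
        B * M * ((1 - ‖x‖ ^ 2) / ‖x - ζ‖ ^ m) := by
    intro ζ hζ
    refine (norm_integral_le_of_norm_le_const
      (C := |cmk m k / 2| * ((1 - ‖x‖ ^ 2) / ‖x - ζ‖ ^ m) * hdim m k * M) ?_).trans_eq ?_
    · filter_upwards [ae_sphereM_norm_eq_one m] with ω hω
      rw [PB, Real.norm_eq_abs, abs_mul, abs_mul, abs_mul,
        abs_of_nonneg (div_nonneg hker (by positivity))]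
      gcongr
      · exact hZ.2.2.2.1 _ _ ((norm_reflv _ _).trans hω).le hν.le
      · exact hM ζ ω hζ hω.le
    · rw [hB_def]; ring
  have hmain : ‖PBint m k Z h x ν‖ₑ ≤ ENNReal.ofReal (B * M * (2 * 3 ^ (m + 1) * K)) := by
    calc ‖PBint m k Z h x ν‖ₑ
        ≤ ∫⁻ ζ, ‖∫ ω, PB m k Z x ζ ω ν * h ζ ω ∂(sphereM m)‖ₑ ∂(sphereM m) :=
          enorm_integral_le_lintegral_enorm _
      _ ≤ ∫⁻ ζ, ENNReal.ofReal (B * M) * ENNReal.ofReal ((1 - ‖x‖ ^ 2) / ‖x - ζ‖ ^ m)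
            ∂(sphereM m) := by
          refine lintegral_mono_ae ?_
          filter_upwards [ae_sphereM_norm_eq_one m] with ζ hζ
          rw [← ofReal_norm, ← ENNReal.ofReal_mul (by positivity)]
          exact ENNReal.ofReal_le_ofReal (hinner ζ hζ)
      _ ≤ ENNReal.ofReal (B * M * (2 * 3 ^ (m + 1) * K)) := by
          rw [lintegral_const_mul' _ _ ENNReal.ofReal_ne_top,
            ENNReal.ofReal_mul (p := B * M) (by positivity)]
          gcongr
          exact lintegral_poisson_le m hm0 hx
  rw [← ofReal_norm, ENNReal.ofReal_le_ofReal_iff (by positivity),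
    Real.norm_eq_abs] at hmain
  linarith
end
end
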